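/- There is an absolute constant c > 0 such that every finite set P of N ≥ 2 points in the hyperbolic plane ℍ² determines at least c · N / log N distinct distances, i.e. |{d(p,q) : p,q ∈ P, p ≠ q}| ≥ c · N / log N. -/

import Mathlib

open scoped UpperHalfPlane MatrixGroups

noncomputable section

/-!
The number of quadruples `(p, p', q, q')` in `P` with `d(p, p') = d(q, q')` bounds the number of
distances from below by Cauchy–Schwarz, so it suffices to show that there are `O(N³ log N)` of them.
The orientation-preserving isometries taking `p` to `q` form a line in a three-dimensional chart of
`PSL₂(ℝ)`, and the lines of `(p, q)` and `(p', q')` meet when the distances agree (Elekes–Sharir).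
At most `3N` of these `N²` lines lie on an irreducible plane or quadric, and then at most
`O(N³ / k²)` points lie on `k` or more of the lines (Guth–Katz); summing over `k` gives the
logarithm.

For `k` large, a polynomial whose zero set cuts space into cells with few rich points each leaves
the essential case of rich points on the zero set. For bounded `k`, a polynomial of low degree
vanishes on most of the lines. In both cases one is left with lines on a surface of degree `d`
without planes and quadrics. At a point where two of the lines meet, both lines are asymptotic
directions of the surface, and a line with many such points is contained in a second surface, cut
out by derivatives of the first one. An irreducible surface contained in that one is doubly ruled,
hence a plane or a quadric; otherwise Bézout bounds the number of such lines by `O(d²)`.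
-/

namespace GuthKatz

open MvPolynomial
open UniqueFactorizationMonoid (primeFactors mem_primeFactors)
open scoped Polynomial

/-! ### Polynomials of bounded degree in each variable -/

section DegreeBox

variable {σ K : Type*} [Field K]

lemma totalDegree_pderiv_le {R : Type*} [CommSemiring R] (i : σ) (f : MvPolynomial σ R) :
    (pderiv i f).totalDegree ≤ f.totalDegree - 1 := by
  refine Finset.sup_le fun m hm => ?_
  rw [mem_support_iff, coeff_pderiv] at hm
  have hle := le_totalDegree (mem_support_iff.2 (left_ne_zero_of_mul hm))
  rw [Finsupp.sum_add_index' (by simp) (by simp), Finsupp.sum_single_index rfl] at hle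
  omega

lemma pderiv_pderiv_comm {R : Type*} [CommRing R] (i j : σ) (f : MvPolynomial σ R) :
    pderiv i (pderiv j f) = pderiv j (pderiv i f) := by
  have hbracket : ⁅pderiv (R := R) i, pderiv (R := R) j⁆ = 0 := by
    classical
    refine derivation_ext (R := R) fun k => ?_
    simp only [Derivation.commutator_apply, pderiv_X, Pi.single_apply]
    split_ifs <;> simp
  simpa [Derivation.commutator_apply, sub_eq_zero] using congrArg (fun D => D f) hbracket

lemma totalDegree_le_of_dvd {f g : MvPolynomial σ K} (hg : g ≠ 0) (hfg : f ∣ g) :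
    f.totalDegree ≤ g.totalDegree := by
  obtain ⟨k, rfl⟩ := hfg
  rw [totalDegree_mul_of_isDomain (left_ne_zero_of_mul hg) (right_ne_zero_of_mul hg)]
  exact Nat.le_add_right _ _

lemma exists_ne_zero_eval_eq_zero (V : Submodule K (MvPolynomial σ K)) [Module.Finite K V]
    (S : Finset (σ → K)) (hS : S.card < Module.finrank K V) :
    ∃ f ∈ V, f ≠ 0 ∧ ∀ x ∈ S, eval x f = 0 := by
  let evalOnS : V →ₗ[K] (S → K) :=
    LinearMap.pi fun x => (aeval (R := K) x.1).toLinearMap.comp V.subtype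
  have hker : LinearMap.ker evalOnS ≠ ⊥ := LinearMap.ker_ne_bot_of_finrank_lt (by simpa using hS)
  obtain ⟨f, hf, hf0⟩ := Submodule.exists_mem_ne_zero_of_ne_bot hker
  refine ⟨f, f.2, fun h => hf0 (Subtype.ext h), fun x hx => ?_⟩
  simpa [evalOnS, aeval_eq_eval] using congrFun (LinearMap.mem_ker.1 hf) ⟨x, hx⟩

lemma finrank_map_mulLeft {g : MvPolynomial σ K} (hg : g ≠ 0)
    (V : Submodule K (MvPolynomial σ K)) :
    Module.finrank K (V.map (LinearMap.mulLeft K g)) = Module.finrank K V :=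
  (Submodule.equivMapOfInjective (LinearMap.mulLeft K g)
    (fun _ _ hab => mul_left_cancel₀ hg hab) V).finrank_eq.symm

variable [Fintype σ]

variable (K) in
/-- The space of polynomials of degree at most `M i` in the `i`-th variable. Its dimension is a
product, which keeps dimension counts simpler than for spaces of bounded total degree. -/
def degreeBox (M : σ → ℕ) : Submodule K (MvPolynomial σ K) :=
  restrictSupport K (Set.Iic (Finsupp.equivFunOnFinite.symm M))

lemma mem_degreeBox {M : σ → ℕ} {f : MvPolynomial σ K} :
    f ∈ degreeBox K M ↔ ∀ i, degreeOf i f ≤ M i := by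
  simp_rw [degreeBox, mem_restrictSupport_iff, degreeOf_le_iff]
  exact ⟨fun h i m hm => (h hm : m ≤ _) i, fun h m hm => (fun i => h i m hm : m ≤ _)⟩

instance (M : σ → ℕ) : Module.Finite K (degreeBox K M) := by
  classical
  have : Finite (Set.Iic (Finsupp.equivFunOnFinite.symm M)) := (Set.finite_Iic _).to_subtype
  exact Module.Finite.of_basis (basisRestrictSupport K _)

lemma finrank_degreeBox (M : σ → ℕ) : Module.finrank K (degreeBox K M) = ∏ i, (M i + 1) := by
  classical
  set m := Finsupp.equivFunOnFinite.symm M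
  calc Module.finrank K (degreeBox K M) = Nat.card (Set.Iic m) :=
        Module.finrank_eq_nat_card_basis (basisRestrictSupport K (Set.Iic m))
    _ = (Finset.Iic m).card := by rw [← Finset.coe_Iic, Nat.card_coe_set_eq, Set.ncard_coe_finset]
    _ = ∏ i, (M i + 1) := by
        rw [Finsupp.card_Iic, Finset.prod_subset (Finset.subset_univ _)]
        · simp [m]
        · intro i _ hi
          simp [Finsupp.notMem_support_iff.1 hi]

lemma totalDegree_le_of_mem_degreeBox {M : σ → ℕ} {f : MvPolynomial σ K}
    (hf : f ∈ degreeBox K M) : f.totalDegree ≤ ∑ i, M i := by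
  refine Finset.sup_le fun m hm => ?_
  rw [Finsupp.sum_fintype _ _ fun _ => rfl]
  exact Finset.sum_le_sum fun i _ => degreeOf_le_iff.1 (mem_degreeBox.1 hf i) m hm

lemma map_mulLeft_degreeBox_le {g : MvPolynomial σ K} {M : σ → ℕ} (hM : ∀ i, degreeOf i g ≤ M i) :
    (degreeBox K fun i => M i - degreeOf i g).map (LinearMap.mulLeft K g) ≤ degreeBox K M := by
  rintro _ ⟨a, ha, rfl⟩
  refine mem_degreeBox.2 fun i => (degreeOf_mul_le i g a).trans ?_
  have := mem_degreeBox.1 ha i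
  have := hM i
  omega

lemma map_mulLeft_inf_map_mulLeft_le {g h : MvPolynomial σ K} (hg : Prime g) (hgh : ¬ g ∣ h)
    {M : σ → ℕ} (hM : ∀ i, degreeOf i g ≤ M i) :
    (degreeBox K fun i => M i - degreeOf i g).map (LinearMap.mulLeft K g) ⊓
        (degreeBox K fun i => M i - degreeOf i h).map (LinearMap.mulLeft K h) ≤
      (degreeBox K fun i => M i - (degreeOf i g + degreeOf i h)).map
        (LinearMap.mulLeft K (g * h)) := by
  have hh : h ≠ 0 := by rintro rfl; exact hgh (dvd_zero _)
  rintro _ ⟨hf, b, -, rfl⟩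
  have hbox := map_mulLeft_degreeBox_le hM hf
  obtain ⟨a, -, hab⟩ := hf
  obtain ⟨c, rfl⟩ : g ∣ b := (hg.dvd_or_dvd ⟨a, hab.symm⟩).resolve_left hgh
  refine ⟨c, mem_degreeBox.2 fun i => ?_, by simp only [LinearMap.mulLeft_apply]; ring⟩
  rcases eq_or_ne c 0 with rfl | hc
  · simp
  have hdeg := mem_degreeBox.1 hbox i
  rw [LinearMap.mulLeft_apply, degreeOf_mul_eq hh (mul_ne_zero hg.ne_zero hc),
    degreeOf_mul_eq hg.ne_zero hc] at hdeg
  omega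

lemma prod_add_prod_le_finrank_sup {g h : MvPolynomial σ K} (hg : Prime g) (hgh : ¬ g ∣ h)
    {M : σ → ℕ} (hMg : ∀ i, degreeOf i g ≤ M i) (hMh : ∀ i, degreeOf i h ≤ M i) :
    ∏ i, (M i - degreeOf i g + 1) + ∏ i, (M i - degreeOf i h + 1) ≤
      Module.finrank K
        ↥((degreeBox K fun i => M i - degreeOf i g).map (LinearMap.mulLeft K g) ⊔
          (degreeBox K fun i => M i - degreeOf i h).map (LinearMap.mulLeft K h)) +
      ∏ i, (M i - (degreeOf i g + degreeOf i h) + 1) := by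
  have hh : h ≠ 0 := by rintro rfl; exact hgh (dvd_zero _)
  have hinf := Submodule.finrank_mono (map_mulLeft_inf_map_mulLeft_le hg hgh hMg)
  rw [finrank_map_mulLeft (mul_ne_zero hg.ne_zero hh), finrank_degreeBox] at hinf
  have hsum := Submodule.finrank_sup_add_finrank_inf_eq
    ((degreeBox K fun i => M i - degreeOf i g).map (LinearMap.mulLeft K g))
    ((degreeBox K fun i => M i - degreeOf i h).map (LinearMap.mulLeft K h))
  rw [finrank_map_mulLeft hg.ne_zero, finrank_map_mulLeft hh, finrank_degreeBox,
    finrank_degreeBox] at hsum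
  omega

end DegreeBox

/-! ### Lines in space -/

/-- Real polynomials in the three space coordinates `x₀, x₁, x₂`. -/
abbrev SpacePolynomial := MvPolynomial (Fin 3) ℝ

/-- Points of `ℝ³`. -/
abbrev Space := Fin 3 → ℝ

/-- The line `{(a t + b, c t + d, t) : t ∈ ℝ}` in space. Every line that is not parallel to the
plane `x₂ = 0` has exactly one such description. -/
@[ext] structure Line where
  a : ℝ
  b : ℝ
  c : ℝ
  d : ℝ

instance : DecidableEq Line := Classical.decEq _

instance : Membership Space Line :=
  ⟨fun l x => x 0 = l.a * x 2 + l.b ∧ x 1 = l.c * x 2 + l.d⟩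

instance (x : Space) (l : Line) : Decidable (x ∈ l) := Classical.propDecidable _

namespace Line

variable {l m : Line} {f g : SpacePolynomial} {x y : Space}

/-- The point of `l` at height `t`. -/
def point (l : Line) (t : ℝ) : Space := ![l.a * t + l.b, l.c * t + l.d, t]

/-- The restriction of polynomial functions to a line, in the parameter `t` of `Line.point`. -/
def restrict (l : Line) : SpacePolynomial →ₐ[ℝ] ℝ[X] :=
  aeval ![.C l.a * .X + .C l.b, .C l.c * .X + .C l.d, .X]

/-- The line is contained in the zero set of `f`. -/
def InZeroSet (l : Line) (f : SpacePolynomial) : Prop := l.restrict f = 0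

lemma mem_iff_eq_point : x ∈ l ↔ x = l.point (x 2) := by
  constructor
  · rintro ⟨h0, h1⟩
    funext i
    fin_cases i <;> simp [point, h0, h1]
  · intro h
    exact ⟨congrFun h 0, congrFun h 1⟩

lemma mem_point (l : Line) (t : ℝ) : l.point t ∈ l := ⟨rfl, rfl⟩

@[simp] lemma point_zero (l : Line) (t : ℝ) : l.point t 0 = l.a * t + l.b := rfl

@[simp] lemma point_one (l : Line) (t : ℝ) : l.point t 1 = l.c * t + l.d := rfl

@[simp] lemma point_two (l : Line) (t : ℝ) : l.point t 2 = t := rfl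

lemma point_injective (l : Line) : Function.Injective l.point := fun _ _ h => congrFun h 2

lemma eval_restrict (l : Line) (f : SpacePolynomial) (t : ℝ) :
    (l.restrict f).eval t = eval (l.point t) f := by
  have : (Polynomial.evalRingHom t).comp l.restrict.toRingHom = eval (l.point t) := by
    refine ringHom_ext (fun r => by simp [restrict]) fun i => ?_
    fin_cases i <;> simp [restrict, point]
  exact congrArg (fun φ : SpacePolynomial →+* ℝ => φ f) this

lemma eval_restrict_of_mem (hx : x ∈ l) (f : SpacePolynomial) :
    (l.restrict f).eval (x 2) = eval x f := by
  rw [eval_restrict, ← mem_iff_eq_point.1 hx]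

lemma natDegree_restrict_le (l : Line) (f : SpacePolynomial) :
    (l.restrict f).natDegree ≤ f.totalDegree := by
  refine (aeval_natDegree_le f le_rfl _ (n := 1) fun i => ?_).trans_eq (mul_one _)
  fin_cases i
  · exact Polynomial.natDegree_linear_le
  · exact Polynomial.natDegree_linear_le
  · exact Polynomial.natDegree_X_le

lemma derivative_restrict (l : Line) (f : SpacePolynomial) :
    (l.restrict f).derivative = .C l.a * l.restrict (pderiv 0 f) +
      .C l.c * l.restrict (pderiv 1 f) + l.restrict (pderiv 2 f) := by
  induction f using MvPolynomial.induction_on with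
  | C r => simp [restrict]
  | add p q hp hq => simp only [map_add, hp, hq]; ring
  | mul_X p i hp =>
    simp only [map_mul, Polynomial.derivative_mul, hp, pderiv_mul, map_add]
    fin_cases i <;> simp [restrict, pderiv_X] <;> ring

lemma InZeroSet.eval_eq_zero (h : l.InZeroSet f) (hx : x ∈ l) : eval x f = 0 := by
  rw [← eval_restrict_of_mem hx, h, Polynomial.eval_zero]

lemma inZeroSet_of_forall_eval_point (h : ∀ t, eval (l.point t) f = 0) : l.InZeroSet f :=
  Polynomial.funext fun t => by rw [eval_restrict, h, Polynomial.eval_zero]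

lemma inZeroSet_mul : l.InZeroSet (f * g) ↔ l.InZeroSet f ∨ l.InZeroSet g := by
  simp [InZeroSet, map_mul]

lemma InZeroSet.of_dvd (hf : l.InZeroSet f) (hfg : f ∣ g) : l.InZeroSet g := by
  obtain ⟨k, rfl⟩ := hfg
  exact inZeroSet_mul.2 (Or.inl hf)

lemma inZeroSet_finsetProd {s : Finset SpacePolynomial} :
    l.InZeroSet (∏ p ∈ s, p) ↔ ∃ p ∈ s, l.InZeroSet p := by
  simp [InZeroSet, map_prod, Finset.prod_eq_zero_iff]

lemma inZeroSet_of_totalDegree_lt_card (S : Finset Space) (hS : ∀ x ∈ S, x ∈ l ∧ eval x f = 0)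
    (hcard : f.totalDegree < S.card) : l.InZeroSet f := by
  refine Polynomial.eq_zero_of_natDegree_lt_card_of_eval_eq_zero' _ (S.image fun x => x 2) ?_ ?_
  · intro t ht
    obtain ⟨x, hx, rfl⟩ := Finset.mem_image.1 ht
    rw [eval_restrict_of_mem (hS x hx).1, (hS x hx).2]
  · rw [Finset.card_image_of_injOn]
    · exact (natDegree_restrict_le l f).trans_lt hcard
    · intro x hx y hy (hxy : x 2 = y 2)
      rw [mem_iff_eq_point.1 (hS x hx).1, mem_iff_eq_point.1 (hS y hy).1, hxy]

lemma card_le_totalDegree_of_not_inZeroSet (h : ¬ l.InZeroSet f) (S : Finset Space)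
    (hS : ∀ x ∈ S, x ∈ l ∧ eval x f = 0) : S.card ≤ f.totalDegree :=
  not_lt.1 fun hcard => h (inZeroSet_of_totalDegree_lt_card S hS hcard)

lemma eq_of_mem_of_mem (hxy : x ≠ y) (hxl : x ∈ l) (hxm : x ∈ m) (hyl : y ∈ l) (hym : y ∈ m) :
    l = m := by
  have hheight : x 2 - y 2 ≠ 0 := by
    refine fun h => hxy ?_
    rw [mem_iff_eq_point.1 hxl, mem_iff_eq_point.1 hyl, sub_eq_zero.1 h]
  obtain ⟨hxl0, hxl1⟩ := hxl
  obtain ⟨hxm0, hxm1⟩ := hxm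
  obtain ⟨hyl0, hyl1⟩ := hyl
  obtain ⟨hym0, hym1⟩ := hym
  have ha : l.a = m.a := mul_right_cancel₀ hheight (by linear_combination hxm0 - hxl0 + hyl0 - hym0)
  have hc : l.c = m.c := mul_right_cancel₀ hheight (by linear_combination hxm1 - hxl1 + hyl1 - hym1)
  ext
  · exact ha
  · linear_combination hxm0 - hxl0 - x 2 * ha
  · exact hc
  · linear_combination hxm1 - hxl1 - x 2 * hc

end Line

lemma exists_ne_zero_inZeroSet (V : Submodule ℝ SpacePolynomial) [Module.Finite ℝ V] (D : ℕ)
    (hV : ∀ f ∈ V, f.totalDegree ≤ D) (L : Finset Line)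
    (hL : L.card * (D + 1) < Module.finrank ℝ V) :
    ∃ f ∈ V, f ≠ 0 ∧ ∀ l ∈ L, l.InZeroSet f := by
  let samples (l : Line) : Finset Space := (Finset.range (D + 1)).image fun k : ℕ => l.point k
  have hsamples (l : Line) : (samples l).card = D + 1 := by
    rw [Finset.card_image_of_injective, Finset.card_range]
    exact l.point_injective.comp Nat.cast_injective
  have hcard : (L.biUnion samples).card < Module.finrank ℝ V :=
    (Finset.card_biUnion_le_card_mul _ _ _ fun l _ => (hsamples l).le).trans_lt hL
  obtain ⟨f, hf, hf0, hzero⟩ := exists_ne_zero_eval_eq_zero V _ hcard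
  refine ⟨f, hf, hf0, fun l hl => ?_⟩
  refine Line.inZeroSet_of_totalDegree_lt_card (samples l) (fun x hx => ⟨?_, ?_⟩) ?_
  · obtain ⟨k, -, rfl⟩ := Finset.mem_image.1 hx
    exact l.mem_point k
  · exact hzero x (Finset.mem_biUnion.2 ⟨l, hl, hx⟩)
  · have := hV f hf
    rw [hsamples]
    omega

lemma exists_inZeroSet_of_card_mul_lt (e : ℕ) (L : Finset Line)
    (hL : L.card * (3 * e + 1) < (e + 1) ^ 3) :
    ∃ f : SpacePolynomial, f ≠ 0 ∧ f.totalDegree ≤ 3 * e ∧ ∀ l ∈ L, l.InZeroSet f := by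
  have hdeg (f : SpacePolynomial) (hf : f ∈ degreeBox ℝ fun _ : Fin 3 => e) :
      f.totalDegree ≤ 3 * e := by
    simpa using totalDegree_le_of_mem_degreeBox hf
  obtain ⟨f, hf, hf0, hzero⟩ := exists_ne_zero_inZeroSet (degreeBox ℝ fun _ : Fin 3 => e) (3 * e)
    hdeg L (by simpa [finrank_degreeBox] using hL)
  exact ⟨f, hf0, hdeg f hf, hzero⟩

/-! ### A Bézout bound for lines in the intersection of two surfaces -/

/-- A linear polynomial vanishing on `m`, and not identically on `l` if `l ≠ m`. -/
def separatingPlane (m l : Line) : SpacePolynomial :=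
  if m.a = l.a ∧ m.b = l.b then X 1 - C m.c * X 2 - C m.d else X 0 - C m.a * X 2 - C m.b

lemma inZeroSet_separatingPlane (m l : Line) : m.InZeroSet (separatingPlane m l) := by
  refine Line.inZeroSet_of_forall_eval_point fun t => ?_
  unfold separatingPlane
  split_ifs <;> simp

lemma not_inZeroSet_separatingPlane {m l : Line} (hml : m ≠ l) :
    ¬ l.InZeroSet (separatingPlane m l) := by
  intro hzero
  have h0 := hzero.eval_eq_zero (l.mem_point 0)
  have h1 := hzero.eval_eq_zero (l.mem_point 1)
  unfold separatingPlane at h0 h1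
  split_ifs at h0 h1 with hab
  · simp at h0 h1
    exact hml (Line.ext hab.1 hab.2 (by linarith) (by linarith))
  · simp at h0 h1
    exact hab ⟨by linarith, by linarith⟩

lemma degreeOf_separatingPlane_le (m l : Line) (i : Fin 3) :
    degreeOf i (separatingPlane m l) ≤ 1 := by
  have hlinear (j k : Fin 3) (r s : ℝ) :
      degreeOf i (X j - C r * X k - C s : SpacePolynomial) ≤ 1 := by
    have hX (j : Fin 3) : degreeOf i (X j : SpacePolynomial) ≤ 1 := by
      rw [degreeOf_X]; split_ifs <;> simp
    have hCX := (degreeOf_C_mul_le (X k : SpacePolynomial) i r).trans (hX k)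
    exact (degreeOf_sub_le _ _ _).trans (max_le
      ((degreeOf_sub_le _ _ _).trans (max_le (hX j) hCX)) (by simp [degreeOf_C]))
  unfold separatingPlane
  split_ifs <;> exact hlinear ..

/-- A polynomial that vanishes on every line of `T` except `l`. -/
def interpolationFactor (T : Finset Line) (l : Line) : SpacePolynomial :=
  ∏ m ∈ T.erase l, separatingPlane m l

lemma inZeroSet_interpolationFactor {T : Finset Line} {l m : Line} (hl : l ∈ T) (hlm : l ≠ m) :
    l.InZeroSet (interpolationFactor T m) :=
  (inZeroSet_separatingPlane l m).of_dvd
    (Finset.dvd_prod_of_mem _ (Finset.mem_erase.2 ⟨hlm, hl⟩))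

lemma restrict_interpolationFactor_ne_zero (T : Finset Line) (l : Line) :
    l.restrict (interpolationFactor T l) ≠ 0 := by
  rw [interpolationFactor, map_prod, Finset.prod_ne_zero_iff]
  exact fun m hm => not_inZeroSet_separatingPlane (Finset.mem_erase.1 hm).1

lemma degreeOf_interpolationFactor_le {T : Finset Line} {l : Line} (hl : l ∈ T) (i : Fin 3) :
    degreeOf i (interpolationFactor T l) ≤ T.card - 1 := by
  calc degreeOf i (interpolationFactor T l)
      ≤ ∑ m ∈ T.erase l, degreeOf i (separatingPlane m l) := degreeOf_prod_le _ _ _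
    _ ≤ ∑ _m ∈ T.erase l, 1 := Finset.sum_le_sum fun m _ => degreeOf_separatingPlane_le m l i
    _ = T.card - 1 := by simp [Finset.card_erase_of_mem hl]

/-- Univariate polynomials, seen as polynomials in the height coordinate `x₂`. -/
def heightPolynomial : ℝ[X] →ₐ[ℝ] SpacePolynomial := Polynomial.aeval (X 2)

lemma restrict_heightPolynomial (l : Line) (p : ℝ[X]) : l.restrict (heightPolynomial p) = p := by
  have : l.restrict.comp heightPolynomial = AlgHom.id ℝ _ :=
    Polynomial.algHom_ext (by simp [Line.restrict, heightPolynomial])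
  exact congrArg (fun φ : ℝ[X] →ₐ[ℝ] ℝ[X] => φ p) this

lemma degreeOf_heightPolynomial_le (i : Fin 3) (p : ℝ[X]) :
    degreeOf i (heightPolynomial p) ≤ p.natDegree := by
  rw [heightPolynomial, Polynomial.aeval_eq_sum_range]
  refine (degreeOf_sum_le _ _ _).trans (Finset.sup_le fun k hk => ?_)
  have hX : degreeOf i (X 2 : SpacePolynomial) ≤ 1 := by
    rw [degreeOf_X]; split_ifs <;> simp
  calc degreeOf i (p.coeff k • X 2 ^ k : SpacePolynomial)
      ≤ degreeOf i (X 2 ^ k : SpacePolynomial) := by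
        rw [smul_eq_C_mul]; exact degreeOf_C_mul_le _ _ _
    _ ≤ k * degreeOf i (X 2 : SpacePolynomial) := degreeOf_pow_le _ _ _
    _ ≤ k * 1 := Nat.mul_le_mul_left k hX
    _ ≤ p.natDegree := by have := Finset.mem_range.1 hk; omega

/-- Simultaneous restriction to all lines of `T`. -/
def restrictToLines (T : Finset Line) : SpacePolynomial →ₗ[ℝ] (T → ℝ[X]) :=
  LinearMap.pi fun l => l.1.restrict.toLinearMap

lemma restrictToLines_interpolation (T : Finset Line) (c : T → ℝ[X]) (l : T) :
    restrictToLines T (∑ m : T, interpolationFactor T m * heightPolynomial (c m)) l =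
      l.1.restrict (interpolationFactor T l) * c l := by
  change l.1.restrict _ = _
  rw [map_sum, Finset.sum_eq_single l, map_mul, restrict_heightPolynomial]
  · intro m _ hml
    have hzero : l.1.restrict (interpolationFactor T m) = 0 :=
      inZeroSet_interpolationFactor l.2 fun h => hml (Subtype.ext h.symm)
    rw [map_mul, hzero, zero_mul]
  · simp

lemma interpolation_mem_degreeBox {T : Finset Line} {M : ℕ} (hTM : T.card ≤ M + 1)
    (c : T → Polynomial.degreeLT ℝ (M + 2 - T.card)) :
    ∑ m : T, interpolationFactor T m * heightPolynomial (c m) ∈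
      degreeBox ℝ fun _ : Fin 3 => M := by
  refine Submodule.sum_mem _ fun l _ => mem_degreeBox.2 fun i => ?_
  have hfactor := degreeOf_interpolationFactor_le l.2 i
  have hheight := degreeOf_heightPolynomial_le i (c l)
  have hT : 1 ≤ T.card := Finset.card_pos.2 ⟨l, l.2⟩
  have hc : (c l : ℝ[X]).natDegree < M + 2 - T.card := by
    rcases eq_or_ne (c l : ℝ[X]) 0 with h0 | h0
    · rw [h0, Polynomial.natDegree_zero]; omega
    · exact (Polynomial.natDegree_lt_iff_degree_lt h0).2 (Polynomial.mem_degreeLT.1 (c l).2)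
  refine (degreeOf_mul_le _ _ _).trans ?_
  omega

lemma card_mul_le_finrank_map_restrictToLines (T : Finset Line) (M : ℕ) :
    T.card * (M + 2 - T.card) ≤ Module.finrank ℝ
      ((degreeBox ℝ fun _ : Fin 3 => M).map (restrictToLines T)) := by
  rcases Nat.lt_or_ge (M + 1) T.card with hTM | hTM
  · simp [show M + 2 - T.card = 0 by omega]
  let interpolate : (T → Polynomial.degreeLT ℝ (M + 2 - T.card)) →ₗ[ℝ] SpacePolynomial :=
    ∑ l : T, (LinearMap.mulLeft ℝ (interpolationFactor T l)).comp (heightPolynomial.toLinearMap.comp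
      ((Polynomial.degreeLT ℝ (M + 2 - T.card)).subtype.comp (LinearMap.proj l)))
  have hinterpolate c : interpolate c =
      ∑ l : T, interpolationFactor T l * heightPolynomial (c l) := by
    simp [interpolate, LinearMap.sum_apply]
  have hinj : Function.Injective ((restrictToLines T).comp interpolate) := by
    refine (injective_iff_map_eq_zero _).2 fun c hc => funext fun l => Subtype.ext ?_
    have hl := congrFun hc l
    rw [LinearMap.comp_apply, hinterpolate, restrictToLines_interpolation T fun m => c m] at hl
    exact (mul_eq_zero.1 hl).resolve_left (restrict_interpolationFactor_ne_zero T l)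
  have hrange : LinearMap.range ((restrictToLines T).comp interpolate) ≤
      (degreeBox ℝ fun _ : Fin 3 => M).map (restrictToLines T) := by
    rintro _ ⟨c, rfl⟩
    exact ⟨_, (hinterpolate c).symm ▸ interpolation_mem_degreeBox hTM c, rfl⟩
  calc T.card * (M + 2 - T.card)
      = Module.finrank ℝ (LinearMap.range ((restrictToLines T).comp interpolate)) := by
        rw [LinearMap.finrank_range_of_inj hinj, Module.finrank_pi_fintype]
        simp [(Polynomial.degreeLTEquiv ℝ _).finrank_eq]
    _ ≤ _ := Submodule.finrank_mono hrange

/- The polynomials of degree at most `M` in each variable that are combinations of `g` and `h`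
restrict to `0` on `T`, whereas arbitrary ones restrict to a space of dimension at least
`|T| (M + 2 - |T|)`. -/
lemma card_mul_add_prod_le_of_inZeroSet {g h : SpacePolynomial} (hg : Prime g) (hgh : ¬ g ∣ h)
    (T : Finset Line) (hT : ∀ l ∈ T, l.InZeroSet g ∧ l.InZeroSet h) (M : ℕ)
    (hMg : ∀ i, degreeOf i g ≤ M) (hMh : ∀ i, degreeOf i h ≤ M) :
    T.card * (M + 2 - T.card) + (∏ i, (M - degreeOf i g + 1) + ∏ i, (M - degreeOf i h + 1)) ≤
      (M + 1) ^ 3 + ∏ i, (M - (degreeOf i g + degreeOf i h) + 1) := by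
  set V := degreeBox ℝ fun _ : Fin 3 => M
  set U := (degreeBox ℝ fun i => M - degreeOf i g).map (LinearMap.mulLeft ℝ g) ⊔
    (degreeBox ℝ fun i => M - degreeOf i h).map (LinearMap.mulLeft ℝ h)
  have hUV : U ≤ V := sup_le (map_mulLeft_degreeBox_le hMg) (map_mulLeft_degreeBox_le hMh)
  have hUker : U ≤ LinearMap.ker (restrictToLines T) := by
    refine sup_le ?_ ?_ <;> rintro _ ⟨a, -, rfl⟩ <;>
      refine LinearMap.mem_ker.2 (funext fun l => ?_)
    · exact ((hT l l.2).1.of_dvd ⟨a, rfl⟩ : l.1.InZeroSet (g * a))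
    · exact ((hT l l.2).2.of_dvd ⟨a, rfl⟩ : l.1.InZeroSet (h * a))
  have hrank := LinearMap.finrank_range_add_finrank_ker ((restrictToLines T).domRestrict V)
  have hker : Module.finrank ℝ U ≤
      Module.finrank ℝ (LinearMap.ker ((restrictToLines T).domRestrict V)) := by
    refine LinearMap.finrank_le_finrank_of_injective
      (f := (Submodule.inclusion hUV).codRestrict _ fun u => hUker u.2) ?_
    exact fun u v huv => Subtype.ext (congrArg (fun w => (w.1 : SpacePolynomial)) huv)
  have hV : Module.finrank ℝ V = (M + 1) ^ 3 := by simp [V, finrank_degreeBox]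
  have himage : _ ≤ Module.finrank ℝ (V.map (restrictToLines T)) :=
    card_mul_le_finrank_map_restrictToLines T M
  have hsup : _ ≤ Module.finrank ℝ U + _ := prod_add_prod_le_finrank_sup hg hgh hMg hMh
  rw [LinearMap.range_domRestrict] at hrank
  linarith

lemma cube_add_prod_sub_le {a b : Fin 3 → ℤ} (ha : ∀ i, 0 ≤ a i) (hb : ∀ i, 0 ≤ b i) {n m Y : ℤ}
    (han : ∀ i, a i ≤ n) (hbm : ∀ i, b i ≤ m) (hY : 0 ≤ Y) :
    Y ^ 3 + ∏ i, (Y - (a i + b i)) ≤ ∏ i, (Y - a i) + ∏ i, (Y - b i) + 6 * n * m * Y := by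
  have hcross (i j : Fin 3) : a i * b j ≤ n * m :=
    mul_le_mul (han i) (hbm j) (hb j) ((ha i).trans (han i))
  have hlinear : (a 0 * b 1 + a 0 * b 2 + a 1 * b 0 + a 1 * b 2 + a 2 * b 0 + a 2 * b 1) * Y ≤
      6 * n * m * Y := by
    refine mul_le_mul_of_nonneg_right ?_ hY
    linarith [hcross 0 1, hcross 0 2, hcross 1 0, hcross 1 2, hcross 2 0, hcross 2 1]
  have hconst : 0 ≤ a 0 * a 1 * b 2 + a 0 * b 1 * a 2 + a 0 * b 1 * b 2 + b 0 * a 1 * a 2 +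
      b 0 * a 1 * b 2 + b 0 * b 1 * a 2 := by
    have := ha 0; have := ha 1; have := ha 2; have := hb 0; have := hb 1; have := hb 2
    positivity
  simp only [Fin.prod_univ_three]
  linarith

theorem card_le_six_mul_totalDegree_mul_totalDegree {g h : SpacePolynomial} (hg : Prime g)
    (hgh : ¬ g ∣ h) (T : Finset Line) (hT : ∀ l ∈ T, l.InZeroSet g ∧ l.InZeroSet h) :
    T.card ≤ 6 * g.totalDegree * h.totalDegree := by
  set K := T.card
  set n := g.totalDegree
  set m := h.totalDegree
  have hn (i : Fin 3) : degreeOf i g ≤ n := degreeOf_le_totalDegree _ _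
  have hm (i : Fin 3) : degreeOf i h ≤ m := degreeOf_le_totalDegree _ _
  let M := K ^ 2 + n + m
  have hK : K ≤ M + 2 := by simp only [M]; nlinarith
  have hdim : K * (M + 2 - K) + _ ≤ _ := card_mul_add_prod_le_of_inZeroSet hg hgh T hT M
    (fun i => (hn i).trans (by omega)) (fun i => (hm i).trans (by omega))
  have hsub (u : Fin 3 → ℕ) (hu : ∀ i, u i ≤ M) :
      ((∏ i, (M - u i + 1) : ℕ) : ℤ) = ∏ i, ((M + 1 : ℤ) - u i) := by
    push_cast [Nat.cast_sub (hu _)]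
    exact Finset.prod_congr rfl fun i _ => by ring
  have hlines : (K : ℤ) * (M + 2 - K) ≤ 6 * n * m * (M + 1) := by
    have hbox := cube_add_prod_sub_le (a := fun i => degreeOf i g) (b := fun i => degreeOf i h)
      (n := n) (m := m) (Y := M + 1) (fun _ => by positivity) (fun _ => by positivity)
      (fun i => by exact_mod_cast hn i) (fun i => by exact_mod_cast hm i) (by positivity)
    have hg' := hsub (fun i => degreeOf i g) fun i => (hn i).trans (by omega)
    have hh' := hsub (fun i => degreeOf i h) fun i => (hm i).trans (by omega)
    have hgh' := hsub (fun i => degreeOf i g + degreeOf i h) fun i =>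
      (add_le_add (hn i) (hm i)).trans (by omega)
    zify [hK] at hdim hg' hh' hgh'
    rw [hg', hh', hgh'] at hdim
    linarith
  by_contra! hlt
  have hMcast : (M : ℤ) = K ^ 2 + n + m := by simp [M]
  zify at hlt
  nlinarith

/-! ### Contact of a line with a surface -/

section Contact

variable (g : SpacePolynomial)

/-- The second differential of `g`, as a bilinear form on polynomial vector fields. -/
def hessianForm (u v : Fin 3 → SpacePolynomial) : SpacePolynomial :=
  ∑ i, ∑ j, u i * v j * pderiv i (pderiv j g)

/-- The third differential of `g`, as a trilinear form on polynomial vector fields. -/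
def cubicForm (u v w : Fin 3 → SpacePolynomial) : SpacePolynomial :=
  ∑ i, ∑ j, ∑ k, u i * v j * w k * pderiv i (pderiv j (pderiv k g))

/-- A vector field tangent to the level sets of `g`. Together with `verticalTangent g` it spans
their tangent planes wherever `∂₁ g ≠ 0`: a tangent vector `(a, c, 1)` satisfies
`∂₁ g • (a, c, 1) = a • horizontalTangent g + verticalTangent g`. -/
def horizontalTangent : Fin 3 → SpacePolynomial := ![pderiv 1 g, -pderiv 0 g, 0]

/-- A vector field tangent to the level sets of `g`; see `horizontalTangent`. -/
def verticalTangent : Fin 3 → SpacePolynomial := ![0, -pderiv 2 g, pderiv 1 g]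

/-- The coefficients of the quadratic polynomial in `a` whose roots are the asymptotic directions
`(a, c, 1)` of the level sets of `g`, those with second-order contact. -/
def asymptoticCoeff : Fin 3 → SpacePolynomial :=
  ![hessianForm g (verticalTangent g) (verticalTangent g),
    2 * hessianForm g (horizontalTangent g) (verticalTangent g),
    hessianForm g (horizontalTangent g) (horizontalTangent g)]

/-- The coefficients of the cubic polynomial in `a` obtained from the third differential of `g` as
`asymptoticCoeff` is from the second: common roots are directions of third-order contact. -/
def flecnodalCoeff : Fin 4 → SpacePolynomial :=
  ![cubicForm g (verticalTangent g) (verticalTangent g) (verticalTangent g),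
    3 * cubicForm g (horizontalTangent g) (verticalTangent g) (verticalTangent g),
    3 * cubicForm g (horizontalTangent g) (horizontalTangent g) (verticalTangent g),
    cubicForm g (horizontalTangent g) (horizontalTangent g) (horizontalTangent g)]

/-- The constant coefficient of the quotient of `(asymptoticCoeff g 2) ^ 2` times the flecnodal
cubic by the asymptotic quadratic. -/
def flecnodalQuotient : SpacePolynomial :=
  asymptoticCoeff g 2 * flecnodalCoeff g 2 - flecnodalCoeff g 3 * asymptoticCoeff g 1

/-- The coefficients of the remainder of `(asymptoticCoeff g 2) ^ 2` times the flecnodal cubic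
modulo the asymptotic quadratic. -/
def flecnodalRemainder : Fin 2 → SpacePolynomial :=
  ![asymptoticCoeff g 2 ^ 2 * flecnodalCoeff g 0 - asymptoticCoeff g 0 * flecnodalQuotient g,
    asymptoticCoeff g 2 ^ 2 * flecnodalCoeff g 1
      - asymptoticCoeff g 2 * flecnodalCoeff g 3 * asymptoticCoeff g 0
      - asymptoticCoeff g 1 * flecnodalQuotient g]

lemma map_flecnodal_eq_quotient_mul_asymptotic_add_remainder {A : Type*} [CommRing A]
    (φ : SpacePolynomial →+* A) (a : A) :
    φ (asymptoticCoeff g 2) ^ 2 * ∑ k : Fin 4, φ (flecnodalCoeff g k) * a ^ (k : ℕ) =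
      (φ (asymptoticCoeff g 2 * flecnodalCoeff g 3) * a + φ (flecnodalQuotient g)) *
        ∑ k : Fin 3, φ (asymptoticCoeff g k) * a ^ (k : ℕ) +
      ∑ k : Fin 2, φ (flecnodalRemainder g k) * a ^ (k : ℕ) := by
  have hrem0 : flecnodalRemainder g 0 = asymptoticCoeff g 2 ^ 2 * flecnodalCoeff g 0
    - asymptoticCoeff g 0 * flecnodalQuotient g := rfl
  have hrem1 : flecnodalRemainder g 1 = asymptoticCoeff g 2 ^ 2 * flecnodalCoeff g 1
    - asymptoticCoeff g 2 * flecnodalCoeff g 3 * asymptoticCoeff g 0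
    - asymptoticCoeff g 1 * flecnodalQuotient g := rfl
  simp only [Fin.sum_univ_four, Fin.sum_univ_three, Fin.sum_univ_two, hrem0, hrem1,
    flecnodalQuotient, map_sub, map_mul, map_pow, Fin.coe_ofNat_eq_mod]
  ring

end Contact

section Degree

variable {σ R : Type*} [CommRing R] {f g : MvPolynomial σ R} {m n : ℕ}

lemma totalDegree_mul_le_add (hf : f.totalDegree ≤ m) (hg : g.totalDegree ≤ n) :
    (f * g).totalDegree ≤ m + n :=
  (totalDegree_mul f g).trans (add_le_add hf hg)

lemma totalDegree_sub_le_of_le (hf : f.totalDegree ≤ n) (hg : g.totalDegree ≤ n) :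
    (f - g).totalDegree ≤ n :=
  (totalDegree_sub f g).trans (max_le hf hg)

lemma totalDegree_ofNat_mul_le (k : ℕ) [k.AtLeastTwo] (f : MvPolynomial σ R) :
    (OfNat.ofNat k * f).totalDegree ≤ f.totalDegree := by
  rw [← map_ofNat (C (σ := σ) (R := R)), C_mul']
  exact totalDegree_smul_le _ _

lemma totalDegree_pderiv_le_self (i : σ) (f : MvPolynomial σ R) :
    (pderiv i f).totalDegree ≤ f.totalDegree :=
  (totalDegree_pderiv_le i f).trans (Nat.sub_le _ _)

end Degree

section ContactDegree

variable {g : SpacePolynomial} {u v w : Fin 3 → SpacePolynomial} {n : ℕ}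

lemma totalDegree_hessianForm_le (hg : g.totalDegree ≤ n) (hu : ∀ i, (u i).totalDegree ≤ n)
    (hv : ∀ i, (v i).totalDegree ≤ n) : (hessianForm g u v).totalDegree ≤ n + n + n :=
  totalDegree_finsetSum_le fun i _ => totalDegree_finsetSum_le fun j _ =>
    totalDegree_mul_le_add (totalDegree_mul_le_add (hu i) (hv j)) <|
      (totalDegree_pderiv_le_self _ _).trans <| (totalDegree_pderiv_le_self _ _).trans hg

lemma totalDegree_cubicForm_le (hg : g.totalDegree ≤ n) (hu : ∀ i, (u i).totalDegree ≤ n)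
    (hv : ∀ i, (v i).totalDegree ≤ n) (hw : ∀ i, (w i).totalDegree ≤ n) :
    (cubicForm g u v w).totalDegree ≤ n + n + n + n :=
  totalDegree_finsetSum_le fun i _ => totalDegree_finsetSum_le fun j _ =>
    totalDegree_finsetSum_le fun k _ =>
      totalDegree_mul_le_add (totalDegree_mul_le_add (totalDegree_mul_le_add (hu i) (hv j)) (hw k))
        <| (totalDegree_pderiv_le_self _ _).trans <| (totalDegree_pderiv_le_self _ _).trans <|
          (totalDegree_pderiv_le_self _ _).trans hg

variable (g)

lemma totalDegree_horizontalTangent_le (i : Fin 3) :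
    (horizontalTangent g i).totalDegree ≤ g.totalDegree := by
  fin_cases i <;> simp [horizontalTangent, totalDegree_pderiv_le_self]

lemma totalDegree_verticalTangent_le (i : Fin 3) :
    (verticalTangent g i).totalDegree ≤ g.totalDegree := by
  fin_cases i <;> simp [verticalTangent, totalDegree_pderiv_le_self]

lemma totalDegree_asymptoticCoeff_le (k : Fin 3) :
    (asymptoticCoeff g k).totalDegree ≤ 3 * g.totalDegree := by
  have hu := totalDegree_horizontalTangent_le g
  have hw := totalDegree_verticalTangent_le g
  rw [show 3 * g.totalDegree = g.totalDegree + g.totalDegree + g.totalDegree by ring]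
  fin_cases k
  · exact totalDegree_hessianForm_le le_rfl hw hw
  · exact (totalDegree_ofNat_mul_le 2 _).trans (totalDegree_hessianForm_le le_rfl hu hw)
  · exact totalDegree_hessianForm_le le_rfl hu hu

lemma totalDegree_flecnodalCoeff_le (k : Fin 4) :
    (flecnodalCoeff g k).totalDegree ≤ 4 * g.totalDegree := by
  have hu := totalDegree_horizontalTangent_le g
  have hw := totalDegree_verticalTangent_le g
  rw [show 4 * g.totalDegree = g.totalDegree + g.totalDegree + g.totalDegree + g.totalDegree by
    ring]
  fin_cases k
  · exact totalDegree_cubicForm_le le_rfl hw hw hw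
  · exact (totalDegree_ofNat_mul_le 3 _).trans (totalDegree_cubicForm_le le_rfl hu hw hw)
  · exact (totalDegree_ofNat_mul_le 3 _).trans (totalDegree_cubicForm_le le_rfl hu hu hw)
  · exact totalDegree_cubicForm_le le_rfl hu hu hu

lemma totalDegree_flecnodalQuotient_le :
    (flecnodalQuotient g).totalDegree ≤ 3 * g.totalDegree + 4 * g.totalDegree :=
  totalDegree_sub_le_of_le
    (totalDegree_mul_le_add (totalDegree_asymptoticCoeff_le g 2)
      (totalDegree_flecnodalCoeff_le g 2))
    ((totalDegree_mul_le_add (totalDegree_flecnodalCoeff_le g 3)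
      (totalDegree_asymptoticCoeff_le g 1)).trans_eq (add_comm _ _))

lemma totalDegree_flecnodalRemainder_le (k : Fin 2) :
    (flecnodalRemainder g k).totalDegree ≤ 10 * g.totalDegree := by
  have hq := totalDegree_asymptoticCoeff_le g
  have hc := totalDegree_flecnodalCoeff_le g
  have hquot := totalDegree_flecnodalQuotient_le g
  have hsq (j : Fin 4) : (asymptoticCoeff g 2 ^ 2 * flecnodalCoeff g j).totalDegree ≤
      10 * g.totalDegree := by
    rw [sq]
    exact (totalDegree_mul_le_add (totalDegree_mul_le_add (hq 2) (hq 2)) (hc j)).trans_eq (by ring)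
  have hmulQuot (j : Fin 3) : (asymptoticCoeff g j * flecnodalQuotient g).totalDegree ≤
      10 * g.totalDegree :=
    (totalDegree_mul_le_add (hq j) hquot).trans_eq (by ring)
  fin_cases k
  · exact totalDegree_sub_le_of_le (hsq 0) (hmulQuot 0)
  · refine totalDegree_sub_le_of_le (totalDegree_sub_le_of_le (hsq 1) ?_) (hmulQuot 1)
    exact (totalDegree_mul_le_add (totalDegree_mul_le_add (hq 2) (hc 3)) (hq 0)).trans_eq (by ring)

end ContactDegree

namespace Line

variable (l : Line) (g : SpacePolynomial)

/-! In the next two lemmas one substitutes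
`∂₁ g • (a, c, 1) = a • horizontalTangent g + verticalTangent g + g' • (0, 1, 0)`
into the second and third derivatives of `g` along `l`, where `g'` is the first one. -/

lemma derivative_dvd_second_derivative_sub_asymptotic :
    (l.restrict g).derivative ∣
      l.restrict (pderiv 1 g) ^ 2 * Polynomial.derivative^[2] (l.restrict g) -
        ∑ k : Fin 3, l.restrict (asymptoticCoeff g k) * .C l.a ^ (k : ℕ) := by
  refine ⟨(2 * .C l.a * l.restrict (pderiv 0 (pderiv 1 g))
      + 2 * l.restrict (pderiv 1 (pderiv 2 g))) * l.restrict (pderiv 1 g)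
    + l.restrict (pderiv 1 (pderiv 1 g)) * ((l.restrict g).derivative
      - 2 * (.C l.a * l.restrict (pderiv 0 g) + l.restrict (pderiv 2 g))), ?_⟩
  simp only [Function.iterate_succ_apply, Function.iterate_zero_apply, derivative_restrict,
    Fin.sum_univ_three, asymptoticCoeff, hessianForm, horizontalTangent, verticalTangent,
    Matrix.cons_val, map_add, map_mul, map_neg, map_zero, map_ofNat, Polynomial.derivative_mul,
    Polynomial.derivative_C, pderiv_pderiv_comm (1 : Fin 3) 0, pderiv_pderiv_comm (2 : Fin 3) 0,
    pderiv_pderiv_comm (2 : Fin 3) 1, Fin.coe_ofNat_eq_mod]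
  ring

lemma derivative_dvd_third_derivative_sub_flecnodal :
    (l.restrict g).derivative ∣
      l.restrict (pderiv 1 g) ^ 3 * Polynomial.derivative^[3] (l.restrict g) -
        ∑ k : Fin 4, l.restrict (flecnodalCoeff g k) * .C l.a ^ (k : ℕ) := by
  refine ⟨(3 * .C l.a ^ 2 * l.restrict (pderiv 0 (pderiv 0 (pderiv 1 g)))
      + 6 * .C l.a * l.restrict (pderiv 0 (pderiv 1 (pderiv 2 g)))
      + 3 * l.restrict (pderiv 1 (pderiv 2 (pderiv 2 g)))) * l.restrict (pderiv 1 g) ^ 2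
    + (3 * .C l.a * l.restrict (pderiv 0 (pderiv 1 (pderiv 1 g)))
      + 3 * l.restrict (pderiv 1 (pderiv 1 (pderiv 2 g)))) * l.restrict (pderiv 1 g)
      * ((l.restrict g).derivative
        - 2 * (.C l.a * l.restrict (pderiv 0 g) + l.restrict (pderiv 2 g)))
    + l.restrict (pderiv 1 (pderiv 1 (pderiv 1 g))) * ((l.restrict g).derivative ^ 2
      - 3 * (l.restrict g).derivative * (.C l.a * l.restrict (pderiv 0 g) + l.restrict (pderiv 2 g))
      + 3 * (.C l.a * l.restrict (pderiv 0 g) + l.restrict (pderiv 2 g)) ^ 2), ?_⟩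
  simp only [Function.iterate_succ_apply, Function.iterate_zero_apply, derivative_restrict,
    Fin.sum_univ_three, Fin.sum_univ_four, flecnodalCoeff, cubicForm, horizontalTangent,
    verticalTangent, Matrix.cons_val, map_add, map_mul, map_neg, map_zero, map_ofNat,
    Polynomial.derivative_mul, Polynomial.derivative_C, pderiv_pderiv_comm (1 : Fin 3) 0,
    pderiv_pderiv_comm (2 : Fin 3) 0, pderiv_pderiv_comm (2 : Fin 3) 1, Fin.coe_ofNat_eq_mod]
  ring

end Line

lemma eq_zero_of_linear_differential_equation {K : Type*} [Field K] [CharZero K] {φ Q : K[X]}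
    {n : ℕ} {t : K} (A : Fin n → K[X])
    (hode : Q * Polynomial.derivative^[n] φ = ∑ k, A k * Polynomial.derivative^[k] φ)
    (hQ : Q.eval t ≠ 0) (hinit : ∀ k : Fin n, (Polynomial.derivative^[k] φ).eval t = 0) :
    φ = 0 := by
  by_contra hφ
  set m := φ.rootMultiplicity t
  have hpow (k : ℕ) : (.X - .C t) ^ (m - k) ∣ Polynomial.derivative^[k] φ :=
    Polynomial.pow_sub_dvd_iterate_derivative_of_pow_dvd k (φ.pow_rootMultiplicity_dvd t)
  have hnm : n ≤ m := by
    by_contra! hmn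
    exact lt_irrefl m <| (Polynomial.lt_rootMultiplicity_iff_isRoot_iterate_derivative hφ).2
      fun k hk => hinit ⟨k, hk.trans_lt hmn⟩
  have hlead : (.X - .C t) ^ (m - n + 1) ∣ Polynomial.derivative^[n] φ := by
    refine IsCoprime.dvd_of_dvd_mul_left (IsCoprime.pow_left ?_) (y := Q) ?_
    · exact (Polynomial.irreducible_X_sub_C t).coprime_iff_not_dvd.2
        fun h => hQ (Polynomial.dvd_iff_isRoot.1 h)
    · rw [hode]
      refine Finset.dvd_sum fun k _ => Dvd.dvd.mul_left ((pow_dvd_pow _ ?_).trans (hpow k)) _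
      omega
  have hroot : (Polynomial.derivative^[m] φ).IsRoot t := by
    have := Polynomial.pow_sub_dvd_iterate_derivative_of_pow_dvd (m - n) hlead
    rwa [← Function.iterate_add_apply, Nat.sub_add_cancel hnm, Nat.add_sub_cancel_left, pow_one,
      Polynomial.dvd_iff_isRoot] at this
  refine lt_irrefl m <| (Polynomial.lt_rootMultiplicity_iff_isRoot_iterate_derivative hφ).2
    fun k hk => ?_
  obtain hk | rfl := hk.lt_or_eq
  · exact Polynomial.isRoot_iterate_derivative_of_lt_rootMultiplicity hk
  · exact hroot

namespace Line

variable {l m : Line} {g : SpacePolynomial} {x : Space}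

/-- The direction of `l` is tangent at `x` to the level set of `g` through `x`. -/
def IsTangentAt (l : Line) (g : SpacePolynomial) (x : Space) : Prop :=
  l.a * eval x (pderiv 0 g) + l.c * eval x (pderiv 1 g) + eval x (pderiv 2 g) = 0

lemma eval_derivative_restrict_of_mem (hx : x ∈ l) :
    (l.restrict g).derivative.eval (x 2) =
      l.a * eval x (pderiv 0 g) + l.c * eval x (pderiv 1 g) + eval x (pderiv 2 g) := by
  simp [derivative_restrict, eval_restrict_of_mem hx]

lemma eval_sum_restrict_mul_pow_of_mem (hx : x ∈ l) {n : ℕ} (p : Fin n → SpacePolynomial) :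
    (∑ k, l.restrict (p k) * .C l.a ^ (k : ℕ)).eval (x 2) =
      ∑ k, eval x (p k) * l.a ^ (k : ℕ) := by
  simp [Polynomial.eval_finsetSum, eval_restrict_of_mem hx]

lemma InZeroSet.isTangentAt (hl : l.InZeroSet g) (hx : x ∈ l) : l.IsTangentAt g x := by
  rw [IsTangentAt, ← eval_derivative_restrict_of_mem hx, hl, Polynomial.derivative_zero,
    Polynomial.eval_zero]

lemma InZeroSet.sum_asymptoticCoeff_eq_zero (hl : l.InZeroSet g) (hx : x ∈ l) :
    ∑ k, eval x (asymptoticCoeff g k) * l.a ^ (k : ℕ) = 0 := by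
  have h := derivative_dvd_second_derivative_sub_asymptotic l g
  rw [InZeroSet] at hl
  rw [hl, Polynomial.derivative_zero, zero_dvd_iff, Polynomial.iterate_derivative_zero, mul_zero,
    zero_sub, neg_eq_zero] at h
  rw [← eval_sum_restrict_mul_pow_of_mem hx, h, Polynomial.eval_zero]

lemma InZeroSet.sum_flecnodalCoeff_eq_zero (hl : l.InZeroSet g) (hx : x ∈ l) :
    ∑ k, eval x (flecnodalCoeff g k) * l.a ^ (k : ℕ) = 0 := by
  have h := derivative_dvd_third_derivative_sub_flecnodal l g
  rw [InZeroSet] at hl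
  rw [hl, Polynomial.derivative_zero, zero_dvd_iff, Polynomial.iterate_derivative_zero, mul_zero,
    zero_sub, neg_eq_zero] at h
  rw [← eval_sum_restrict_mul_pow_of_mem hx, h, Polynomial.eval_zero]

lemma InZeroSet.sum_flecnodalRemainder_eq_zero (hl : l.InZeroSet g) (hx : x ∈ l) :
    ∑ k, eval x (flecnodalRemainder g k) * l.a ^ (k : ℕ) = 0 := by
  have h := map_flecnodal_eq_quotient_mul_asymptotic_add_remainder g (eval x) l.a
  rw [hl.sum_asymptoticCoeff_eq_zero hx, hl.sum_flecnodalCoeff_eq_zero hx] at h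
  simpa using h.symm

lemma dvd_sum_restrict_mul_pow {n : ℕ} {p : Fin n → SpacePolynomial} (hp : ∀ k, g ∣ p k) :
    l.restrict g ∣ ∑ k, l.restrict (p k) * .C l.a ^ (k : ℕ) :=
  Finset.dvd_sum fun k _ => (map_dvd l.restrict (hp k)).mul_right _

/-- If `g` divides all its asymptotic coefficients, then along a line the second derivative of `g`
is a combination of `g` and its first derivative. -/
lemma inZeroSet_of_dvd_asymptoticCoeff (hflat : ∀ k, g ∣ asymptoticCoeff g k) (hx : x ∈ l)
    (hgx : eval x g = 0) (hy : eval x (pderiv 1 g) ≠ 0) (htangent : l.IsTangentAt g x) :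
    l.InZeroSet g := by
  obtain ⟨s, hs⟩ := derivative_dvd_second_derivative_sub_asymptotic l g
  obtain ⟨r, hr⟩ := dvd_sum_restrict_mul_pow (l := l) hflat
  refine eq_zero_of_linear_differential_equation (Q := l.restrict (pderiv 1 g) ^ 2) (t := x 2)
    ![r, s] ?_ ?_ fun k => ?_
  · simp only [Fin.sum_univ_two, Matrix.cons_val, Fin.coe_ofNat_eq_mod, Nat.zero_mod,
      Nat.mod_succ, Function.iterate_zero_apply, Function.iterate_one]
    linear_combination hs + hr
  · simpa [eval_restrict_of_mem hx] using hy
  · fin_cases k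
    · simpa [eval_restrict_of_mem hx] using hgx
    · exact (eval_derivative_restrict_of_mem hx).trans htangent

/-- If `g` divides its flecnodal remainder, then along a line the third derivative of `g` is a
combination of the lower ones wherever the asymptotic quadratic does not degenerate. -/
lemma inZeroSet_of_dvd_flecnodalRemainder (hruled : ∀ k, g ∣ flecnodalRemainder g k) (hx : x ∈ l)
    (hgx : eval x g = 0) (hy : eval x (pderiv 1 g) ≠ 0) (hq : eval x (asymptoticCoeff g 2) ≠ 0)
    (htangent : l.IsTangentAt g x)
    (hasymptotic : ∑ k, eval x (asymptoticCoeff g k) * l.a ^ (k : ℕ) = 0) :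
    l.InZeroSet g := by
  obtain ⟨s₂, hs₂⟩ := derivative_dvd_second_derivative_sub_asymptotic l g
  obtain ⟨s₃, hs₃⟩ := derivative_dvd_third_derivative_sub_flecnodal l g
  obtain ⟨r, hr⟩ := dvd_sum_restrict_mul_pow (l := l) hruled
  have hdivision := map_flecnodal_eq_quotient_mul_asymptotic_add_remainder g
    (l.restrict : SpacePolynomial →+* ℝ[X]) (.C l.a)
  simp only [AlgHom.coe_toRingHom] at hdivision
  set q := l.restrict (asymptoticCoeff g 2 * flecnodalCoeff g 3) * .C l.a +
    l.restrict (flecnodalQuotient g)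
  have hsecond : (Polynomial.derivative^[2] (l.restrict g)).eval (x 2) = 0 := by
    have := congrArg (Polynomial.eval (x 2)) hs₂
    rw [Polynomial.eval_sub, eval_sum_restrict_mul_pow_of_mem hx, hasymptotic, sub_zero,
      Polynomial.eval_mul, Polynomial.eval_mul, eval_derivative_restrict_of_mem hx,
      htangent, zero_mul, Polynomial.eval_pow, eval_restrict_of_mem hx] at this
    exact (mul_eq_zero.1 this).resolve_left (pow_ne_zero 2 hy)
  refine eq_zero_of_linear_differential_equation (t := x 2)
    (Q := l.restrict (asymptoticCoeff g 2) ^ 2 * l.restrict (pderiv 1 g) ^ 3)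
    ![r, l.restrict (asymptoticCoeff g 2) ^ 2 * s₃ - q * s₂, q * l.restrict (pderiv 1 g) ^ 2]
    ?_ ?_ fun k => ?_
  · simp only [Fin.sum_univ_three, Matrix.cons_val, Fin.coe_ofNat_eq_mod, Nat.zero_mod,
      Nat.one_mod, Nat.mod_succ, Function.iterate_zero_apply, Function.iterate_one]
    linear_combination l.restrict (asymptoticCoeff g 2) ^ 2 * hs₃ + hdivision + hr - q * hs₂
  · simpa [eval_restrict_of_mem hx] using ⟨hq, hy⟩
  · fin_cases k
    · simpa [eval_restrict_of_mem hx] using hgx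
    · exact (eval_derivative_restrict_of_mem hx).trans htangent
    · exact hsecond

lemma a_ne_of_mem_of_inZeroSet (hml : m ≠ l) (hxl : x ∈ l) (hxm : x ∈ m) (hl : l.InZeroSet g)
    (hm : m.InZeroSet g) (hy : eval x (pderiv 1 g) ≠ 0) : m.a ≠ l.a := by
  intro ha
  have htl := hl.isTangentAt hxl
  have htm := hm.isTangentAt hxm
  rw [IsTangentAt] at htl htm
  have hc : m.c = l.c :=
    mul_right_cancel₀ hy (by linear_combination htm - htl - eval x (pderiv 0 g) * ha)
  refine hml (Line.ext ha ?_ hc ?_)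
  · linear_combination hxl.1 - hxm.1 - x 2 * ha
  · linear_combination hxl.2 - hxm.2 - x 2 * hc

end Line

/-- `x` lies on `l` and on a second line contained in the surface `g = 0`. -/
def IsDoublePoint (g : SpacePolynomial) (l : Line) (x : Space) : Prop :=
  x ∈ l ∧ ∃ m, m ≠ l ∧ x ∈ m ∧ m.InZeroSet g

lemma IsDoublePoint.eval_eq_zero_of_affine {g : SpacePolynomial} {l : Line} {x : Space}
    (hx : IsDoublePoint g l x) (hl : l.InZeroSet g) {p : Fin 2 → SpacePolynomial}
    (hp : ∀ m : Line, m.InZeroSet g → x ∈ m → ∑ k, eval x (p k) * m.a ^ (k : ℕ) = 0) (k : Fin 2) :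
    eval x (pderiv 1 g * p k) = 0 := by
  obtain ⟨hxl, m, hml, hxm, hm⟩ := hx
  rw [map_mul, mul_eq_zero, or_iff_not_imp_left]
  intro hy
  have hslope := Line.a_ne_of_mem_of_inZeroSet hml hxl hxm hl hm hy
  have hpl := hp l hl hxl
  have hpm := hp m hm hxm
  simp only [Fin.sum_univ_two, Fin.coe_ofNat_eq_mod, Nat.zero_mod, Nat.one_mod, pow_zero, mul_one,
    pow_one] at hpl hpm
  have h1 : eval x (p 1) = 0 :=
    mul_right_cancel₀ (sub_ne_zero.2 hslope) (by linear_combination hpm - hpl)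
  fin_cases k
  · simpa [h1] using hpl
  · exact h1

lemma IsDoublePoint.eval_flecnodalRemainder {g : SpacePolynomial} {l : Line} {x : Space}
    (hx : IsDoublePoint g l x) (hl : l.InZeroSet g) (k : Fin 2) :
    eval x (pderiv 1 g * flecnodalRemainder g k) = 0 :=
  hx.eval_eq_zero_of_affine hl (fun _ hm hxm => hm.sum_flecnodalRemainder_eq_zero hxm) k

lemma IsDoublePoint.eval_asymptoticCoeff {g : SpacePolynomial} {l : Line} {x : Space}
    (hx : IsDoublePoint g l x) (hl : l.InZeroSet g) (hdvd : g ∣ asymptoticCoeff g 2) (k : Fin 2) :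
    eval x (pderiv 1 g * asymptoticCoeff g k.castSucc) = 0 := by
  refine hx.eval_eq_zero_of_affine hl (p := fun k => asymptoticCoeff g k.castSucc) ?_ k
  intro m hm hxm
  have h := hm.sum_asymptoticCoeff_eq_zero hxm
  have hlast : eval x (asymptoticCoeff g (Fin.last 2)) = 0 := (hm.of_dvd hdvd).eval_eq_zero hxm
  rwa [Fin.sum_univ_castSucc, hlast, zero_mul, add_zero] at h

/-! ### Surfaces swept out by lines -/

lemma dvd_of_infinite_inZeroSet {g h : SpacePolynomial} (hg : Prime g) {S : Set Line}
    (hS : S.Infinite) (hzero : ∀ l ∈ S, l.InZeroSet g ∧ l.InZeroSet h) : g ∣ h := by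
  by_contra hgh
  obtain ⟨T, hTS, hcard⟩ := hS.exists_subset_card_eq (6 * g.totalDegree * h.totalDegree + 1)
  have := card_le_six_mul_totalDegree_mul_totalDegree hg hgh T fun l hl => hzero l (hTS hl)
  omega

lemma hasDerivAt_eval_update {σ 𝕜 : Type*} [NontriviallyNormedField 𝕜] [DecidableEq σ]
    (f : MvPolynomial σ 𝕜) (x : σ → 𝕜) (i : σ) (s : 𝕜) :
    HasDerivAt (fun s => eval (Function.update x i s) f)
      (eval (Function.update x i s) (pderiv i f)) s := by
  induction f using MvPolynomial.induction_on with
  | C r => simpa using hasDerivAt_const s r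
  | add p q hp hq => simpa using hp.fun_add hq
  | mul_X p j hp =>
    have hX : HasDerivAt (fun s => Function.update x i s j)
        (eval (Function.update x i s) (pderiv i (X j))) s := by
      obtain rfl | hji := eq_or_ne j i
      · simpa using hasDerivAt_id' s
      · simpa [hji, pderiv_X_of_ne hji] using hasDerivAt_const s (x j)
    simpa [add_comm, mul_comm] using hp.fun_mul hX

/-- The affine polynomial with linear coefficients `v` and constant term `r`. -/
def affinePolynomial (v : Space) (r : ℝ) : SpacePolynomial := ∑ i, C (v i) * X i + C r

lemma eval_affinePolynomial (v : Space) (r : ℝ) (x : Space) :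
    eval x (affinePolynomial v r) = v 0 * x 0 + v 1 * x 1 + v 2 * x 2 + r := by
  simp [affinePolynomial, Fin.sum_univ_three]

lemma totalDegree_affinePolynomial_le (v : Space) (r : ℝ) :
    (affinePolynomial v r).totalDegree ≤ 1 := by
  refine (totalDegree_add _ _).trans (max_le (totalDegree_finsetSum_le fun i _ => ?_) (by simp))
  rw [C_mul']
  exact (totalDegree_smul_le _ _).trans (totalDegree_X i).le

lemma totalDegree_le_one_of_pderiv_eq_zero {g : SpacePolynomial} (hg : Prime g)
    (hy : pderiv 1 g = 0) {l : Line} (hl : l.InZeroSet g) : g.totalDegree ≤ 1 := by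
  have hconst (x : Space) (s : ℝ) : eval (Function.update x 1 s) g = eval x g := by
    have hderiv := hasDerivAt_eval_update g x 1
    simpa using is_const_of_deriv_eq_zero (fun s => (hderiv s).differentiableAt)
      (fun s => by rw [(hderiv s).deriv, hy, map_zero]) s (x 1)
  have hdvd : g ∣ affinePolynomial ![1, 0, -l.a] (-l.b) := by
    refine dvd_of_infinite_inZeroSet hg (S := Set.range fun r : ℝ => (⟨l.a, l.b, 0, r⟩ : Line))
      (Set.infinite_range_of_injective fun r s hrs => by simpa using hrs) ?_
    rintro _ ⟨r, rfl⟩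
    refine ⟨Line.inZeroSet_of_forall_eval_point fun t => ?_,
      Line.inZeroSet_of_forall_eval_point fun t => ?_⟩
    · have hpoint : Line.point ⟨l.a, l.b, 0, r⟩ t = Function.update (l.point t) 1 r := by
        funext i
        fin_cases i <;> simp [Line.point]
      rw [hpoint, hconst, hl.eval_eq_zero (l.mem_point t)]
    · simp [eval_affinePolynomial]
  refine (totalDegree_le_of_dvd (fun h => ?_) hdvd).trans (totalDegree_affinePolynomial_le _ _)
  have := eval_affinePolynomial ![1, 0, -l.a] (-l.b) ![l.b + 1, 0, 0]
  simp [h] at this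

/-- The tangent lines at a single point already sweep out the tangent plane. -/
lemma totalDegree_le_one_of_dvd_asymptoticCoeff {g : SpacePolynomial} (hg : Prime g)
    (hflat : ∀ k, g ∣ asymptoticCoeff g k) {x : Space} (hgx : eval x g = 0)
    (hy : eval x (pderiv 1 g) ≠ 0) : g.totalDegree ≤ 1 := by
  let grad (i : Fin 3) : ℝ := eval x (pderiv i g)
  let r : ℝ := -(grad 0 * x 0 + grad 1 * x 1 + grad 2 * x 2)
  let slope (a : ℝ) : ℝ := -(grad 0 * a + grad 2) / grad 1
  have hslope (a : ℝ) : slope a * grad 1 = -(grad 0 * a + grad 2) := div_mul_cancel₀ _ hy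
  have hdvd : g ∣ affinePolynomial grad r := by
    refine dvd_of_infinite_inZeroSet hg (S := Set.range fun a : ℝ =>
      (⟨a, x 0 - a * x 2, slope a, x 1 - slope a * x 2⟩ : Line))
      (Set.infinite_range_of_injective fun a b hab => congrArg Line.a hab) ?_
    rintro _ ⟨a, rfl⟩
    refine ⟨Line.inZeroSet_of_dvd_asymptoticCoeff hflat ⟨by simp, by simp⟩ hgx hy ?_,
      Line.inZeroSet_of_forall_eval_point fun t => ?_⟩
    · change a * grad 0 + slope a * grad 1 + grad 2 = 0
      rw [hslope]
      ring
    · simp only [eval_affinePolynomial, Line.point_zero, Line.point_one, Line.point_two, r]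
      linear_combination (t - x 2) * hslope a
  refine (totalDegree_le_of_dvd (fun h => hy ?_) hdvd).trans (totalDegree_affinePolynomial_le _ _)
  have := eval_affinePolynomial grad r ![x 0, x 1 + 1, x 2]
  simp only [h, map_zero, r, Matrix.cons_val] at this
  linarith

/-- The ten monomials of degree at most two in three variables. -/
def quadraticMonomial : Fin 10 → SpacePolynomial :=
  ![1, X 0, X 1, X 2, X 0 * X 0, X 1 * X 1, X 2 * X 2, X 0 * X 1, X 0 * X 2, X 1 * X 2]

/-- The polynomial of degree at most two with the given coefficients. -/
def quadric : (Fin 10 → ℝ) →ₗ[ℝ] SpacePolynomial := Fintype.linearCombination ℝ quadraticMonomial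

lemma eval_quadric (v : Fin 10 → ℝ) (x : Space) :
    eval x (quadric v) = v 0 + v 1 * x 0 + v 2 * x 1 + v 3 * x 2 + v 4 * (x 0 * x 0) +
      v 5 * (x 1 * x 1) + v 6 * (x 2 * x 2) + v 7 * (x 0 * x 1) + v 8 * (x 0 * x 2) +
      v 9 * (x 1 * x 2) := by
  simp only [quadric, Fintype.linearCombination_apply, map_sum, smul_eval]
  simp [Fin.sum_univ_succ, quadraticMonomial, add_assoc]

lemma totalDegree_quadric_le (v : Fin 10 → ℝ) : (quadric v).totalDegree ≤ 2 := by
  rw [quadric, Fintype.linearCombination_apply]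
  refine totalDegree_finsetSum_le fun i _ => (totalDegree_smul_le _ _).trans ?_
  have hXX (i j : Fin 3) : (X i * X j : SpacePolynomial).totalDegree ≤ 2 :=
    (totalDegree_mul _ _).trans (by simp only [totalDegree_X]; norm_num)
  fin_cases i <;> first | exact hXX _ _ | simp [quadraticMonomial]

lemma quadric_injective : Function.Injective quadric := by
  rw [← LinearMap.ker_eq_bot, LinearMap.ker_eq_bot']
  intro v hv
  have hzero (x y z : ℝ) : eval ![x, y, z] (quadric v) = 0 := by rw [hv, map_zero]
  simp only [eval_quadric, Matrix.cons_val] at hzero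
  ext i
  fin_cases i <;> simp <;>
    linarith [hzero 0 0 0, hzero 1 0 0, hzero (-1) 0 0, hzero 0 1 0, hzero 0 (-1) 0, hzero 0 0 1,
      hzero 0 0 (-1), hzero 1 1 0, hzero 1 0 1, hzero 0 1 1]

lemma exists_quadric_inZeroSet (L : Finset Line) (hL : L.card ≤ 3) :
    ∃ f : SpacePolynomial, f ≠ 0 ∧ f.totalDegree ≤ 2 ∧ ∀ l ∈ L, l.InZeroSet f := by
  obtain ⟨_, ⟨v, rfl⟩, hv, hzero⟩ := exists_ne_zero_inZeroSet quadric.range 2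
    (by rintro _ ⟨v, rfl⟩; exact totalDegree_quadric_le v) L
    (by rw [LinearMap.finrank_range_of_inj quadric_injective, Module.finrank_fin_fun]; omega)
  exact ⟨quadric v, hv, totalDegree_quadric_le v, hzero⟩

namespace Line

open Filter Topology

variable {l m : Line} {g : SpacePolynomial} {t : ℝ}

instance : TopologicalSpace Line :=
  .induced (fun l => (l.a, l.b, l.c, l.d)) inferInstance

lemma continuousAt_iff {α : Type*} [TopologicalSpace α] {n : α → Line} {r : α} :
    ContinuousAt n r ↔ ContinuousAt (fun s => (n s).a) r ∧ ContinuousAt (fun s => (n s).b) r ∧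
      ContinuousAt (fun s => (n s).c) r ∧ ContinuousAt (fun s => (n s).d) r := by
  have hind : IsInducing fun l : Line => (l.a, l.b, l.c, l.d) := ⟨rfl⟩
  rw [hind.continuousAt_iff]
  exact ⟨fun h => ⟨h.fst, h.snd.fst, h.snd.snd.fst, h.snd.snd.snd⟩,
    fun ⟨ha, hb, hc, hd⟩ => ha.prodMk (hb.prodMk (hc.prodMk hd))⟩

lemma tendsto_point {α : Type*} [TopologicalSpace α] {n : α → Line} {r : α} {τ : α → ℝ} {s : ℝ}
    (hn : ContinuousAt n r) (hτ : Tendsto τ (𝓝 r) (𝓝 s)) :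
    Tendsto (fun u => (n u).point (τ u)) (𝓝 r) (𝓝 ((n r).point s)) := by
  obtain ⟨ha, hb, hc, hd⟩ := continuousAt_iff.1 hn
  rw [tendsto_pi_nhds]
  intro i
  fin_cases i
  · exact (ha.tendsto.mul hτ).add hb
  · exact (hc.tendsto.mul hτ).add hd
  · exact hτ

lemma continuous_eval_point (l : Line) (f : SpacePolynomial) :
    Continuous fun t => eval (l.point t) f := by
  simpa only [eval_restrict] using (l.restrict f).continuous

/-- The line through `l.point t` whose slope `a` is the second root of the asymptotic quadratic of
`g`, the first being `l.a`; `c` makes it tangent to `g = 0`. If `l` lies on a doubly ruled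
surface `g = 0`, this is the line of the other ruling. -/
def oppositeRuling (g : SpacePolynomial) (l : Line) (t : ℝ) : Line :=
  let x := l.point t
  let a := -eval x (asymptoticCoeff g 1) / eval x (asymptoticCoeff g 2) - l.a
  let c := -(eval x (pderiv 0 g) * a + eval x (pderiv 2 g)) / eval x (pderiv 1 g)
  ⟨a, x 0 - a * t, c, x 1 - c * t⟩

lemma oppositeRuling_a (g : SpacePolynomial) (l : Line) (t : ℝ) :
    (oppositeRuling g l t).a = -eval (l.point t) (asymptoticCoeff g 1) /
      eval (l.point t) (asymptoticCoeff g 2) - l.a := rfl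

lemma oppositeRuling_c (g : SpacePolynomial) (l : Line) (t : ℝ) :
    (oppositeRuling g l t).c = -(eval (l.point t) (pderiv 0 g) * (oppositeRuling g l t).a +
      eval (l.point t) (pderiv 2 g)) / eval (l.point t) (pderiv 1 g) := rfl

lemma point_mem_oppositeRuling (g : SpacePolynomial) (l : Line) (t : ℝ) :
    l.point t ∈ oppositeRuling g l t := by
  constructor <;> simp [oppositeRuling]

lemma point_oppositeRuling (g : SpacePolynomial) (l : Line) (t : ℝ) :
    (oppositeRuling g l t).point t = l.point t :=
  (mem_iff_eq_point.1 (point_mem_oppositeRuling g l t)).symm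

section Nondegenerate

variable (ht : eval (l.point t) (pderiv 1 g * asymptoticCoeff g 2) ≠ 0)
include ht

lemma isTangentAt_oppositeRuling : (oppositeRuling g l t).IsTangentAt g (l.point t) := by
  rw [map_mul] at ht
  rw [IsTangentAt, oppositeRuling_c, div_mul_cancel₀ _ (left_ne_zero_of_mul ht)]
  ring

lemma inZeroSet_oppositeRuling (hruled : ∀ k, g ∣ flecnodalRemainder g k) (hl : l.InZeroSet g) :
    (oppositeRuling g l t).InZeroSet g := by
  have htangent := isTangentAt_oppositeRuling ht
  rw [map_mul] at ht
  refine inZeroSet_of_dvd_flecnodalRemainder hruled (point_mem_oppositeRuling g l t)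
    (hl.eval_eq_zero (l.mem_point t)) (left_ne_zero_of_mul ht) (right_ne_zero_of_mul ht)
    htangent ?_
  have hq := right_ne_zero_of_mul ht
  have hsum := hl.sum_asymptoticCoeff_eq_zero (l.mem_point t)
  simp only [Fin.sum_univ_three, Fin.coe_ofNat_eq_mod, Nat.zero_mod, Nat.one_mod, Nat.mod_succ,
    oppositeRuling_a] at hsum ⊢
  field_simp
  linear_combination eval (l.point t) (asymptoticCoeff g 2) * hsum

lemma oppositeRuling_oppositeRuling (hl : l.InZeroSet g) :
    oppositeRuling g (oppositeRuling g l t) t = l := by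
  set m := oppositeRuling g l t with hm
  have hpoint : m.point t = l.point t := point_oppositeRuling g l t
  have htangent := hl.isTangentAt (l.mem_point t)
  rw [IsTangentAt] at htangent
  rw [map_mul] at ht
  have ha : (oppositeRuling g m t).a = l.a := by
    rw [oppositeRuling_a, hpoint, hm, oppositeRuling_a]
    ring
  have hc : (oppositeRuling g m t).c = l.c := by
    rw [oppositeRuling_c, ha, hpoint, div_eq_iff (left_ne_zero_of_mul ht)]
    linear_combination -htangent
  have hmem := point_mem_oppositeRuling g m t
  rw [hpoint] at hmem
  have hb := hmem.1
  have hd := hmem.2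
  simp only [point_zero, point_one, point_two, ha, hc, add_right_inj] at hb hd
  exact Line.ext ha hb.symm hc hd.symm

lemma continuousAt_oppositeRuling : ContinuousAt (oppositeRuling g l) t := by
  rw [map_mul] at ht
  have heval (f : SpacePolynomial) : ContinuousAt (fun s => eval (l.point s) f) t :=
    (l.continuous_eval_point f).continuousAt
  have ha : ContinuousAt (fun s => (oppositeRuling g l s).a) t :=
    ((heval _).neg.div (heval _) (right_ne_zero_of_mul ht)).sub continuousAt_const
  have hc : ContinuousAt (fun s => (oppositeRuling g l s).c) t :=
    (((heval _).mul ha).add (heval _)).neg.div (heval _) (left_ne_zero_of_mul ht)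
  refine continuousAt_iff.2 ⟨ha, ?_, hc, ?_⟩
  · exact (by fun_prop : ContinuousAt (fun s => l.a * s + l.b) t).sub (ha.mul continuousAt_id)
  · exact (by fun_prop : ContinuousAt (fun s => l.c * s + l.d) t).sub (hc.mul continuousAt_id)

lemma eventually_inZeroSet_oppositeRuling (hruled : ∀ k, g ∣ flecnodalRemainder g k)
    (hl : l.InZeroSet g) : ∀ᶠ s in 𝓝 t, (oppositeRuling g l s).InZeroSet g :=
  ((l.continuous_eval_point _).continuousAt.eventually_ne ht).mono
    fun _ hs => inZeroSet_oppositeRuling hs hruled hl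

lemma oppositeRuling_a_ne (hl : l.InZeroSet g) (hml : m ≠ l) (htm : l.point t ∈ m)
    (hm : m.InZeroSet g) : (oppositeRuling g l t).a ≠ l.a := by
  rw [map_mul] at ht
  have hslope := a_ne_of_mem_of_inZeroSet hml (l.mem_point t) htm hl hm (left_ne_zero_of_mul ht)
  have hq := right_ne_zero_of_mul ht
  have hsuml := hl.sum_asymptoticCoeff_eq_zero (l.mem_point t)
  have hsumm := hm.sum_asymptoticCoeff_eq_zero htm
  simp only [Fin.sum_univ_three, Fin.coe_ofNat_eq_mod, Nat.zero_mod, Nat.one_mod,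
    Nat.mod_succ] at hsuml hsumm
  have hvieta : eval (l.point t) (asymptoticCoeff g 2) * (m.a + l.a) +
      eval (l.point t) (asymptoticCoeff g 1) = 0 :=
    mul_right_cancel₀ (sub_ne_zero.2 hslope) (by linear_combination hsumm - hsuml)
  have ha : (oppositeRuling g l t).a = m.a := by
    rw [oppositeRuling_a]
    field_simp
    linear_combination -hvieta
  rwa [ha]

end Nondegenerate

lemma injOn_oppositeRuling (g : SpacePolynomial) (l : Line) :
    Set.InjOn (oppositeRuling g l) {t | (oppositeRuling g l t).a ≠ l.a} := by
  intro s hs t _ hst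
  by_contra hne
  have ht := point_mem_oppositeRuling g l t
  rw [← hst] at ht
  exact hs (congrArg a (eq_of_mem_of_mem (fun h => hne (l.point_injective h))
    (point_mem_oppositeRuling g l s) (l.mem_point s) ht (l.mem_point t)))

end Line

/-- The uniqueness half of the implicit function theorem. -/
lemma exists_mem_nhds_eq_of_eval_eq_zero {σ : Type*} [Finite σ]
    {g : MvPolynomial σ ℝ} {x : σ → ℝ} {i : σ} (hx : eval x (pderiv i g) ≠ 0) :
    ∃ U ∈ nhds x, ∀ y ∈ U, ∀ z ∈ U, eval y g = 0 → eval z g = 0 → (∀ j ≠ i, y j = z j) →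
      y = z := by
  classical
  have := Fintype.ofFinite σ
  have hne := (MvPolynomial.continuous_eval (pderiv i g)).continuousAt.eventually_ne hx
  obtain ⟨ε, hε, hball⟩ := Metric.eventually_nhds_iff.1 hne
  have hnotlt : ∀ y ∈ Metric.ball x ε, ∀ z ∈ Metric.ball x ε, eval y g = 0 → eval z g = 0 →
      (∀ j ≠ i, y j = z j) → ¬ y i < z i := by
    intro y hy z hz hgy hgz hyz hlt
    have hupdate : Function.update y i (z i) = z := by
      ext j
      obtain rfl | hji := eq_or_ne j i <;> simp [*]
    obtain ⟨s, hs, hzero⟩ := exists_hasDerivAt_eq_zero hlt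
      (fun s _ => (hasDerivAt_eval_update g y i s).continuousAt.continuousWithinAt)
      (by rw [Function.update_eq_self, hupdate, hgy, hgz])
      (fun s _ => hasDerivAt_eval_update g y i s)
    refine hball ((dist_pi_lt_iff hε).2 fun j => ?_) hzero
    have hyj := (dist_pi_lt_iff hε).1 hy j
    have hzj := (dist_pi_lt_iff hε).1 hz j
    obtain rfl | hji := eq_or_ne j i
    · rw [Real.dist_eq, abs_lt] at hyj hzj ⊢
      rw [Function.update_self]
      exact ⟨by linarith [hs.1], by linarith [hs.2]⟩
    · rwa [Function.update_of_ne hji]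
  refine ⟨_, Metric.ball_mem_nhds x hε, fun y hy z hz hgy hgz hyz => ?_⟩
  ext j
  obtain rfl | hji := eq_or_ne j i
  · exact le_antisymm (not_lt.1 (hnotlt z hz y hy hgz hgy fun k hk => (hyz k hk).symm))
      (not_lt.1 (hnotlt y hy z hz hgy hgz hyz))
  · exact hyz j hji

section DoublyRuled

open Filter Topology Line

variable {α : Type*} [TopologicalSpace α] {n : α → Line} {r₀ : α} {g : SpacePolynomial}

lemma exists_tendsto_eventually_point_eq {m : Line} {s : ℝ} (hn : ContinuousAt n r₀)
    (hng : ∀ᶠ r in 𝓝 r₀, (n r).InZeroSet g) (hm : m.InZeroSet g)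
    (hs : (n r₀).point s = m.point s) (hslope : m.a ≠ (n r₀).a)
    (hy : eval (m.point s) (pderiv 1 g) ≠ 0) :
    ∃ τ : α → ℝ, Tendsto τ (𝓝 r₀) (𝓝 s) ∧ ∀ᶠ r in 𝓝 r₀, (n r).point (τ r) = m.point (τ r) := by
  obtain ⟨ha, hb, -, -⟩ := continuousAt_iff.1 hn
  have hslope' : m.a - (n r₀).a ≠ 0 := sub_ne_zero.2 hslope
  set τ : α → ℝ := fun r => ((n r).b - m.b) / (m.a - (n r).a) with hτ_def
  have hτ : Tendsto τ (𝓝 r₀) (𝓝 s) := by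
    have hs₀ := congrFun hs 0
    simp only [point_zero] at hs₀
    have : τ r₀ = s := by rw [hτ_def, div_eq_iff hslope']; linear_combination hs₀
    rw [← this]
    exact (hb.sub continuousAt_const).div (continuousAt_const.sub ha) hslope'
  refine ⟨τ, hτ, ?_⟩
  obtain ⟨U, hU, hunique⟩ := exists_mem_nhds_eq_of_eval_eq_zero hy
  have hmoving := tendsto_point hn hτ
  rw [hs] at hmoving
  have hfixed := tendsto_point (n := fun _ => m) continuousAt_const hτ
  filter_upwards [hmoving.eventually_mem hU, hfixed.eventually_mem hU, hng,
    (continuousAt_const.sub ha).eventually_ne hslope'] with r hrn hrm hr hra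
  refine hunique _ hrn _ hrm (hr.eval_eq_zero (mem_point _ _)) (hm.eval_eq_zero (mem_point _ _)) ?_
  intro j hj
  fin_cases j
  · simp only [Fin.zero_eta, point_zero, hτ_def]
    have hra : m.a - (n r).a ≠ 0 := hra
    field_simp
    ring
  · exact absurd rfl hj
  · rfl

lemma eventually_inZeroSet_of_point_eq {ι : Type*} [Fintype ι] {f : SpacePolynomial}
    (hf : f.totalDegree < Fintype.card ι) {m : ι → Line} {s : ι → ℝ} (hs : Function.Injective s)
    (hn : ContinuousAt n r₀) (hng : ∀ᶠ r in 𝓝 r₀, (n r).InZeroSet g)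
    (hmg : ∀ i, (m i).InZeroSet g) (hmf : ∀ i, (m i).InZeroSet f)
    (hpoint : ∀ i, (n r₀).point (s i) = (m i).point (s i)) (hslope : ∀ i, (m i).a ≠ (n r₀).a)
    (hy : ∀ i, eval ((m i).point (s i)) (pderiv 1 g) ≠ 0) :
    ∀ᶠ r in 𝓝 r₀, (n r).InZeroSet f := by
  classical
  choose τ hτ hmeet using fun i =>
    exists_tendsto_eventually_point_eq hn hng (hmg i) (hpoint i) (hslope i) (hy i)
  have hinj : ∀ᶠ r in 𝓝 r₀, ∀ i j, i ≠ j → τ i r ≠ τ j r := by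
    simp only [eventually_all]
    exact fun i j hij => (((hτ i).sub (hτ j)).eventually_ne (sub_ne_zero.2 (hs.ne hij))).mono
      fun r => sub_ne_zero.1
  filter_upwards [hinj, eventually_all.2 hmeet] with r hr hrmeet
  refine inZeroSet_of_totalDegree_lt_card (Finset.univ.image fun i => (n r).point (τ i r)) ?_ ?_
  · simp only [Finset.mem_image, Finset.mem_univ, true_and, forall_exists_index]
    rintro _ i rfl
    refine ⟨mem_point _ _, ?_⟩
    rw [hrmeet i]
    exact (hmf i).eval_eq_zero (mem_point _ _)
  · rwa [Finset.card_image_of_injective, Finset.card_univ]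
    intro i j hij
    by_contra hne
    exact hr i j hne ((n r).point_injective hij)

/-- A surface doubly ruled near a point is the quadric through three lines of one ruling, because
every nearby line of the other ruling meets all three. -/
lemma totalDegree_le_two_of_dvd_flecnodalRemainder (hg : Prime g)
    (hruled : ∀ k, g ∣ flecnodalRemainder g k) {l k : Line} {t : ℝ} (hl : l.InZeroSet g)
    (hk : k.InZeroSet g) (hkl : k ≠ l) (htk : l.point t ∈ k)
    (ht : eval (l.point t) (pderiv 1 g * asymptoticCoeff g 2) ≠ 0) : g.totalDegree ≤ 2 := by
  have hslope := oppositeRuling_a_ne ht hl hkl htk hk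
  have hrul : ∀ᶠ s in 𝓝 t, (oppositeRuling g l s).InZeroSet g ∧
      (oppositeRuling g l s).a ≠ l.a ∧ eval (l.point s) (pderiv 1 g * asymptoticCoeff g 2) ≠ 0 :=
    (eventually_inZeroSet_oppositeRuling ht hruled hl).and <|
      ((continuousAt_iff.1 (continuousAt_oppositeRuling ht)).1.eventually_ne hslope).and <|
      (l.continuous_eval_point _).continuousAt.eventually_ne ht
  obtain ⟨T, hT, hTcard⟩ := (infinite_of_mem_nhds t hrul).exists_subset_card_eq 3
  obtain ⟨f, hf, hfdeg, hfzero⟩ := exists_quadric_inZeroSet (T.image (oppositeRuling g l))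
    (Finset.card_image_le.trans hTcard.le)
  set m := oppositeRuling g l t
  have hm : m.InZeroSet g := hrul.self_of_nhds.1
  have hmt : eval (m.point t) (pderiv 1 g * asymptoticCoeff g 2) ≠ 0 := by
    rwa [point_oppositeRuling]
  have hml : oppositeRuling g m t = l := oppositeRuling_oppositeRuling ht hl
  have hcont := continuousAt_oppositeRuling hmt
  have hmg := eventually_inZeroSet_oppositeRuling hmt hruled hm
  have hmf : ∀ᶠ r in 𝓝 t, (oppositeRuling g m r).InZeroSet f := by
    refine eventually_inZeroSet_of_point_eq (ι := T) (s := fun s => s)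
      (m := fun s => oppositeRuling g l s) (by simpa [hTcard] using Nat.lt_succ_of_le hfdeg)
      Subtype.val_injective hcont hmg (fun s => (hT s.2).1)
      (fun s => hfzero _ (Finset.mem_image_of_mem _ s.2)) ?_ ?_ ?_
    · intro s
      rw [hml, point_oppositeRuling]
    · intro s
      rw [hml]
      exact (hT s.2).2.1
    · intro s
      rw [point_oppositeRuling]
      exact left_ne_zero_of_mul (by simpa only [map_mul] using (hT s.2).2.2)
  have hma : ∀ᶠ r in 𝓝 t, (oppositeRuling g m r).a ≠ m.a :=
    (continuousAt_iff.1 hcont).1.eventually_ne (by rw [hml]; exact hslope.symm)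
  have hinf := infinite_of_mem_nhds t (hmg.and (hmf.and hma))
  have hdvd : g ∣ f := by
    refine dvd_of_infinite_inZeroSet hg
      (hinf.image ((injOn_oppositeRuling g m).mono fun r hr => hr.2.2)) ?_
    rintro _ ⟨r, hr, rfl⟩
    exact ⟨hr.1, hr.2.1⟩
  exact (totalDegree_le_of_dvd hf hdvd).trans hfdeg

end DoublyRuled

section DoublePoints

variable {g : SpacePolynomial} {S : Finset Line}

lemma not_dvd_pderiv (hg : Prime g) (hdeg : 2 ≤ g.totalDegree) {l : Line} (hl : l.InZeroSet g) :
    ¬ g ∣ pderiv 1 g := by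
  intro hdvd
  have hy : pderiv 1 g ≠ 0 := fun h => by
    have := totalDegree_le_one_of_pderiv_eq_zero hg h hl
    omega
  have := totalDegree_le_of_dvd hy hdvd
  have := totalDegree_pderiv_le 1 g
  omega

/-- `S` consists of lines on `g = 0`, each with many intersections with further lines there. -/
structure HasManyDoublePoints (g : SpacePolynomial) (S : Finset Line) : Prop where
  inZeroSet : ∀ l ∈ S, l.InZeroSet g
  exists_doublePoints : ∀ l ∈ S, ∃ D : Finset Space,
    11 * g.totalDegree < D.card ∧ ∀ x ∈ D, IsDoublePoint g l x

lemma HasManyDoublePoints.dvd_of_eval_eq_zero (hS : HasManyDoublePoints g S) (hg : Prime g)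
    (hdeg : 2 ≤ g.totalDegree) (hcard : 66 * g.totalDegree ^ 2 < S.card) {h : SpacePolynomial}
    (hh : h.totalDegree ≤ 10 * g.totalDegree)
    (hzero : ∀ l ∈ S, ∀ x, IsDoublePoint g l x → eval x (pderiv 1 g * h) = 0) : g ∣ h := by
  obtain ⟨l₀, hl₀⟩ : S.Nonempty := Finset.card_pos.1 (by omega)
  have hprod : (pderiv 1 g * h).totalDegree ≤ 11 * g.totalDegree := by
    have := totalDegree_mul_le_add (totalDegree_pderiv_le_self 1 g) hh
    omega
  have hvanish (l : Line) (hl : l ∈ S) : l.InZeroSet (pderiv 1 g * h) := by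
    obtain ⟨D, hDcard, hD⟩ := hS.exists_doublePoints l hl
    exact Line.inZeroSet_of_totalDegree_lt_card D
      (fun x hx => ⟨(hD x hx).1, hzero l hl x (hD x hx)⟩) (hprod.trans_lt hDcard)
  have hdvd : g ∣ pderiv 1 g * h := by
    by_contra hndvd
    have := card_le_six_mul_totalDegree_mul_totalDegree hg hndvd S
      fun l hl => ⟨hS.inZeroSet l hl, hvanish l hl⟩
    nlinarith
  exact (hg.dvd_or_dvd hdvd).resolve_left (not_dvd_pderiv hg hdeg (hS.inZeroSet l₀ hl₀))

theorem HasManyDoublePoints.card_le (hS : HasManyDoublePoints g S) (hg : Prime g)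
    (hdeg : 3 ≤ g.totalDegree) : S.card ≤ 66 * g.totalDegree ^ 2 := by
  by_contra! hcard
  have hdvd {h : SpacePolynomial} := hS.dvd_of_eval_eq_zero hg (by omega) hcard (h := h)
  have hruled (k : Fin 2) : g ∣ flecnodalRemainder g k :=
    hdvd (totalDegree_flecnodalRemainder_le g k)
      fun l hl x hx => hx.eval_flecnodalRemainder (hS.inZeroSet l hl) k
  have hcoeff (k : Fin 3) : (asymptoticCoeff g k).totalDegree ≤ 10 * g.totalDegree :=
    (totalDegree_asymptoticCoeff_le g k).trans (by omega)
  have hpick {h : SpacePolynomial} (hh : h.totalDegree ≤ 10 * g.totalDegree) (hgh : ¬ g ∣ h) :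
      ∃ l ∈ S, ∃ x, IsDoublePoint g l x ∧ eval x (pderiv 1 g * h) ≠ 0 := by
    by_contra! hall
    exact hgh (hdvd hh hall)
  by_cases hq : g ∣ asymptoticCoeff g 2
  · have hflat (k : Fin 3) : g ∣ asymptoticCoeff g k := by
      cases k using Fin.lastCases with
      | last => exact hq
      | cast k =>
        exact hdvd (hcoeff _) fun l hl x hx => hx.eval_asymptoticCoeff (hS.inZeroSet l hl) hq k
    obtain ⟨l, hl, x, hx, hne⟩ := hpick (h := 1) (by simp)
      fun h => hg.not_isUnit (isUnit_of_dvd_one h)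
    have := totalDegree_le_one_of_dvd_asymptoticCoeff hg hflat
      ((hS.inZeroSet l hl).eval_eq_zero hx.1) (by simpa using hne)
    omega
  · obtain ⟨l, hl, x, ⟨hxl, k, hkl, hxk, hk⟩, hne⟩ := hpick (hcoeff 2) hq
    rw [Line.mem_iff_eq_point.1 hxl] at hne hxk
    have := totalDegree_le_two_of_dvd_flecnodalRemainder hg hruled (hS.inZeroSet l hl) hk hkl hxk
      hne
    omega

end DoublePoints

/-! ### Reducible surfaces -/

instance {σ K : Type*} [Field K] : StrongNormalizationMonoid (MvPolynomial σ K) :=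
  UniqueFactorizationMonoid.strongNormalizationMonoid

section PrimeFactors

variable {σ K : Type*} [Field K] {f p q : MvPolynomial σ K}

lemma prime_of_mem_primeFactors (hp : p ∈ primeFactors f) : Prime p :=
  UniqueFactorizationMonoid.prime_of_normalized_factor p (mem_primeFactors.1 hp)

lemma not_dvd_of_mem_primeFactors (hp : p ∈ primeFactors f) (hq : q ∈ primeFactors f)
    (hpq : p ≠ q) : ¬ p ∣ q := fun hdvd =>
  (prime_of_mem_primeFactors hp).not_isUnit
    (UniqueFactorizationMonoid.pairwise_primeFactors_isRelPrime hp hq hpq dvd_rfl hdvd)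

lemma totalDegree_prod_of_ne_zero {s : Finset (MvPolynomial σ K)} (hs : ∀ p ∈ s, p ≠ 0) :
    (∏ p ∈ s, p).totalDegree = ∑ p ∈ s, p.totalDegree := by
  induction s using Finset.cons_induction with
  | empty => simp
  | cons p s hp ih =>
    rw [Finset.forall_mem_cons] at hs
    rw [Finset.prod_cons, Finset.sum_cons,
      totalDegree_mul_of_isDomain hs.1 (Finset.prod_ne_zero_iff.2 hs.2), ih hs.2]

lemma sum_totalDegree_primeFactors_le (f : MvPolynomial σ K) :
    ∑ p ∈ primeFactors f, p.totalDegree ≤ f.totalDegree := by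
  obtain rfl | hf := eq_or_ne f 0
  · simp
  · rw [← totalDegree_prod_of_ne_zero fun p hp => (prime_of_mem_primeFactors hp).ne_zero]
    exact totalDegree_le_of_dvd hf UniqueFactorizationMonoid.radical_dvd_self

end PrimeFactors

section LinesOnReducibleSurfaces

variable {f : SpacePolynomial} {S : Finset Line}

lemma exists_mem_primeFactors_inZeroSet (hf : f ≠ 0) {l : Line} (hl : l.InZeroSet f) :
    ∃ p ∈ primeFactors f, l.InZeroSet p := by
  have hprod := hl.of_dvd (UniqueFactorizationMonoid.prod_normalizedFactors hf).symm.dvd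
  rw [Line.InZeroSet, map_multiset_prod, Multiset.prod_eq_zero_iff, Multiset.mem_map] at hprod
  obtain ⟨p, hp, hlp⟩ := hprod
  exact ⟨p, mem_primeFactors.2 hp, hlp⟩

open scoped Classical in
lemma card_filter_inZeroSet_two_primeFactors_le (f : SpacePolynomial) (S : Finset Line) :
    (S.filter fun l => ∃ p ∈ primeFactors f, ∃ q ∈ primeFactors f,
      p ≠ q ∧ l.InZeroSet p ∧ l.InZeroSet q).card ≤ 6 * f.totalDegree ^ 2 := by
  have hcover : (S.filter fun l => ∃ p ∈ primeFactors f, ∃ q ∈ primeFactors f,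
      p ≠ q ∧ l.InZeroSet p ∧ l.InZeroSet q) ⊆ (primeFactors f).offDiag.biUnion fun pq =>
        S.filter fun l => l.InZeroSet pq.1 ∧ l.InZeroSet pq.2 := by
    intro l hl
    obtain ⟨hlS, p, hp, q, hq, hpq, hlpq⟩ := Finset.mem_filter.1 hl
    exact Finset.mem_biUnion.2
      ⟨(p, q), Finset.mem_offDiag.2 ⟨hp, hq, hpq⟩, Finset.mem_filter.2 ⟨hlS, hlpq⟩⟩
  calc
    _ ≤ ∑ pq ∈ (primeFactors f).offDiag,
        (S.filter fun l => l.InZeroSet pq.1 ∧ l.InZeroSet pq.2).card :=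
      (Finset.card_le_card hcover).trans Finset.card_biUnion_le
    _ ≤ ∑ pq ∈ (primeFactors f).offDiag, 6 * pq.1.totalDegree * pq.2.totalDegree := by
      refine Finset.sum_le_sum fun pq hpq => ?_
      obtain ⟨hp, hq, hne⟩ := Finset.mem_offDiag.1 hpq
      exact card_le_six_mul_totalDegree_mul_totalDegree (prime_of_mem_primeFactors hp)
        (not_dvd_of_mem_primeFactors hp hq hne) _ fun l hl => (Finset.mem_filter.1 hl).2
    _ ≤ ∑ pq ∈ primeFactors f ×ˢ primeFactors f, 6 * pq.1.totalDegree * pq.2.totalDegree :=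
      Finset.sum_le_sum_of_subset fun pq hpq =>
        Finset.mem_product.2 ⟨(Finset.mem_offDiag.1 hpq).1, (Finset.mem_offDiag.1 hpq).2.1⟩
    _ = 6 * (∑ p ∈ primeFactors f, p.totalDegree) ^ 2 := by
      rw [sq, Finset.sum_mul_sum, Finset.sum_product]
      simp only [Finset.mul_sum, mul_assoc]
    _ ≤ 6 * f.totalDegree ^ 2 := by
      gcongr
      exact sum_totalDegree_primeFactors_le f

open scoped Classical in
lemma card_filter_not_isDoublePoint_le (hf : f ≠ 0) {p : SpacePolynomial}
    (hp : p ∈ primeFactors f) {l : Line} (hl : ∀ q ∈ primeFactors f, q ≠ p → ¬ l.InZeroSet q)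
    {D : Finset Space} (hD : ∀ x ∈ D, IsDoublePoint f l x) :
    (D.filter fun x => ¬ IsDoublePoint p l x).card + p.totalDegree ≤ f.totalDegree := by
  have hcard : (D.filter fun x => ¬ IsDoublePoint p l x).card ≤
      (∏ q ∈ (primeFactors f).erase p, q).totalDegree := by
    refine Line.card_le_totalDegree_of_not_inZeroSet (l := l) ?_ _ fun x hx => ?_
    · rw [Line.inZeroSet_finsetProd]
      rintro ⟨q, hq, hlq⟩
      exact hl q (Finset.mem_of_mem_erase hq) (Finset.ne_of_mem_erase hq) hlq
    · obtain ⟨hxD, hxp⟩ := Finset.mem_filter.1 hx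
      obtain ⟨hxl, m, hml, hxm, hm⟩ := hD x hxD
      obtain ⟨q, hq, hmq⟩ := exists_mem_primeFactors_inZeroSet hf hm
      have hqp : q ≠ p := by
        rintro rfl
        exact hxp ⟨hxl, m, hml, hxm, hmq⟩
      have hmprod := Line.inZeroSet_finsetProd.2 ⟨q, Finset.mem_erase.2 ⟨hqp, hq⟩, hmq⟩
      exact ⟨hxl, hmprod.eval_eq_zero hxm⟩
  have hprod : (∏ q ∈ (primeFactors f).erase p, q).totalDegree ≤
      ∑ q ∈ (primeFactors f).erase p, q.totalDegree := totalDegree_finsetProd _ _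
  have hsum : ∑ q ∈ (primeFactors f).erase p, q.totalDegree + p.totalDegree =
      ∑ q ∈ primeFactors f, q.totalDegree := Finset.sum_erase_add _ _ hp
  have hle : ∑ q ∈ primeFactors f, q.totalDegree ≤ f.totalDegree :=
    sum_totalDegree_primeFactors_le f
  omega

/-- Lines on two components are counted by Bézout. A line on a single component has few double
points coming from the other components, so most of its double points are double points of its own
component. -/
theorem card_le_of_isDoublePoint (hf : f ≠ 0) (hS : ∀ l ∈ S, l.InZeroSet f)
    (hlow : ∀ l ∈ S, ∀ p ∈ primeFactors f, p.totalDegree ≤ 2 → ¬ l.InZeroSet p)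
    (hdouble : ∀ l ∈ S, ∃ D : Finset Space,
      12 * f.totalDegree < D.card ∧ ∀ x ∈ D, IsDoublePoint f l x) :
    S.card ≤ 72 * f.totalDegree ^ 2 := by
  classical
  let F := primeFactors f
  let onTwo := S.filter fun l => ∃ p ∈ F, ∃ q ∈ F, p ≠ q ∧ l.InZeroSet p ∧ l.InZeroSet q
  let onlyOn (p : SpacePolynomial) :=
    S.filter fun l => l.InZeroSet p ∧ ∀ q ∈ F, q ≠ p → ¬ l.InZeroSet q
  have hcover : S ⊆ onTwo ∪ F.biUnion onlyOn := by
    intro l hl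
    obtain ⟨p, hp, hlp⟩ := exists_mem_primeFactors_inZeroSet hf (hS l hl)
    rw [Finset.mem_union, or_iff_not_imp_left]
    intro htwo
    refine Finset.mem_biUnion.2 ⟨p, hp, Finset.mem_filter.2 ⟨hl, hlp, fun q hq hqp hlq => htwo ?_⟩⟩
    exact Finset.mem_filter.2 ⟨hl, p, hp, q, hq, hqp.symm, hlp, hlq⟩
  have honly (p : SpacePolynomial) (hp : p ∈ F) : (onlyOn p).card ≤ 66 * p.totalDegree ^ 2 := by
    obtain hempty | ⟨l₀, hl₀⟩ := (onlyOn p).eq_empty_or_nonempty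
    · simp [hempty]
    obtain ⟨hl₀S, hl₀p, -⟩ := Finset.mem_filter.1 hl₀
    have hdeg : 3 ≤ p.totalDegree := not_lt.1 fun h => hlow l₀ hl₀S p hp (by omega) hl₀p
    have hmany : HasManyDoublePoints p (onlyOn p) := by
      refine ⟨fun l hl => (Finset.mem_filter.1 hl).2.1, fun l hl => ?_⟩
      obtain ⟨hlS, -, hlq⟩ := Finset.mem_filter.1 hl
      obtain ⟨D, hDcard, hD⟩ := hdouble l hlS
      refine ⟨D.filter fun x => IsDoublePoint p l x, ?_, fun x hx => (Finset.mem_filter.1 hx).2⟩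
      have := card_filter_not_isDoublePoint_le hf hp hlq hD
      have := Finset.card_filter_add_card_filter_not (s := D) fun x => IsDoublePoint p l x
      omega
    exact hmany.card_le (prime_of_mem_primeFactors hp) hdeg
  have hsum : (F.biUnion onlyOn).card ≤ 66 * f.totalDegree ^ 2 := calc
    _ ≤ ∑ p ∈ F, 66 * p.totalDegree ^ 2 := Finset.card_biUnion_le.trans (Finset.sum_le_sum honly)
    _ ≤ 66 * (∑ p ∈ F, p.totalDegree) ^ 2 := by
      rw [← Finset.mul_sum]
      gcongr
      exact Finset.sum_sq_le_sq_sum_of_nonneg fun _ _ => Nat.zero_le _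
    _ ≤ 66 * f.totalDegree ^ 2 := by
      gcongr
      exact sum_totalDegree_primeFactors_le f
  have htwo : onTwo.card ≤ 6 * f.totalDegree ^ 2 := card_filter_inZeroSet_two_primeFactors_le f S
  have := (Finset.card_le_card hcover).trans (Finset.card_union_le _ _)
  omega

end LinesOnReducibleSurfaces

/-! ### A weak polynomial ham sandwich theorem -/

section WeaklySeparatedPairs

variable {α : Type*} {s : Finset α} {g h : α → ℝ}

/-- The ordered pairs of elements of `s` on which `g` does not take the same strict sign. Bisecting
`s` makes about half of all pairs separated; a positive proportion suffices for partitioning. -/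
def weaklySeparatedPairs (s : Finset α) (g : α → ℝ) : Finset (α × α) :=
  (s ×ˢ s).filter fun p => g p.1 * g p.2 ≤ 0

lemma weaklySeparatedPairs_subset
    (hgh : ∀ y ∈ s, ∀ z ∈ s, g y * g z ≤ 0 → h y * h z ≤ 0) :
    weaklySeparatedPairs s g ⊆ weaklySeparatedPairs s h := by
  intro p hp
  obtain ⟨hps, hgp⟩ := Finset.mem_filter.1 hp
  obtain ⟨hy, hz⟩ := Finset.mem_product.1 hps
  exact Finset.mem_filter.2 ⟨hps, hgh _ hy _ hz hgp⟩

lemma card_weaklySeparatedPairs (s : Finset α) (g : α → ℝ) :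
    (weaklySeparatedPairs s g).card = ∑ y ∈ s, ∑ z ∈ s, if g y * g z ≤ 0 then 1 else 0 := by
  rw [weaklySeparatedPairs, Finset.card_filter, Finset.sum_product]

/-- Among the three rotations of a triple at least one is separated, since the product of the three
sign conditions is `-(g x y * g x z * g y z) ^ 2`. -/
lemma card_pow_three_le_of_antisymm (s : Finset α) {g : α → α → ℝ} (hg : ∀ x y, g x y = -g y x) :
    s.card ^ 3 ≤ 3 * ∑ x ∈ s, (weaklySeparatedPairs s (g x)).card := by
  let F (x y z : α) : ℕ := if g x y * g x z ≤ 0 then 1 else 0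
  have one_le (x y z : α) : 1 ≤ F x y z + F y z x + F z x y := by
    by_contra hlt
    have hx : 0 < g x y * g x z := not_le.1 fun h => hlt (by simp only [F, if_pos h]; omega)
    have hy : 0 < g y z * g y x := not_le.1 fun h => hlt (by simp only [F, if_pos h]; omega)
    have hz : 0 < g z x * g z y := not_le.1 fun h => hlt (by simp only [F, if_pos h]; omega)
    rw [hg y x] at hy
    rw [hg z x, hg z y] at hz
    nlinarith [mul_pos (mul_pos hx hy) hz, sq_nonneg (g x y * g x z * g y z)]
  have rotate (G : α → α → α → ℕ) :
      ∑ x ∈ s, ∑ y ∈ s, ∑ z ∈ s, G y z x = ∑ x ∈ s, ∑ y ∈ s, ∑ z ∈ s, G x y z := by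
    rw [Finset.sum_comm]
    exact Finset.sum_congr rfl fun y _ => Finset.sum_comm
  have hsum : ∑ _x ∈ s, ∑ _y ∈ s, ∑ _z ∈ s, 1 ≤
      ∑ x ∈ s, ∑ y ∈ s, ∑ z ∈ s, (F x y z + F y z x + F z x y) := by
    gcongr
    exact one_le _ _ _
  simp only [Finset.sum_add_distrib, Finset.sum_const, smul_eq_mul, mul_one] at hsum
  rw [rotate F, rotate fun x y z => F y z x, rotate F] at hsum
  simp only [card_weaklySeparatedPairs]
  calc
    s.card ^ 3 = s.card * (s.card * s.card) := by ring
    _ ≤ 3 * ∑ x ∈ s, ∑ y ∈ s, ∑ z ∈ s, F x y z := by omega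

end WeaklySeparatedPairs

lemma sum_piFinset_sum_update {ι : Type*} [Fintype ι] [DecidableEq ι] {α : ι → Type*}
    {M : Type*} [AddCommMonoid M] (S : ∀ i, Finset (α i)) (i : ι) (Ψ : (∀ i, α i) → M) :
    ∑ X ∈ Fintype.piFinset S, ∑ x ∈ S i, Ψ (Function.update X i x) =
      (S i).card • ∑ X ∈ Fintype.piFinset S, Ψ X := by
  have hconst : (S i).card • ∑ X ∈ Fintype.piFinset S, Ψ X =
      ∑ X ∈ Fintype.piFinset S, ∑ _x ∈ S i, Ψ X := by
    simp only [Finset.sum_const, Finset.smul_sum]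
  have hmem (p : (∀ i, α i) × α i) (hp : p ∈ Fintype.piFinset S ×ˢ S i) :
      (Function.update p.1 i p.2, p.1 i) ∈ Fintype.piFinset S ×ˢ S i := by
    rw [Finset.mem_product, Fintype.mem_piFinset] at hp ⊢
    exact ⟨(Function.forall_update_iff p.1 fun j y => y ∈ S j).2 ⟨hp.2, fun j _ => hp.1 j⟩, hp.1 i⟩
  rw [hconst, ← Finset.sum_product', ← Finset.sum_product']
  exact Finset.sum_nbij' (fun p => (Function.update p.1 i p.2, p.1 i))
    (fun p => (Function.update p.1 i p.2, p.1 i)) hmem hmem (by simp) (by simp) (by simp)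

section DetForm

variable {n : ℕ}

/-- The linear form `u ↦ det (u, w 0, …, w (n - 1))`, whose kernel is the hyperplane spanned by the
vectors `w i` when these are linearly independent. -/
def detForm (w : Fin n → Fin (n + 1) → ℝ) : (Fin (n + 1) → ℝ) →ₗ[ℝ] ℝ where
  toFun u := Matrix.detRowAlternating (Fin.cons u w : Fin (n + 1) → Fin (n + 1) → ℝ)
  map_add' u v := Matrix.detRowAlternating.toMultilinearMap.cons_add w u v
  map_smul' c u := Matrix.detRowAlternating.toMultilinearMap.cons_smul w c u

lemma detForm_apply (w : Fin n → Fin (n + 1) → ℝ) (u : Fin (n + 1) → ℝ) :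
    detForm w u = (Matrix.of (Fin.cons u w : Fin (n + 1) → Fin (n + 1) → ℝ)).det := rfl

lemma detForm_update_swap (w : Fin n → Fin (n + 1) → ℝ) (i : Fin n) (u v : Fin (n + 1) → ℝ) :
    detForm (Function.update w i u) v = -detForm (Function.update w i v) u := by
  have hrows : (Fin.cons u (Function.update w i v) : Fin (n + 1) → Fin (n + 1) → ℝ) ∘
      Equiv.swap 0 i.succ = Fin.cons v (Function.update w i u) := by
    funext k
    induction k using Fin.cases with
    | zero => simp
    | succ j =>
      obtain rfl | hj := eq_or_ne j i
      · rw [Function.comp_apply, Equiv.swap_apply_right, Fin.cons_zero, Fin.cons_succ,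
          Function.update_self]
      · have hswap : Equiv.swap 0 i.succ j.succ = j.succ :=
          Equiv.swap_apply_of_ne_of_ne (Fin.succ_ne_zero j) ((Fin.succ_injective n).ne hj)
        simp [hswap, hj]
  have hdet := Matrix.detRowAlternating.map_swap
    (Fin.cons u (Function.update w i v) : Fin (n + 1) → Fin (n + 1) → ℝ)
    (Fin.succ_ne_zero i).symm
  rwa [hrows] at hdet

lemma exists_sum_card_sq_le_detForm {α : Type*} (S : Fin n → Finset α)
    (hS : ∀ i, (S i).Nonempty) (v : α → Fin (n + 1) → ℝ) :
    ∃ X ∈ Fintype.piFinset S, ∑ i, (S i).card ^ 2 ≤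
      3 * ∑ i, (weaklySeparatedPairs (S i) fun y => detForm (v ∘ X) (v y)).card := by
  apply Finset.exists_le_of_sum_le (Fintype.piFinset_nonempty.2 hS)
  rw [Finset.sum_comm, ← Finset.mul_sum, Finset.sum_comm (s := Fintype.piFinset S), Finset.mul_sum]
  refine Finset.sum_le_sum fun i _ => Nat.le_of_mul_le_mul_left ?_ (hS i).card_pos
  have hupdate := sum_piFinset_sum_update S i
    fun X => (weaklySeparatedPairs (S i) fun y => detForm (v ∘ X) (v y)).card
  rw [smul_eq_mul] at hupdate
  rw [mul_left_comm, ← hupdate, Finset.mul_sum, Finset.mul_sum]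
  refine Finset.sum_le_sum fun X _ => ?_
  have hanti (x y : α) : detForm (v ∘ Function.update X i x) (v y) =
      -detForm (v ∘ Function.update X i y) (v x) := by
    rw [Function.comp_update, Function.comp_update, detForm_update_swap]
  calc
    (S i).card * (S i).card ^ 2 = (S i).card ^ 3 := by ring
    _ ≤ _ := card_pow_three_le_of_antisymm (S i) hanti

end DetForm

lemma finite_setOf_det_smul_add_eq_zero {ι K : Type*} [Fintype ι] [DecidableEq ι] [Field K]
    {A : Matrix ι ι K} (hA : A.det ≠ 0) (B : Matrix ι ι K) :
    {ε : K | (ε • A + B).det = 0}.Finite := by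
  have hdet : Matrix.det ((Polynomial.X : K[X]) • (1 : Matrix ι ι K[X]) +
      (A⁻¹ * B).map Polynomial.C) ≠ 0 := by
    intro h
    have := Polynomial.leadingCoeff_det_X_one_add_C (A⁻¹ * B)
    rw [h, Polynomial.leadingCoeff_zero] at this
    exact zero_ne_one this
  refine (Polynomial.finite_setOfPred_isRoot hdet).subset fun ε hε => ?_
  have hfactor : ε • A + B = A * (ε • (1 : Matrix ι ι K) + A⁻¹ * B) := by
    rw [mul_add, ← mul_assoc, Matrix.mul_nonsing_inv _ (isUnit_iff_ne_zero.2 hA), one_mul,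
      Matrix.mul_smul, mul_one]
  have hroot : (ε • (1 : Matrix ι ι K) + A⁻¹ * B).det = 0 := by
    rw [Set.mem_ofPred_eq, hfactor, Matrix.det_mul] at hε
    exact (mul_eq_zero.1 hε).resolve_left hA
  change Polynomial.eval ε _ = 0
  rw [← Polynomial.coe_evalRingHom, RingHom.map_det, ← hroot]
  congr 1
  ext i j
  generalize A⁻¹ * B = Q
  simp [Matrix.one_apply, apply_ite]

section HamSandwich

open Filter Topology Function

variable {n : ℕ} {α : Type*} {S : Fin n → Finset α}

/-- Perturbing `e` along a moment curve makes every transversal of `S` linearly independent. -/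
lemma exists_perturbation_detForm_ne_zero (hS : Pairwise (Disjoint on S))
    (e : α → Fin (n + 1) → ℝ) :
    ∃ w : α → Fin (n + 1) → ℝ, ∀ δ > (0 : ℝ), ∃ ε ∈ Set.Ioo 0 δ,
      ∀ X ∈ Fintype.piFinset S, detForm ((e + ε • w) ∘ X) ≠ 0 := by
  classical
  obtain ⟨φ, hφ⟩ := Set.countable_iff_exists_injOn.1 (Finset.univ.biUnion S).countable_toSet
  let w (x : α) (j : Fin (n + 1)) : ℝ := φ x ^ (j : ℕ)
  refine ⟨w, fun δ hδ => ?_⟩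
  let W (X : Fin n → α) : Matrix (Fin (n + 1)) (Fin (n + 1)) ℝ :=
    Matrix.vandermonde (Fin.cons (-1) fun i => φ (X i))
  let E (X : Fin n → α) : Matrix (Fin (n + 1)) (Fin (n + 1)) ℝ :=
    Matrix.of (Fin.cons 0 (e ∘ X))
  have hW (X : Fin n → α) (hX : X ∈ Fintype.piFinset S) : (W X).det ≠ 0 := by
    rw [Fintype.mem_piFinset] at hX
    rw [Matrix.det_vandermonde_ne_zero_iff, Fin.cons_injective_iff]
    refine ⟨?_, fun i j hij => ?_⟩
    · rintro ⟨i, hi⟩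
      have : (0 : ℝ) ≤ φ (X i) := Nat.cast_nonneg _
      linarith
    · by_contra hne
      have hmem (i : Fin n) : X i ∈ Finset.univ.biUnion S :=
        Finset.mem_biUnion.2 ⟨i, Finset.mem_univ i, hX i⟩
      have hXij : X i = X j := hφ (hmem i) (hmem j) (Nat.cast_injective hij)
      exact Finset.disjoint_left.1 (hS hne) (hX i) (hXij ▸ hX j)
  have hfinite : (⋃ X ∈ (Fintype.piFinset S : Set (Fin n → α)),
      {ε : ℝ | (ε • W X + E X).det = 0}).Finite :=
    (Finset.finite_toSet _).biUnion fun X hX => finite_setOf_det_smul_add_eq_zero (hW X hX) _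
  obtain ⟨ε, hεδ, hε⟩ := (Set.Ioo_infinite hδ).exists_notMem_finite hfinite
  refine ⟨ε, hεδ, fun X hX hzero => hε (Set.mem_biUnion hX ?_)⟩
  have hrows : ε • W X + E X = Matrix.of (Fin.cons (fun j => ε * (-1) ^ (j : ℕ))
      ((e + ε • w) ∘ X) : Fin (n + 1) → Fin (n + 1) → ℝ) := by
    ext i j
    induction i using Fin.cases <;> simp [W, E, w, Matrix.vandermonde, add_comm]
  rw [Set.mem_ofPred_eq, hrows, ← detForm_apply, hzero, LinearMap.zero_apply]

lemma exists_perturbation_sum_card_sq_le (hne : ∀ i, (S i).Nonempty)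
    (hS : Pairwise (Disjoint on S)) (e : α → Fin (n + 1) → ℝ) :
    ∃ w : α → Fin (n + 1) → ℝ, ∀ δ > (0 : ℝ), ∃ ε ∈ Set.Ioo 0 δ, ∃ a : Fin (n + 1) → ℝ, ‖a‖ = 1 ∧
      ∑ i, (S i).card ^ 2 ≤
        3 * ∑ i, (weaklySeparatedPairs (S i) fun y => (e y + ε • w y) ⬝ᵥ a).card := by
  obtain ⟨w, hw⟩ := exists_perturbation_detForm_ne_zero hS e
  refine ⟨w, fun δ hδ => ?_⟩
  obtain ⟨ε, hε, hdet⟩ := hw δ hδ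
  obtain ⟨X, hX, hle⟩ := exists_sum_card_sq_le_detForm S hne (e + ε • w)
  let b : Fin (n + 1) → ℝ := fun j => detForm ((e + ε • w) ∘ X) fun k => if j = k then 1 else 0
  have hb (u : Fin (n + 1) → ℝ) : detForm ((e + ε • w) ∘ X) u = u ⬝ᵥ b :=
    LinearMap.pi_apply_eq_sum_univ _ u
  have hb0 : b ≠ 0 := fun h => hdet X hX (LinearMap.ext fun u => by simp [hb, h])
  have hpos : 0 < ‖b‖⁻¹ := inv_pos.2 (norm_pos_iff.2 hb0)
  refine ⟨ε, hε, ‖b‖⁻¹ • b, ?_, hle.trans ?_⟩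
  · rw [norm_smul, norm_inv, norm_norm, inv_mul_cancel₀ (norm_ne_zero_iff.2 hb0)]
  · gcongr
    refine weaklySeparatedPairs_subset fun y _ z _ hyz => ?_
    rw [hb, hb] at hyz
    rw [dotProduct_smul, dotProduct_smul, smul_mul_smul_comm, smul_eq_mul]
    exact mul_nonpos_of_nonneg_of_nonpos (mul_pos hpos hpos).le hyz

lemma exists_dotProduct_sum_card_sq_le (hne : ∀ i, (S i).Nonempty)
    (hS : Pairwise (Disjoint on S)) (e : α → Fin (n + 1) → ℝ) :
    ∃ a : Fin (n + 1) → ℝ, a ≠ 0 ∧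
      ∑ i, (S i).card ^ 2 ≤ 3 * ∑ i, (weaklySeparatedPairs (S i) fun y => e y ⬝ᵥ a).card := by
  obtain ⟨w, hw⟩ := exists_perturbation_sum_card_sq_le hne hS e
  choose ε hε a ha hle using fun k : ℕ => hw (1 / ((k : ℝ) + 1)) (by positivity)
  obtain ⟨b, hb, φ, hφ, hlim⟩ := (isCompact_sphere (0 : Fin (n + 1) → ℝ) 1).tendsto_subseq
    (x := a) fun k => by simp [ha k]
  refine ⟨b, ne_zero_of_mem_unit_sphere ⟨b, hb⟩, ?_⟩
  have hε0 : Tendsto (ε ∘ φ) atTop (𝓝 0) :=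
    (squeeze_zero (fun k => (hε k).1.le) (fun k => (hε k).2.le)
      tendsto_one_div_add_atTop_nhds_zero_nat).comp hφ.tendsto_atTop
  have hform (y : α) :
      Tendsto (fun k => (e y + ε (φ k) • w y) ⬝ᵥ a (φ k)) atTop (𝓝 (e y ⬝ᵥ b)) := by
    have hvec : Tendsto (fun k => e y + ε (φ k) • w y) atTop (𝓝 (e y)) := by
      simpa using tendsto_const_nhds.add (hε0.smul_const (w y))
    exact tendsto_finsetSum _ fun j _ =>
      (tendsto_pi_nhds.1 hvec j).mul (tendsto_pi_nhds.1 hlim j)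
  have hclosed : ∀ᶠ k in atTop, ∀ i ∈ Finset.univ, ∀ y ∈ S i, ∀ z ∈ S i,
      ((e y + ε (φ k) • w y) ⬝ᵥ a (φ k)) * ((e z + ε (φ k) • w z) ⬝ᵥ a (φ k)) ≤ 0 →
        (e y ⬝ᵥ b) * (e z ⬝ᵥ b) ≤ 0 := by
    simp only [Finset.eventually_all]
    intro i _ y _ z _
    by_cases hyz : (e y ⬝ᵥ b) * (e z ⬝ᵥ b) ≤ 0
    · exact Eventually.of_forall fun _ _ => hyz
    · filter_upwards [((hform y).mul (hform z)).eventually (lt_mem_nhds (not_le.1 hyz))]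
        with k hk hk'
      exact absurd hk' hk.not_ge
  obtain ⟨k, hk⟩ := hclosed.exists
  refine (hle (φ k)).trans ?_
  gcongr with i
  exact weaklySeparatedPairs_subset (hk i (Finset.mem_univ i))

theorem exists_polynomial_sum_card_sq_le {K : Finset (Finset Space)} {r : ℕ}
    (hne : ∀ c ∈ K, c.Nonempty) (hK : (K : Set (Finset Space)).PairwiseDisjoint id)
    (hr : K.card < (r + 1) ^ 3) :
    ∃ h : SpacePolynomial, h ≠ 0 ∧ h.totalDegree ≤ 3 * r ∧
      ∑ c ∈ K, c.card ^ 2 ≤ 3 * ∑ c ∈ K, (weaklySeparatedPairs c fun y => eval y h).card := by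
  let V := degreeBox (σ := Fin 3) ℝ fun _ => r
  have hfinrank : K.card + 1 ≤ Module.finrank ℝ V := by
    rw [finrank_degreeBox, Finset.prod_const, Finset.card_univ, Fintype.card_fin]
    exact hr
  let B := Module.finBasis ℝ V
  let b (j : Fin (K.card + 1)) : SpacePolynomial := B (Fin.castLE hfinrank j)
  have hlin : LinearIndependent ℝ b :=
    (B.linearIndependent.comp _ (Fin.castLE_injective hfinrank)).map' V.subtype V.ker_subtype
  let S (i : Fin K.card) : Finset Space := K.equivFin.symm i
  have hsum (F : Finset Space → ℕ) : ∑ i, F (S i) = ∑ c ∈ K, F c := by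
    rw [← Finset.sum_coe_sort K]
    exact Fintype.sum_equiv K.equivFin.symm _ _ fun i => rfl
  obtain ⟨a, ha, hle⟩ := exists_dotProduct_sum_card_sq_le (S := S)
    (fun i => hne _ (K.equivFin.symm i).2)
    (fun i j hij => hK (K.equivFin.symm i).2 (K.equivFin.symm j).2 fun h =>
      hij (K.equivFin.symm.injective (Subtype.ext h)))
    fun y j => eval y (b j)
  have hmem : ∑ j, a j • b j ∈ V :=
    V.sum_mem fun j _ => V.smul_mem _ (B (Fin.castLE hfinrank j)).2
  refine ⟨∑ j, a j • b j, fun h => ha (funext (Fintype.linearIndependent_iff.1 hlin a h)), ?_, ?_⟩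
  · simpa [mul_comm] using totalDegree_le_of_mem_degreeBox hmem
  · rw [hsum fun c => c.card ^ 2,
      hsum fun c => (weaklySeparatedPairs c fun y => (fun j => eval y (b j)) ⬝ᵥ a).card] at hle
    simpa only [map_sum, smul_eval, dotProduct, mul_comm] using hle

end HamSandwich

/-! ### Polynomial partitioning -/

section Partitioning

variable {H : List SpacePolynomial} {T : Finset Space} {x y z : Space} {m : ℝ}

/-- `x` and `y` lie off the zero sets of all polynomials of `H` and on the same side of each of
them. The classes of this relation are the cells of the partition induced by `H`; points on one of
the zero sets lie in no cell. -/
def SameCell (H : List SpacePolynomial) (x y : Space) : Prop :=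
  ∀ h ∈ H, 0 < eval x h * eval y h

lemma SameCell.symm (hxy : SameCell H x y) : SameCell H y x := fun h hh => by
  rw [mul_comm]
  exact hxy h hh

lemma SameCell.trans (hxy : SameCell H x y) (hyz : SameCell H y z) : SameCell H x z := by
  intro h hh
  have hsq : 0 < (eval y h * eval y h) * (eval x h * eval z h) := calc
    0 < (eval x h * eval y h) * (eval y h * eval z h) := mul_pos (hxy h hh) (hyz h hh)
    _ = _ := by ring
  exact pos_of_mul_pos_right hsq (mul_self_nonneg _)

open scoped Classical in
/-- The points of `T` in the cell of `x`. -/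
def cell (H : List SpacePolynomial) (T : Finset Space) (x : Space) : Finset Space :=
  T.filter (SameCell H x)

lemma mem_cell : y ∈ cell H T x ↔ y ∈ T ∧ SameCell H x y := by
  classical exact Finset.mem_filter

lemma SameCell.cell_eq (hxy : SameCell H x y) (T : Finset Space) : cell H T x = cell H T y := by
  ext z
  simp only [mem_cell]
  exact and_congr_right fun _ => ⟨hxy.symm.trans, hxy.trans⟩

lemma cell_eq_of_mem (hy : y ∈ cell H T x) : cell H T y = cell H T x :=
  ((mem_cell.1 hy).2.cell_eq T).symm

lemma self_mem_cell (hx : x ∈ T) (hy : y ∈ cell H T x) : x ∈ cell H T x :=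
  mem_cell.2 ⟨hx, (mem_cell.1 hy).2.trans (mem_cell.1 hy).2.symm⟩

/-- The number of ordered pairs of points of `T` in the same cell. -/
def cellEnergy (H : List SpacePolynomial) (T : Finset Space) : ℕ :=
  ∑ x ∈ T, (cell H T x).card

lemma cellEnergy_nil (T : Finset Space) : cellEnergy [] T = T.card ^ 2 := by
  classical
  have hcell (x : Space) : cell [] T x = T :=
    Finset.filter_true_of_mem fun y _ h hh => absurd hh List.not_mem_nil
  simp only [cellEnergy, hcell, Finset.sum_const, smul_eq_mul, sq]

open scoped Classical in
/-- The cells with more than `m` points of `T`, as sets of points of `T`. -/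
def largeCells (H : List SpacePolynomial) (T : Finset Space) (m : ℝ) : Finset (Finset Space) :=
  (T.filter fun x => m < (cell H T x).card).image (cell H T)

lemma mem_largeCells {c : Finset Space} :
    c ∈ largeCells H T m ↔ ∃ x ∈ T, m < (cell H T x).card ∧ cell H T x = c := by
  simp only [largeCells, Finset.mem_image, Finset.mem_filter, and_assoc]

lemma lt_card_of_mem_largeCells {c : Finset Space} (hc : c ∈ largeCells H T m) : m < c.card := by
  obtain ⟨x, -, hx, rfl⟩ := mem_largeCells.1 hc
  exact hx

lemma cell_eq_of_mem_largeCells {c : Finset Space} (hc : c ∈ largeCells H T m) (hx : x ∈ c) :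
    cell H T x = c := by
  obtain ⟨y, -, -, rfl⟩ := mem_largeCells.1 hc
  exact cell_eq_of_mem hx

lemma pairwiseDisjoint_largeCells (H : List SpacePolynomial) (T : Finset Space) (m : ℝ) :
    (largeCells H T m : Set (Finset Space)).PairwiseDisjoint id := by
  intro c hc c' hc' hne
  refine Finset.disjoint_left.2 fun x hx hx' => hne ?_
  rw [← cell_eq_of_mem_largeCells hc hx, cell_eq_of_mem_largeCells hc' hx']

open scoped Classical in
lemma biUnion_largeCells (hm : 0 ≤ m) :
    (largeCells H T m).biUnion id = T.filter fun x => m < (cell H T x).card := by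
  ext x
  simp only [Finset.mem_biUnion, id, Finset.mem_filter]
  constructor
  · rintro ⟨c, hc, hx⟩
    have hcell := cell_eq_of_mem_largeCells hc hx
    refine ⟨?_, hcell ▸ lt_card_of_mem_largeCells hc⟩
    rw [← hcell] at hx
    exact (mem_cell.1 hx).1
  · rintro ⟨hxT, hx⟩
    obtain ⟨y, hy⟩ := Finset.card_pos.1 (Nat.cast_pos.1 (hm.trans_lt hx))
    exact ⟨cell H T x, mem_largeCells.2 ⟨x, hxT, hx, rfl⟩, self_mem_cell hxT hy⟩

open scoped Classical in
lemma sum_filter_lt_card_cell {M : Type*} [AddCommMonoid M] (hm : 0 ≤ m) (F : Space → M) :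
    ∑ x ∈ T with m < (cell H T x).card, F x = ∑ c ∈ largeCells H T m, ∑ x ∈ c, F x := by
  rw [← biUnion_largeCells hm, Finset.sum_biUnion (pairwiseDisjoint_largeCells H T m)]
  rfl

lemma card_largeCells_mul_le (hm : 0 ≤ m) : (largeCells H T m).card * m ≤ T.card := by
  classical
  have hcard : ∑ c ∈ largeCells H T m, c.card ≤ T.card := by
    have hsum := sum_filter_lt_card_cell (H := H) (T := T) hm fun _ => 1
    simp only [Finset.sum_const, smul_eq_mul, mul_one] at hsum
    rw [← hsum]
    exact Finset.card_filter_le _ _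
  calc
    (largeCells H T m).card * m = ∑ _c ∈ largeCells H T m, m := by
      rw [Finset.sum_const, nsmul_eq_mul]
    _ ≤ ∑ c ∈ largeCells H T m, (c.card : ℝ) :=
      Finset.sum_le_sum fun c hc => (lt_card_of_mem_largeCells hc).le
    _ ≤ T.card := by exact_mod_cast hcard

lemma cellEnergy_le (hm : 0 ≤ m) :
    (cellEnergy H T : ℝ) ≤ ∑ c ∈ largeCells H T m, (c.card : ℝ) ^ 2 + T.card * m := by
  classical
  rw [cellEnergy, Nat.cast_sum, ← Finset.sum_filter_add_sum_filter_not T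
    fun x => m < (cell H T x).card, sum_filter_lt_card_cell hm]
  gcongr with c hc
  · rw [Finset.sum_congr rfl fun x hx => by rw [cell_eq_of_mem_largeCells hc hx],
      Finset.sum_const, nsmul_eq_mul, sq]
  · calc
      _ ≤ ∑ _x ∈ T with ¬ m < (cell H T _x).card, m :=
        Finset.sum_le_sum fun x hx => not_lt.1 (Finset.mem_filter.1 hx).2
      _ ≤ T.card * m := by
        rw [Finset.sum_const, nsmul_eq_mul]
        gcongr
        exact Finset.filter_subset _ _

lemma card_cell_cons (h : SpacePolynomial) (H : List SpacePolynomial) (T : Finset Space)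
    (x : Space) :
    (cell (h :: H) T x).card + ((cell H T x).filter fun z => eval x h * eval z h ≤ 0).card =
      (cell H T x).card := by
  classical
  rw [← Finset.card_filter_add_card_filter_not (s := cell H T x)
    fun z => eval x h * eval z h ≤ 0, add_comm]
  congr 2
  ext z
  simp only [mem_cell, Finset.mem_filter, SameCell, List.mem_cons, forall_eq_or_imp, not_le]
  tauto

lemma cellEnergy_cons_add_le (hm : 0 ≤ m) (h : SpacePolynomial) :
    cellEnergy (h :: H) T +
      ∑ c ∈ largeCells H T m, (weaklySeparatedPairs c fun y => eval y h).card ≤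
        cellEnergy H T := by
  classical
  let separated (x : Space) : ℕ := ((cell H T x).filter fun z => eval x h * eval z h ≤ 0).card
  have hseparated : ∑ c ∈ largeCells H T m, (weaklySeparatedPairs c fun y => eval y h).card =
      ∑ x ∈ T with m < (cell H T x).card, separated x := by
    rw [sum_filter_lt_card_cell hm]
    refine Finset.sum_congr rfl fun c hc => ?_
    rw [card_weaklySeparatedPairs]
    refine Finset.sum_congr rfl fun x hx => ?_
    rw [← Finset.card_filter]
    simp only [separated, cell_eq_of_mem_largeCells hc hx]
  calc
    _ ≤ cellEnergy (h :: H) T + ∑ x ∈ T, separated x := by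
      rw [hseparated]
      gcongr
      exact Finset.filter_subset _ _
    _ = cellEnergy H T := by
      rw [cellEnergy, cellEnergy, ← Finset.sum_add_distrib]
      exact Finset.sum_congr rfl fun x _ => card_cell_cons h H T x

lemma exists_cons_cellEnergy_le (H : List SpacePolynomial) {T : Finset Space} {r : ℕ}
    (hm : 0 ≤ m) (hr : ∀ n : ℕ, n * m ≤ T.card → n < (r + 1) ^ 3) :
    ∃ h : SpacePolynomial, h ≠ 0 ∧ h.totalDegree ≤ 3 * r ∧
      3 * (cellEnergy (h :: H) T : ℝ) ≤ 2 * cellEnergy H T + T.card * m := by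
  obtain ⟨h, hh, hdeg, hsep⟩ := exists_polynomial_sum_card_sq_le
    (fun c hc => Finset.card_pos.1 (Nat.cast_pos.1
      (hm.trans_lt (lt_card_of_mem_largeCells (H := H) (T := T) hc))))
    (pairwiseDisjoint_largeCells H T m) (hr _ (card_largeCells_mul_le hm))
  refine ⟨h, hh, hdeg, ?_⟩
  have hlarge := cellEnergy_le (H := H) (T := T) hm
  have hcons : (cellEnergy (h :: H) T : ℝ) + ∑ c ∈ largeCells H T m,
      ((weaklySeparatedPairs c fun y => eval y h).card : ℝ) ≤ cellEnergy H T := by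
    exact_mod_cast cellEnergy_cons_add_le hm h
  have hsep' : ∑ c ∈ largeCells H T m, (c.card : ℝ) ^ 2 ≤ 3 * ∑ c ∈ largeCells H T m,
      ((weaklySeparatedPairs c fun y => eval y h).card : ℝ) := by exact_mod_cast hsep
  linarith

/-- With `m` half the average of `(cell H T x).card`, one more polynomial multiplies the energy by
at most `5 / 6 < (53 / 50)⁻³`, at a cost proportional to the cube root of the number of large
cells. -/
lemma exists_cons_cellEnergy_mul_le {ρ : ℝ} (hρ : 0 < ρ)
    (hH : (T.card : ℝ) ^ 2 < cellEnergy H T * (ρ * (53 / 50)) ^ 3) :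
    ∃ h : SpacePolynomial, h ≠ 0 ∧ (h.totalDegree : ℝ) ≤ 3 * (67 / 50 * ρ) ∧
      (cellEnergy (h :: H) T : ℝ) * (53 / 50) ^ 3 ≤ cellEnergy H T := by
  have hE : (0 : ℝ) < cellEnergy H T :=
    pos_of_mul_pos_left ((sq_nonneg _).trans_lt hH) (by positivity)
  have hT : (0 : ℝ) < T.card := by
    refine Nat.cast_pos.2 (Finset.card_pos.2 (Finset.nonempty_iff_ne_empty.2 ?_))
    rintro rfl
    simp [cellEnergy] at hE
  let r := ⌊67 / 50 * ρ⌋₊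
  have hr : (r : ℝ) ≤ 67 / 50 * ρ := Nat.floor_le (by positivity)
  have hlt (n : ℕ) (hn : n * (cellEnergy H T / (2 * T.card) : ℝ) ≤ T.card) :
      n < (r + 1) ^ 3 := by
    have hnE : (n : ℝ) * cellEnergy H T < 2 * (ρ * (53 / 50)) ^ 3 * cellEnergy H T := by
      rw [mul_div_assoc', div_le_iff₀ (by positivity)] at hn
      nlinarith
    have hn' : (n : ℝ) < ((r : ℝ) + 1) ^ 3 := calc
      (n : ℝ) < 2 * (ρ * (53 / 50)) ^ 3 := lt_of_mul_lt_mul_right hnE hE.le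
      _ ≤ (67 / 50 * ρ) ^ 3 := by nlinarith [pow_pos hρ 3]
      _ ≤ _ := by
        gcongr
        exact (Nat.lt_floor_add_one _).le
    exact_mod_cast hn'
  obtain ⟨h, hh, hdeg, hle⟩ := exists_cons_cellEnergy_le H (by positivity) hlt
  refine ⟨h, hh, ?_, ?_⟩
  · calc
      (h.totalDegree : ℝ) ≤ 3 * r := by exact_mod_cast hdeg
      _ ≤ _ := by gcongr
  · have hhalf : (T.card : ℝ) * (cellEnergy H T / (2 * T.card)) = cellEnergy H T / 2 := by
      field_simp
    rw [hhalf] at hle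
    linarith

lemma exists_partition_pow (T : Finset Space) (k : ℕ) :
    ∃ H : List SpacePolynomial, (∀ h ∈ H, h ≠ 0) ∧
      (H.prod.totalDegree : ℝ) ≤ 70 * (53 / 50) ^ k ∧
      (cellEnergy H T : ℝ) * ((53 / 50) ^ k) ^ 3 ≤ (T.card : ℝ) ^ 2 := by
  induction k with
  | zero => exact ⟨[], by simp, by simp, by simp [cellEnergy_nil]⟩
  | succ k ih =>
    obtain ⟨H, hH, hdeg, hE⟩ := ih
    let ρ : ℝ := (53 / 50) ^ k
    have hρ : 0 < ρ := by positivity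
    rw [pow_succ]
    by_cases hdone : (cellEnergy H T : ℝ) * (ρ * (53 / 50)) ^ 3 ≤ (T.card : ℝ) ^ 2
    · exact ⟨H, hH, by linarith, hdone⟩
    obtain ⟨h, hh, hhdeg, hhE⟩ := exists_cons_cellEnergy_mul_le hρ (not_le.1 hdone)
    refine ⟨h :: H, List.forall_mem_cons.2 ⟨hh, hH⟩, ?_, ?_⟩
    · have hprod : ((h :: H).prod.totalDegree : ℝ) ≤ h.totalDegree + H.prod.totalDegree := by
        rw [List.prod_cons]
        exact_mod_cast totalDegree_mul h H.prod
      linarith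
    · calc
        _ = (cellEnergy (h :: H) T : ℝ) * (53 / 50) ^ 3 * ρ ^ 3 := by ring
        _ ≤ cellEnergy H T * ρ ^ 3 := by gcongr
        _ ≤ _ := hE

theorem exists_partition (T : Finset Space) {D : ℝ} (hD : 1 ≤ D) :
    ∃ H : List SpacePolynomial, (∀ h ∈ H, h ≠ 0) ∧ (H.prod.totalDegree : ℝ) ≤ 75 * D ∧
      (cellEnergy H T : ℝ) * D ^ 3 ≤ (T.card : ℝ) ^ 2 := by
  obtain ⟨k, hk, hDk⟩ := exists_nat_pow_near hD (y := 53 / 50) (by norm_num)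
  obtain ⟨H, hH, hdeg, hE⟩ := exists_partition_pow T (k + 1)
  refine ⟨H, hH, ?_, le_trans (by gcongr) hE⟩
  rw [pow_succ] at hdeg
  linarith

end Partitioning

/-! ### Lines crossing cells -/

lemma card_image_le_card_image {α β γ : Type*} [DecidableEq β] [DecidableEq γ] {s : Finset α}
    {f : α → β} {g : α → γ} (h : ∀ x ∈ s, ∀ y ∈ s, g x = g y → f x = f y) :
    (s.image f).card ≤ (s.image g).card := by
  refine Finset.card_le_card_of_forall_subsingleton (fun b c => ∃ x ∈ s, f x = b ∧ g x = c) ?_ ?_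
  · intro b hb
    obtain ⟨x, hx, rfl⟩ := Finset.mem_image.1 hb
    exact ⟨g x, Finset.mem_image_of_mem _ hx, x, hx, rfl, rfl⟩
  · rintro c - b ⟨-, x, hx, rfl, hxc⟩ b' ⟨-, y, hy, rfl, hyc⟩
    exact h x hx y hy (hxc.trans hyc.symm)

section Crossing

variable {H : List SpacePolynomial} {l : Line} {x y : Space}

lemma sameCell_self_iff : SameCell H x x ↔ eval x H.prod ≠ 0 := by
  rw [map_list_prod, Ne, List.prod_eq_zero_iff, List.mem_map]
  simp only [SameCell, mul_self_pos, not_exists, not_and, Ne]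

lemma exists_root_restrict_prod_of_not_sameCell (hxl : x ∈ l) (hyl : y ∈ l) (hx : SameCell H x x)
    (hy : SameCell H y y) (hlt : x 2 < y 2) (hxy : ¬ SameCell H x y) :
    ∃ s, x 2 ≤ s ∧ s < y 2 ∧ (l.restrict H.prod).eval s = 0 := by
  obtain ⟨h, hh, hle⟩ : ∃ h ∈ H, eval x h * eval y h ≤ 0 := by
    simpa only [SameCell, not_forall, not_lt, exists_prop] using hxy
  have hx0 : eval x h ≠ 0 := mul_self_pos.1 (hx h hh)
  have hy0 : eval y h ≠ 0 := mul_self_pos.1 (hy h hh)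
  have hsign : (0 : ℝ) ∈ Set.uIcc ((l.restrict h).eval (x 2)) ((l.restrict h).eval (y 2)) := by
    rw [Line.eval_restrict_of_mem hxl, Line.eval_restrict_of_mem hyl, Set.mem_uIcc]
    rcases lt_or_gt_of_ne hx0 with hneg | hpos
    · exact Or.inl ⟨hneg.le, nonneg_of_mul_nonpos_right hle hneg⟩
    · exact Or.inr ⟨nonpos_of_mul_nonpos_right hle hpos, hpos.le⟩
  obtain ⟨s, hs, hs0⟩ := intermediate_value_uIcc (l.restrict h).continuous.continuousOn hsign
  rw [Set.uIcc_of_le hlt.le] at hs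
  refine ⟨s, hs.1, lt_of_le_of_ne hs.2 ?_, ?_⟩
  · rintro rfl
    exact hy0 ((Line.eval_restrict_of_mem hyl h).symm.trans hs0)
  · exact Polynomial.eval_eq_zero_of_dvd_of_eval_eq_zero (map_dvd _ (List.dvd_prod hh)) hs0

-- The cell of a point of `l` is determined by the number of roots of `H.prod` on `l` below it.
lemma card_image_cell_le {S : Finset Space} (T : Finset Space)
    (hS : ∀ x ∈ S, x ∈ l ∧ SameCell H x x) :
    (S.image (cell H T)).card ≤ H.prod.totalDegree + 1 := by
  classical
  rcases S.eq_empty_or_nonempty with rfl | ⟨x₀, hx₀⟩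
  · simp
  have hne : l.restrict H.prod ≠ 0 := fun hzero =>
    sameCell_self_iff.1 (hS x₀ hx₀).2 (Line.InZeroSet.eval_eq_zero hzero (hS x₀ hx₀).1)
  let rootsBelow (x : Space) : Finset ℝ := (l.restrict H.prod).roots.toFinset.filter (· < x 2)
  have hsame : ∀ x ∈ S, ∀ y ∈ S, x 2 < y 2 → (rootsBelow x).card = (rootsBelow y).card →
      SameCell H x y := by
    intro x hx y hy hlt heq
    by_contra hxy
    obtain ⟨s, hxs, hsy, hs⟩ := exists_root_restrict_prod_of_not_sameCell (hS x hx).1 (hS y hy).1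
      (hS x hx).2 (hS y hy).2 hlt hxy
    have hsroot := Multiset.mem_toFinset.2 ((Polynomial.mem_roots hne).2 hs)
    refine (Finset.card_lt_card ?_).ne heq
    refine (Finset.ssubset_iff_of_subset ?_).2
      ⟨s, Finset.mem_filter.2 ⟨hsroot, hsy⟩, fun hmem => (Finset.mem_filter.1 hmem).2.not_ge hxs⟩
    exact Finset.monotone_filter_right _ fun t _ ht => ht.trans hlt
  have hcell : ∀ x ∈ S, ∀ y ∈ S, (rootsBelow x).card = (rootsBelow y).card →
      cell H T x = cell H T y := by
    intro x hx y hy heq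
    refine SameCell.cell_eq ?_ T
    rcases lt_trichotomy (x 2) (y 2) with hlt | hxy | hlt
    · exact hsame x hx y hy hlt heq
    · have hxy : x = y := by
        rw [Line.mem_iff_eq_point.1 (hS x hx).1, Line.mem_iff_eq_point.1 (hS y hy).1, hxy]
      exact hxy ▸ (hS x hx).2
    · exact (hsame y hy x hx hlt heq.symm).symm
  have hrootsBelow (x : Space) : (rootsBelow x).card ≤ H.prod.totalDegree :=
    (Finset.card_filter_le _ _).trans <| (Multiset.toFinset_card_le _).trans <|
      (Polynomial.card_roots' _).trans (l.natDegree_restrict_le _)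
  refine (card_image_le_card_image hcell).trans ?_
  rw [← Finset.card_range (H.prod.totalDegree + 1)]
  refine Finset.card_le_card (Finset.image_subset_iff.2 fun x _ => ?_)
  exact Finset.mem_range.2 (Nat.lt_succ_of_le (hrootsBelow x))

end Crossing

section RichPoints

variable {L : Finset Line} {T : Finset Space} {H : List SpacePolynomial} {k : ℕ}

/-- The lines of `L` through the point `x`. -/
def linesThrough (L : Finset Line) (x : Space) : Finset Line :=
  L.filter (x ∈ ·)

lemma mem_linesThrough {x : Space} {l : Line} : l ∈ linesThrough L x ↔ l ∈ L ∧ x ∈ l :=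
  Finset.mem_filter

lemma card_linesThrough_inter_le_one {x y : Space} (hxy : x ≠ y) :
    (linesThrough L x ∩ linesThrough L y).card ≤ 1 := by
  refine Finset.card_le_one.2 fun l hl m hm => ?_
  simp only [Finset.mem_inter, mem_linesThrough] at hl hm
  exact Line.eq_of_mem_of_mem hxy hl.1.2 hm.1.2 hl.2.2 hm.2.2

lemma card_mul_le_two_mul_card_biUnion_linesThrough {c : Finset Space}
    (hrich : ∀ x ∈ c, k ≤ (linesThrough L x).card) (hc : 2 * c.card ≤ k) :
    c.card * k ≤ 2 * (c.biUnion (linesThrough L)).card := by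
  induction c using Finset.induction_on with
  | empty => simp
  | insert x c hx ih =>
    rw [Finset.card_insert_of_notMem hx] at hc ⊢
    have hc_le := ih (fun y hy => hrich y (Finset.mem_insert_of_mem hy)) (by omega)
    have hunion := Finset.card_union_add_card_inter (linesThrough L x) (c.biUnion (linesThrough L))
    have hinter : (linesThrough L x ∩ c.biUnion (linesThrough L)).card ≤ c.card * 1 := by
      rw [Finset.inter_biUnion]
      exact Finset.card_biUnion_le_card_mul _ _ _ fun y hy =>
        card_linesThrough_inter_le_one (ne_of_mem_of_not_mem hy hx).symm
    have hx_rich := hrich x (Finset.mem_insert_self _ _)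
    rw [Finset.biUnion_insert, add_one_mul]
    omega

lemma sq_le_six_mul_card_biUnion_linesThrough {c : Finset Space} (hk : 2 ≤ k)
    (hrich : ∀ x ∈ c, k ≤ (linesThrough L x).card) (hc : k < 2 * c.card) :
    k ^ 2 ≤ 6 * (c.biUnion (linesThrough L)).card := by
  obtain ⟨c', hc', hcard⟩ := Finset.exists_subset_card_eq (s := c) (n := k / 2) (by omega)
  have hhalf := card_mul_le_two_mul_card_biUnion_linesThrough (fun x hx => hrich x (hc' hx))
    (by omega)
  have hmono := Finset.card_le_card (Finset.biUnion_subset_biUnion_of_subset_left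
    (linesThrough L) hc')
  calc
    k ^ 2 = k * k := sq k
    _ ≤ 3 * (k / 2) * k := Nat.mul_le_mul_right k (by omega)
    _ ≤ 6 * (c'.biUnion (linesThrough L)).card := by
      rw [hcard] at hhalf
      linarith
    _ ≤ _ := Nat.mul_le_mul_left 6 hmono

-- Double counting: a line meets at most `H.prod.totalDegree + 1` cells.
lemma sum_card_biUnion_linesThrough_le {K : Finset (Finset Space)}
    (hK : ∀ c ∈ K, ∃ x, c = cell H T x) :
    ∑ c ∈ K, (c.biUnion (linesThrough L)).card ≤ L.card * (H.prod.totalDegree + 1) := by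
  classical
  have hlines (c : Finset Space) :
      c.biUnion (linesThrough L) = L.filter fun l => ∃ y ∈ c, y ∈ l := by
    ext l
    simp only [Finset.mem_biUnion, mem_linesThrough, Finset.mem_filter]
    tauto
  have hcells (l : Line) : (K.filter fun c => ∃ y ∈ c, y ∈ l).card ≤ H.prod.totalDegree + 1 := by
    refine le_trans (Finset.card_le_card ?_) (card_image_cell_le (l := l) T
      (S := T.filter fun y => y ∈ l ∧ SameCell H y y) fun x hx => (Finset.mem_filter.1 hx).2)
    intro c hc
    obtain ⟨hcK, y, hy, hyl⟩ := Finset.mem_filter.1 hc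
    obtain ⟨x, rfl⟩ := hK c hcK
    obtain ⟨hyT, hxy⟩ := mem_cell.1 hy
    exact Finset.mem_image.2
      ⟨y, Finset.mem_filter.2 ⟨hyT, hyl, hxy.symm.trans hxy⟩, cell_eq_of_mem hy⟩
  calc
    ∑ c ∈ K, (c.biUnion (linesThrough L)).card
      = ∑ c ∈ K, (L.filter fun l => ∃ y ∈ c, y ∈ l).card := by simp only [hlines]
    _ = ∑ l ∈ L, (K.filter fun c => ∃ y ∈ c, y ∈ l).card :=
      Finset.sum_card_bipartiteAbove_eq_sum_card_bipartiteBelow fun c l => ∃ y ∈ c, y ∈ l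
    _ ≤ L.card * (H.prod.totalDegree + 1) := Finset.sum_le_card_nsmul _ _ _ fun l _ => hcells l

lemma card_mul_le_of_card_cell_le {T' : Finset Space}
    (hrich : ∀ x ∈ T, k ≤ (linesThrough L x).card)
    (hT' : ∀ x ∈ T', x ∈ T ∧ SameCell H x x ∧ 2 * (cell H T x).card ≤ k) :
    T'.card * k ≤ 2 * (L.card * (H.prod.totalDegree + 1)) := by
  classical
  have hcover : T' ⊆ (T'.image (cell H T)).biUnion id := fun x hx =>
    Finset.mem_biUnion.2 ⟨cell H T x, Finset.mem_image_of_mem _ hx,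
      mem_cell.2 ⟨(hT' x hx).1, (hT' x hx).2.1⟩⟩
  have hcells : ∀ c ∈ T'.image (cell H T), c.card * k ≤ 2 * (c.biUnion (linesThrough L)).card := by
    refine Finset.forall_mem_image.2 fun x hx => ?_
    exact card_mul_le_two_mul_card_biUnion_linesThrough (fun y hy => hrich y (mem_cell.1 hy).1)
      (hT' x hx).2.2
  calc
    T'.card * k ≤ (∑ c ∈ T'.image (cell H T), c.card) * k :=
      Nat.mul_le_mul_right k ((Finset.card_le_card hcover).trans Finset.card_biUnion_le)
    _ ≤ ∑ c ∈ T'.image (cell H T), 2 * (c.biUnion (linesThrough L)).card := by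
      rw [Finset.sum_mul]
      exact Finset.sum_le_sum hcells
    _ ≤ 2 * (L.card * (H.prod.totalDegree + 1)) := by
      rw [← Finset.mul_sum]
      refine Nat.mul_le_mul_left 2 (sum_card_biUnion_linesThrough_le (T := T) ?_)
      exact Finset.forall_mem_image.2 fun x _ => ⟨x, rfl⟩

lemma card_largeCells_mul_sq_le (hk : 2 ≤ k) (hrich : ∀ x ∈ T, k ≤ (linesThrough L x).card) :
    (largeCells H T (k / 2)).card * k ^ 2 ≤ 6 * (L.card * (H.prod.totalDegree + 1)) := by
  have hcells : ∀ c ∈ largeCells H T (k / 2), k ^ 2 ≤ 6 * (c.biUnion (linesThrough L)).card := by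
    intro c hc
    obtain ⟨x, -, hx, rfl⟩ := mem_largeCells.1 hc
    rw [div_lt_iff₀' two_pos] at hx
    exact sq_le_six_mul_card_biUnion_linesThrough hk (fun y hy => hrich y (mem_cell.1 hy).1)
      (by exact_mod_cast hx)
  calc
    (largeCells H T (k / 2)).card * k ^ 2
      ≤ ∑ c ∈ largeCells H T (k / 2), 6 * (c.biUnion (linesThrough L)).card :=
        Finset.card_nsmul_le_sum _ _ _ hcells
    _ ≤ 6 * (L.card * (H.prod.totalDegree + 1)) := by
      rw [← Finset.mul_sum]
      refine Nat.mul_le_mul_left 6 (sum_card_biUnion_linesThrough_le (T := T) fun c hc => ?_)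
      obtain ⟨x, -, -, hx⟩ := mem_largeCells.1 hc
      exact ⟨x, hx.symm⟩

lemma sum_card_sq_largeCells_le {m : ℝ} (hm : 0 ≤ m) :
    ∑ c ∈ largeCells H T m, c.card ^ 2 ≤ cellEnergy H T := by
  classical
  calc
    ∑ c ∈ largeCells H T m, c.card ^ 2
      = ∑ c ∈ largeCells H T m, ∑ x ∈ c, (cell H T x).card := by
        refine Finset.sum_congr rfl fun c hc => ?_
        rw [Finset.sum_congr rfl fun x hx => by rw [cell_eq_of_mem_largeCells hc hx],
          Finset.sum_const, smul_eq_mul, sq]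
    _ = ∑ x ∈ T with m < (cell H T x).card, (cell H T x).card :=
      (sum_filter_lt_card_cell hm _).symm
    _ ≤ cellEnergy H T := Finset.sum_le_sum_of_subset (Finset.filter_subset _ _)

open scoped Classical in
lemma card_sq_mul_sq_le_of_lt_card_cell (hk : 2 ≤ k)
    (hrich : ∀ x ∈ T, k ≤ (linesThrough L x).card) :
    (T.filter fun x => (k / 2 : ℝ) < (cell H T x).card).card ^ 2 * k ^ 2
      ≤ 6 * (L.card * (H.prod.totalDegree + 1)) * cellEnergy H T := by
  have hm : (0 : ℝ) ≤ k / 2 := by positivity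
  have hcard : (T.filter fun x => (k / 2 : ℝ) < (cell H T x).card).card
      = ∑ c ∈ largeCells H T (k / 2), c.card := by
    simpa only [Finset.card_eq_sum_ones] using
      sum_filter_lt_card_cell (H := H) (T := T) hm fun _ => 1
  calc
    (T.filter fun x => (k / 2 : ℝ) < (cell H T x).card).card ^ 2 * k ^ 2
      ≤ ((largeCells H T (k / 2)).card * ∑ c ∈ largeCells H T (k / 2), c.card ^ 2) * k ^ 2 := by
        rw [hcard]
        exact Nat.mul_le_mul_right _ sq_sum_le_card_mul_sum_sq
    _ = ((largeCells H T (k / 2)).card * k ^ 2) * ∑ c ∈ largeCells H T (k / 2), c.card ^ 2 := by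
      ring
    _ ≤ 6 * (L.card * (H.prod.totalDegree + 1)) * cellEnergy H T :=
      Nat.mul_le_mul (card_largeCells_mul_sq_le hk hrich) (sum_card_sq_largeCells_le hm)

end RichPoints

/-! ### Lines on planes and quadrics -/

/-- No irreducible surface of degree at most two contains more than `q` lines of `L`. -/
def FewLinesOnQuadrics (L : Finset Line) (q : ℕ) : Prop :=
  ∀ g : SpacePolynomial, Prime g → g.totalDegree ≤ 2 →
    ∀ M ⊆ L, (∀ l ∈ M, l.InZeroSet g) → M.card ≤ q

lemma FewLinesOnQuadrics.mono {L L' : Finset Line} {q : ℕ} (hL : FewLinesOnQuadrics L q)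
    (hsub : L' ⊆ L) : FewLinesOnQuadrics L' q :=
  fun g hg hdeg M hM => hL g hg hdeg M (hM.trans hsub)

/-- The irreducible factors of `f` of degree at most two. -/
def quadricFactors (f : SpacePolynomial) : Finset SpacePolynomial :=
  (primeFactors f).filter (totalDegree · ≤ 2)

lemma mem_quadricFactors {f p : SpacePolynomial} :
    p ∈ quadricFactors f ↔ p ∈ primeFactors f ∧ p.totalDegree ≤ 2 :=
  Finset.mem_filter

/-- `l` lies in the zero set of an irreducible factor of `f` of degree at most two. -/
def Line.InQuadricFactor (l : Line) (f : SpacePolynomial) : Prop :=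
  ∃ p ∈ quadricFactors f, l.InZeroSet p

/-- `x` lies on the zero set of an irreducible factor of `f` of degree at most two that does not
contain `l`. -/
def CrossesQuadricFactor (f : SpacePolynomial) (x : Space) (l : Line) : Prop :=
  ∃ p ∈ quadricFactors f, eval x p = 0 ∧ ¬ l.InZeroSet p

section QuadricFactors

variable {f : SpacePolynomial} {L : Finset Line} {S : Finset Space} {j q : ℕ} {x : Space}
  {l m : Line}

lemma inZeroSet_of_not_crossesQuadricFactor {p : SpacePolynomial} (hp : p ∈ quadricFactors f)
    (hl : l.InZeroSet p) (hxl : x ∈ l) (hm : ¬ CrossesQuadricFactor f x m) : m.InZeroSet p := by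
  by_contra hmp
  exact hm ⟨p, hp, hl.eval_eq_zero hxl, hmp⟩

lemma Line.InQuadricFactor.of_not_crossesQuadricFactor (hl : l.InQuadricFactor f) (hxl : x ∈ l)
    (hm : ¬ CrossesQuadricFactor f x m) : m.InQuadricFactor f := by
  obtain ⟨p, hp, hlp⟩ := hl
  exact ⟨p, hp, inZeroSet_of_not_crossesQuadricFactor hp hlp hxl hm⟩

open scoped Classical in
/-- The lines of `L` through `x` that cross a factor of `f` of degree at most two at `x`. -/
def crossingLinesThrough (L : Finset Line) (f : SpacePolynomial) (x : Space) : Finset Line :=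
  (linesThrough L x).filter (CrossesQuadricFactor f x)

open scoped Classical in
/-- The lines of `L` through `x` contained in a factor of `f` of degree at most two, and in every
such factor vanishing at `x`. -/
def containedLinesThrough (L : Finset Line) (f : SpacePolynomial) (x : Space) : Finset Line :=
  (linesThrough L x).filter fun l => l.InQuadricFactor f ∧ ¬ CrossesQuadricFactor f x l

lemma mem_crossingLinesThrough :
    l ∈ crossingLinesThrough L f x ↔ (l ∈ L ∧ x ∈ l) ∧ CrossesQuadricFactor f x l := by
  classical rw [crossingLinesThrough, Finset.mem_filter, mem_linesThrough]

lemma mem_containedLinesThrough :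
    l ∈ containedLinesThrough L f x ↔
      (l ∈ L ∧ x ∈ l) ∧ l.InQuadricFactor f ∧ ¬ CrossesQuadricFactor f x l := by
  classical rw [containedLinesThrough, Finset.mem_filter, mem_linesThrough]

lemma card_mul_le_of_le_card_crossingLinesThrough
    (hS : ∀ x ∈ S, j ≤ (crossingLinesThrough L f x).card) :
    S.card * j ≤ L.card * f.totalDegree := by
  classical
  refine Finset.card_mul_le_card_mul (fun x l => x ∈ l ∧ CrossesQuadricFactor f x l)
    (fun x hx => (hS x hx).trans (Finset.card_le_card fun l hl => ?_)) fun l _ => ?_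
  · obtain ⟨⟨hl, hxl⟩, hcross⟩ := mem_crossingLinesThrough.1 hl
    exact Finset.mem_filter.2 ⟨hl, hxl, hcross⟩
  · have hcover : S.filter (fun x => x ∈ l ∧ CrossesQuadricFactor f x l) ⊆
        ((primeFactors f).filter fun p => ¬ l.InZeroSet p).biUnion fun p =>
          S.filter fun x => x ∈ l ∧ eval x p = 0 := by
      intro x hx
      obtain ⟨hxS, hxl, p, hp, hxp, hlp⟩ := Finset.mem_filter.1 hx
      exact Finset.mem_biUnion.2 ⟨p, Finset.mem_filter.2 ⟨(mem_quadricFactors.1 hp).1, hlp⟩,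
        Finset.mem_filter.2 ⟨hxS, hxl, hxp⟩⟩
    calc
      (S.filter fun x => x ∈ l ∧ CrossesQuadricFactor f x l).card
        ≤ ∑ p ∈ primeFactors f with ¬ l.InZeroSet p,
            (S.filter fun x => x ∈ l ∧ eval x p = 0).card :=
          (Finset.card_le_card hcover).trans Finset.card_biUnion_le
      _ ≤ ∑ p ∈ primeFactors f with ¬ l.InZeroSet p, p.totalDegree :=
        Finset.sum_le_sum fun p hp => Line.card_le_totalDegree_of_not_inZeroSet
          (Finset.mem_filter.1 hp).2 _ fun x hx => (Finset.mem_filter.1 hx).2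
      _ ≤ ∑ p ∈ primeFactors f, p.totalDegree :=
        Finset.sum_le_sum_of_subset (Finset.filter_subset _ _)
      _ ≤ f.totalDegree := sum_totalDegree_primeFactors_le f

-- For fixed `l`, all `m` in a pair lie on any one quadric factor through `l`.
lemma card_biUnion_offDiag_containedLinesThrough_le (hL : FewLinesOnQuadrics L q) :
    (S.biUnion fun x => (containedLinesThrough L f x).offDiag).card ≤ q * L.card := by
  have hpair : ∀ lm ∈ S.biUnion fun x => (containedLinesThrough L f x).offDiag,
      ∃ x, lm.1 ∈ containedLinesThrough L f x ∧ lm.2 ∈ containedLinesThrough L f x := by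
    intro lm hlm
    obtain ⟨x, -, hx⟩ := Finset.mem_biUnion.1 hlm
    exact ⟨x, (Finset.mem_offDiag.1 hx).1, (Finset.mem_offDiag.1 hx).2.1⟩
  refine Finset.card_le_mul_card_image_of_maps_to (f := Prod.fst) (fun lm hlm => ?_) q fun l _ => ?_
  · obtain ⟨x, hl, -⟩ := hpair lm hlm
    exact (mem_containedLinesThrough.1 hl).1.1
  set fiber := (S.biUnion fun x => (containedLinesThrough L f x).offDiag).filter (·.1 = l)
  have hfiber : fiber.card = (fiber.image Prod.snd).card := by
    refine (Finset.card_image_of_injOn fun a ha b hb hab => Prod.ext ?_ hab).symm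
    exact (Finset.mem_filter.1 ha).2.trans (Finset.mem_filter.1 hb).2.symm
  rcases fiber.eq_empty_or_nonempty with hempty | ⟨lm₀, hlm₀⟩
  · simp [hempty]
  obtain ⟨hpair₀, rfl⟩ := Finset.mem_filter.1 hlm₀
  obtain ⟨x₀, hl₀, -⟩ := hpair lm₀ hpair₀
  obtain ⟨-, ⟨p, hp, hlp⟩, -⟩ := mem_containedLinesThrough.1 hl₀
  have hsnd : ∀ m ∈ fiber.image Prod.snd, m ∈ L ∧ m.InZeroSet p := by
    refine Finset.forall_mem_image.2 fun lm hlm => ?_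
    obtain ⟨hlm, hfst⟩ := Finset.mem_filter.1 hlm
    obtain ⟨x, hl, hm⟩ := hpair lm hlm
    have hxl := (mem_containedLinesThrough.1 hl).1.2
    obtain ⟨⟨hmL, -⟩, -, hcross⟩ := mem_containedLinesThrough.1 hm
    exact ⟨hmL, inZeroSet_of_not_crossesQuadricFactor hp hlp (hfst ▸ hxl) hcross⟩
  rw [hfiber]
  obtain ⟨hprime, hdeg⟩ := mem_quadricFactors.1 hp
  exact hL p (prime_of_mem_primeFactors hprime) hdeg _ (fun m hm => (hsnd m hm).1)
    fun m hm => (hsnd m hm).2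

lemma card_mul_le_of_le_card_containedLinesThrough (hL : FewLinesOnQuadrics L q)
    (hS : ∀ x ∈ S, j ≤ (containedLinesThrough L f x).card) :
    S.card * (j * (j - 1)) ≤ L.card * q := by
  have hdisjoint : (S : Set Space).PairwiseDisjoint
      fun x => (containedLinesThrough L f x).offDiag := by
    intro x _ y _ hxy
    refine Finset.disjoint_left.2 fun lm hlm hlm' => ?_
    simp only [Finset.mem_offDiag, mem_containedLinesThrough] at hlm hlm'
    exact hlm.2.2 (Line.eq_of_mem_of_mem hxy hlm.1.1.2 hlm.2.1.1.2 hlm'.1.1.2 hlm'.2.1.1.2)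
  calc
    S.card * (j * (j - 1)) ≤ ∑ x ∈ S, (containedLinesThrough L f x).offDiag.card := by
      refine Finset.card_nsmul_le_sum _ _ _ fun x hx => ?_
      rw [Finset.offDiag_card, ← Nat.mul_sub_one]
      exact Nat.mul_le_mul (hS x hx) (Nat.sub_le_sub_right (hS x hx) 1)
    _ = (S.biUnion fun x => (containedLinesThrough L f x).offDiag).card :=
      (Finset.card_biUnion hdisjoint).symm
    _ ≤ q * L.card := card_biUnion_offDiag_containedLinesThrough_le hL
    _ = L.card * q := mul_comm _ _

lemma card_mul_le_of_not_inZeroSet (hL : ∀ l ∈ L, ¬ l.InZeroSet f)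
    (hS : ∀ x ∈ S, eval x f = 0 ∧ j ≤ (linesThrough L x).card) :
    S.card * j ≤ L.card * f.totalDegree := by
  refine Finset.card_mul_le_card_mul (fun x l => x ∈ l) (fun x hx => (hS x hx).2) fun l hl => ?_
  refine Line.card_le_totalDegree_of_not_inZeroSet (hL l hl) _ fun x hx => ?_
  obtain ⟨hxS, hxl⟩ := Finset.mem_filter.1 hx
  exact ⟨hxl, (hS x hxS).1⟩

end QuadricFactors

/-! ### Lines on the remaining components -/

section ResidualLines

variable {f : SpacePolynomial} {L : Finset Line} {S : Finset Space} {l : Line}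

open scoped Classical in
/-- The lines of `L` not contained in the zero set of `f`. -/
def linesOff (L : Finset Line) (f : SpacePolynomial) : Finset Line :=
  L.filter fun l => ¬ l.InZeroSet f

open scoped Classical in
/-- The points of `S` at which `l` meets another line of the zero set of `f`. -/
def doublePoints (f : SpacePolynomial) (S : Finset Space) (l : Line) : Finset Space :=
  S.filter (IsDoublePoint f l)

open scoped Classical in
/-- The lines of `L` in the zero set of `f`, but in none of its components of degree at most two,
that have more than `12 * f.totalDegree` double points. -/
def doublyRichLines (L : Finset Line) (f : SpacePolynomial) (S : Finset Space) : Finset Line :=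
  L.filter fun l => l.InZeroSet f ∧ ¬ l.InQuadricFactor f ∧
    12 * f.totalDegree < (doublePoints f S l).card

open scoped Classical in
/-- The lines of `L` in the zero set of `f` that have at most `12 * f.totalDegree` double
points. -/
def doublyPoorLines (L : Finset Line) (f : SpacePolynomial) (S : Finset Space) : Finset Line :=
  L.filter fun l => l.InZeroSet f ∧ (doublePoints f S l).card ≤ 12 * f.totalDegree

lemma mem_linesOff : l ∈ linesOff L f ↔ l ∈ L ∧ ¬ l.InZeroSet f := by
  classical exact Finset.mem_filter

lemma mem_doublyRichLines : l ∈ doublyRichLines L f S ↔ l ∈ L ∧ l.InZeroSet f ∧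
    ¬ l.InQuadricFactor f ∧ 12 * f.totalDegree < (doublePoints f S l).card := by
  classical exact Finset.mem_filter

lemma mem_doublyPoorLines : l ∈ doublyPoorLines L f S ↔ l ∈ L ∧ l.InZeroSet f ∧
    (doublePoints f S l).card ≤ 12 * f.totalDegree := by
  classical exact Finset.mem_filter

lemma mem_linesOff_or_mem_doublyRichLines_or_mem_doublyPoorLines (S : Finset Space) (hl : l ∈ L)
    (hquadric : ¬ l.InQuadricFactor f) :
    l ∈ linesOff L f ∨ l ∈ doublyRichLines L f S ∨ l ∈ doublyPoorLines L f S := by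
  simp only [mem_linesOff, mem_doublyRichLines, mem_doublyPoorLines, ← not_lt]
  tauto

lemma card_doublyRichLines_le (hf : f ≠ 0) :
    (doublyRichLines L f S).card ≤ 72 * f.totalDegree ^ 2 := by
  classical
  refine card_le_of_isDoublePoint hf (fun l hl => (mem_doublyRichLines.1 hl).2.1) ?_ ?_
  · intro l hl p hp hdeg hlp
    exact (mem_doublyRichLines.1 hl).2.2.1 ⟨p, mem_quadricFactors.2 ⟨hp, hdeg⟩, hlp⟩
  · exact fun l hl => ⟨doublePoints f S l, (mem_doublyRichLines.1 hl).2.2.2,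
      fun x hx => (Finset.mem_filter.1 hx).2⟩

open scoped Classical in
/-- The points of `S` that lie on the zero set of `f` and on a line of `L` not contained in it. -/
def crossingPoints (L : Finset Line) (f : SpacePolynomial) (S : Finset Space) : Finset Space :=
  S.filter fun x => eval x f = 0 ∧ ∃ m ∈ linesOff L f, x ∈ m

lemma card_crossingPoints_le :
    (crossingPoints L f S).card ≤ (linesOff L f).card * f.totalDegree := by
  classical
  rw [← mul_one (crossingPoints L f S).card]
  refine card_mul_le_of_not_inZeroSet (fun l hl => (mem_linesOff.1 hl).2) fun x hx => ?_
  obtain ⟨-, hxf, m, hm, hxm⟩ := Finset.mem_filter.1 hx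
  exact ⟨hxf, Finset.card_pos.2 ⟨m, mem_linesThrough.2 ⟨hm, hxm⟩⟩⟩

open scoped Classical in
lemma card_le_card_doublePoints_add (hS : ∀ x ∈ S, 2 ≤ (linesThrough L x).card)
    (hl : l.InZeroSet f) :
    (S.filter (· ∈ l)).card ≤ (doublePoints f S l).card
      + ((crossingPoints L f S).filter fun x => x ∈ l ∧ ¬ IsDoublePoint f l x).card := by
  refine le_trans (Finset.card_le_card fun x hx => ?_) (Finset.card_union_le _ _)
  obtain ⟨hxS, hxl⟩ := Finset.mem_filter.1 hx
  by_cases hdouble : IsDoublePoint f l x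
  · exact Finset.mem_union_left _ (Finset.mem_filter.2 ⟨hxS, hdouble⟩)
  obtain ⟨m, hm, hml⟩ := Finset.exists_mem_ne (one_lt_two.trans_le (hS x hxS)) l
  obtain ⟨hmL, hxm⟩ := mem_linesThrough.1 hm
  have hmf : ¬ m.InZeroSet f := fun hmf => hdouble ⟨hxl, m, hml, hxm, hmf⟩
  have hcrossing : x ∈ crossingPoints L f S :=
    Finset.mem_filter.2 ⟨hxS, hl.eval_eq_zero hxl, m, mem_linesOff.2 ⟨hmL, hmf⟩, hxm⟩
  exact Finset.mem_union_right _ (Finset.mem_filter.2 ⟨hcrossing, hxl, hdouble⟩)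

-- Each crossing point is a non-double point of at most one line of the zero set.
lemma card_doublyPoorLines_mul_le {a : ℕ} (hS : ∀ x ∈ S, 2 ≤ (linesThrough L x).card)
    (hrich : ∀ l ∈ L, a + 12 * f.totalDegree ≤ (S.filter (· ∈ l)).card) :
    (doublyPoorLines L f S).card * a ≤ (linesOff L f).card * f.totalDegree := by
  classical
  refine le_trans ?_ (card_crossingPoints_le (S := S))
  rw [← mul_one (crossingPoints L f S).card]
  refine Finset.card_mul_le_card_mul (fun l x => x ∈ l ∧ ¬ IsDoublePoint f l x) ?_ ?_
  · intro l hl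
    obtain ⟨hlL, hlf, hpoor⟩ := mem_doublyPoorLines.1 hl
    have hsplit := card_le_card_doublePoints_add hS hlf
    have hl_rich := hrich l hlL
    rw [Finset.bipartiteAbove]
    omega
  · intro x _
    refine Finset.card_le_one.2 fun l hl m hm => ?_
    obtain ⟨-, hxl, hdouble⟩ := Finset.mem_filter.1 hl
    obtain ⟨hm, hxm, -⟩ := Finset.mem_filter.1 hm
    by_contra hne
    exact hdouble ⟨hxl, m, Ne.symm hne, hxm, (mem_doublyPoorLines.1 hm).2.1⟩

end ResidualLines

/-! ### Points on two lines -/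

section Sampling

variable {L M : Finset Line} {S : Finset Space} {l m : Line} {d : ℕ}

open scoped Classical in
/-- The points of `S` at which `l` meets a line of `M`. -/
def meetingPoints (S : Finset Space) (M : Finset Line) (l : Line) : Finset Space :=
  S.filter fun x => x ∈ l ∧ ∃ m ∈ M, x ∈ m

lemma mem_meetingPoints {x : Space} :
    x ∈ meetingPoints S M l ↔ x ∈ S ∧ x ∈ l ∧ ∃ m ∈ M, x ∈ m := by
  classical exact Finset.mem_filter

lemma meetingPoints_subset_insert : meetingPoints S M l ⊆ meetingPoints S (insert m M) l := by
  intro x hx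
  obtain ⟨hxS, hxl, m', hm', hxm'⟩ := mem_meetingPoints.1 hx
  exact mem_meetingPoints.2 ⟨hxS, hxl, m', Finset.mem_insert_of_mem hm', hxm'⟩

/-- `l` and `m` meet at a point of `S` that lies on no line of `M`. -/
def MeetsAfresh (S : Finset Space) (M : Finset Line) (l m : Line) : Prop :=
  ∃ x ∈ S, x ∈ l ∧ x ∈ m ∧ ¬ ∃ m' ∈ M, x ∈ m'

lemma card_meetingPoints_lt_insert (hlm : MeetsAfresh S M l m) :
    (meetingPoints S M l).card < (meetingPoints S (insert m M) l).card := by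
  obtain ⟨x, hxS, hxl, hxm, hxM⟩ := hlm
  refine Finset.card_lt_card
    ((Finset.ssubset_iff_of_subset meetingPoints_subset_insert).2 ⟨x, ?_, ?_⟩)
  · exact mem_meetingPoints.2 ⟨hxS, hxl, m, Finset.mem_insert_self _ _, hxm⟩
  · exact fun hx => hxM (mem_meetingPoints.1 hx).2.2

/-- The number of meeting points of lines of `L` with lines of `M`, where no line of `L` is credited
with more than `d + 1` of them. -/
def truncatedMeetings (L : Finset Line) (S : Finset Space) (d : ℕ) (M : Finset Line) : ℕ :=
  ∑ l ∈ L, min (meetingPoints S M l).card (d + 1)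

lemma truncatedMeetings_le : truncatedMeetings L S d M ≤ L.card * (d + 1) :=
  Finset.sum_le_card_nsmul _ _ _ fun _ _ => min_le_right _ _

/-- The lines of `L` that meet lines of `M` in at most `d` points of `S`. -/
def linesMissing (L : Finset Line) (S : Finset Space) (d : ℕ) (M : Finset Line) : Finset Line :=
  L.filter fun l => (meetingPoints S M l).card ≤ d

open scoped Classical in
lemma truncatedMeetings_add_card_le :
    truncatedMeetings L S d M + ((linesMissing L S d M).filter (MeetsAfresh S M · m)).card
      ≤ truncatedMeetings L S d (insert m M) := by
  have hcard : ((linesMissing L S d M).filter (MeetsAfresh S M · m)).card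
      = ∑ l ∈ L, if (meetingPoints S M l).card ≤ d ∧ MeetsAfresh S M l m then 1 else 0 := by
    rw [linesMissing, Finset.filter_filter, Finset.card_filter]
  rw [hcard, truncatedMeetings, ← Finset.sum_add_distrib]
  refine Finset.sum_le_sum fun l _ => ?_
  have hmono : (meetingPoints S M l).card ≤ (meetingPoints S (insert m M) l).card :=
    Finset.card_le_card meetingPoints_subset_insert
  split_ifs with hmeets
  · have hlt := card_meetingPoints_lt_insert hmeets.2
    omega
  · omega

open scoped Classical in
-- Two points of `l` cannot share their second line, so picking one is injective.
lemma le_card_filter_meetsAfresh {a : ℕ} (hS : ∀ x ∈ S, 2 ≤ (linesThrough L x).card)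
    (hl : l ∈ linesMissing L S d M) (hrich : a + d ≤ (S.filter (· ∈ l)).card) :
    a ≤ (L.filter (MeetsAfresh S M l)).card := by
  let fresh := S.filter fun x => x ∈ l ∧ ¬ ∃ m ∈ M, x ∈ m
  have hfresh : a ≤ fresh.card := by
    have hsplit := Finset.card_filter_add_card_filter_not (s := S.filter (· ∈ l))
      fun x => ∃ m ∈ M, x ∈ m
    simp only [Finset.filter_filter] at hsplit
    have hfew : (S.filter fun x => x ∈ l ∧ ∃ m ∈ M, x ∈ m).card ≤ d := (Finset.mem_filter.1 hl).2
    simp only [fresh]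
    omega
  have hother : ∀ x ∈ fresh, ∃ m, m ∈ linesThrough L x ∧ m ≠ l := fun x hx =>
    Finset.exists_mem_ne (one_lt_two.trans_le (hS x (Finset.mem_filter.1 hx).1)) l
  have : Nonempty Line := ⟨l⟩
  choose! other hother_mem hother_ne using hother
  refine hfresh.trans (Finset.card_le_card_of_injOn other (fun x hx => ?_) fun x hx y hy hxy => ?_)
  · obtain ⟨hxS, hxl, hxM⟩ := Finset.mem_filter.1 hx
    obtain ⟨hmL, hxm⟩ := mem_linesThrough.1 (hother_mem x hx)
    exact Finset.mem_filter.2 ⟨hmL, x, hxS, hxl, hxm, hxM⟩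
  · by_contra hne
    have hxm := (mem_linesThrough.1 (hother_mem x hx)).2
    have hym := (mem_linesThrough.1 (hother_mem y hy)).2
    rw [← hxy] at hym
    exact hother_ne x hx (Line.eq_of_mem_of_mem hne hxm (Finset.mem_filter.1 hx).2.1 hym
      (Finset.mem_filter.1 hy).2.1)

-- A deterministic substitute for random sampling: take `M` maximising the truncated number of
-- meetings minus `w` per line.
lemma exists_subset_card_linesMissing_mul_le {a w : ℕ}
    (hS : ∀ x ∈ S, 2 ≤ (linesThrough L x).card)
    (hrich : ∀ l ∈ L, a + d ≤ (S.filter (· ∈ l)).card) :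
    ∃ M ⊆ L, w * M.card ≤ L.card * (d + 1) ∧ (linesMissing L S d M).card * a ≤ L.card * w := by
  classical
  obtain ⟨M, hM, hmax⟩ := Finset.exists_max_image L.powerset
    (fun M => (truncatedMeetings L S d M : ℤ) - w * M.card) ⟨∅, Finset.empty_mem_powerset L⟩
  have hML := Finset.mem_powerset.1 hM
  refine ⟨M, hML, ?_, ?_⟩
  · have hempty := hmax ∅ (Finset.empty_mem_powerset L)
    have hle := truncatedMeetings_le (L := L) (S := S) (d := d) (M := M)
    rw [Finset.card_empty] at hempty
    zify at hle ⊢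
    push_cast at hempty
    linarith [Int.natCast_nonneg (truncatedMeetings L S d ∅)]
  · refine Finset.card_mul_le_card_mul (MeetsAfresh S M)
      (fun l hl => le_card_filter_meetsAfresh hS hl (hrich l (Finset.mem_filter.1 hl).1))
      fun m hm => ?_
    have hinsert := hmax (insert m M) (Finset.mem_powerset.2 (Finset.insert_subset hm hML))
    have hcard : (w : ℤ) * (insert m M).card ≤ w * (M.card + 1) := by
      exact_mod_cast Nat.mul_le_mul_left w (Finset.card_insert_le m M)
    have hgain := truncatedMeetings_add_card_le (L := L) (S := S) (d := d) (M := M) (m := m)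
    rw [Finset.bipartiteBelow]
    zify at hgain ⊢
    linarith

end Sampling

section TwoRichPoints

variable {L : Finset Line} {S : Finset Space} {N : ℕ}

lemma exists_sampling_degree {n : ℕ} (hN : 1 ≤ N) (hn : n ≤ N ^ 2) :
    ∃ e, 9 * n < (e + 1) * (1000 * N) ∧ 3 * e ≤ N ∧ 576 * (3 * e) ^ 2 ≤ n := by
  obtain ⟨e, he⟩ : ∃ e, e = 9 * n / (1000 * N) := ⟨_, rfl⟩
  have hle : e * (1000 * N) ≤ 9 * n := he ▸ Nat.div_mul_le_self _ _
  refine ⟨e, ?_, ?_, ?_⟩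
  · have hlt := Nat.lt_div_mul_add (a := 9 * n) (b := 1000 * N) (by omega)
    rwa [← he, ← add_one_mul] at hlt
  · have hcancel : e * 1000 * N ≤ 9 * N * N := by nlinarith
    have := Nat.le_of_mul_le_mul_right hcancel hN
    omega
  · have hsq : e ^ 2 * 1000000 * N ^ 2 ≤ 81 * n * N ^ 2 := calc
      e ^ 2 * 1000000 * N ^ 2 = (e * (1000 * N)) * (e * (1000 * N)) := by ring
      _ ≤ (9 * n) * (9 * n) := Nat.mul_le_mul hle hle
      _ = 81 * n * n := by ring
      _ ≤ 81 * n * N ^ 2 := Nat.mul_le_mul_left _ hn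
    have := Nat.le_of_mul_le_mul_right hsq (by positivity)
    nlinarith

lemma exists_polynomial_card_linesOff_le (hN : 1 ≤ N) (hLN : L.card ≤ N ^ 2)
    (hS : ∀ x ∈ S, 2 ≤ (linesThrough L x).card)
    (hrich : ∀ l ∈ L, 16000 * N < (S.filter (· ∈ l)).card) :
    ∃ f : SpacePolynomial, f ≠ 0 ∧ f.totalDegree ≤ N ∧ 576 * f.totalDegree ^ 2 ≤ L.card ∧
      8 * (linesOff L f).card ≤ L.card := by
  obtain ⟨e, he, heN, heL⟩ := exists_sampling_degree hN hLN
  obtain ⟨M, -, hMcard, hmissing⟩ := exists_subset_card_linesMissing_mul_le (d := 3 * e)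
    (a := 8000 * N) (w := 1000 * N) hS fun l hl => by
      have := hrich l hl
      omega
  have hcount : M.card * (3 * e + 1) < (e + 1) ^ 3 := by
    refine Nat.lt_of_mul_lt_mul_left (a := 1000 * N) ?_
    calc
      1000 * N * (M.card * (3 * e + 1)) = 1000 * N * M.card * (3 * e + 1) := by ring
      _ ≤ L.card * (3 * e + 1) * (3 * e + 1) := Nat.mul_le_mul_right _ hMcard
      _ ≤ 9 * L.card * (e + 1) ^ 2 := by nlinarith
      _ < (e + 1) * (1000 * N) * (e + 1) ^ 2 := Nat.mul_lt_mul_of_pos_right he (by positivity)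
      _ = 1000 * N * (e + 1) ^ 3 := by ring
  obtain ⟨f, hf, hdeg, hfM⟩ := exists_inZeroSet_of_card_mul_lt e M hcount
  have hoff : linesOff L f ⊆ linesMissing L S (3 * e) M := by
    intro l hl
    obtain ⟨hlL, hlf⟩ := mem_linesOff.1 hl
    refine Finset.mem_filter.2 ⟨hlL, le_of_not_gt fun hlt => hlf ?_⟩
    refine Line.inZeroSet_of_totalDegree_lt_card _ (fun x hx => ?_) (hdeg.trans_lt hlt)
    obtain ⟨-, hxl, m, hm, hxm⟩ := mem_meetingPoints.1 hx
    exact ⟨hxl, (hfM m hm).eval_eq_zero hxm⟩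
  refine ⟨f, hf, hdeg.trans heN, ?_, ?_⟩
  · exact (Nat.mul_le_mul_left 576 (Nat.pow_le_pow_left hdeg 2)).trans heL
  · have hoff_card := Finset.card_le_card hoff
    refine Nat.le_of_mul_le_mul_right (c := 1000 * N) ?_ (by omega)
    nlinarith

open scoped Classical in
lemma exists_polynomial_card_not_inQuadricFactor_le (hN : 1 ≤ N) (hLN : L.card ≤ N ^ 2)
    (hS : ∀ x ∈ S, 2 ≤ (linesThrough L x).card)
    (hrich : ∀ l ∈ L, 16000 * N < (S.filter (· ∈ l)).card) :
    ∃ f : SpacePolynomial, f.totalDegree ≤ N ∧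
      8 * (L.filter fun l => ¬ l.InQuadricFactor f).card ≤ 3 * L.card := by
  obtain ⟨f, hf, hdeg, hdegL, hoff⟩ := exists_polynomial_card_linesOff_le hN hLN hS hrich
  refine ⟨f, hdeg, ?_⟩
  have hdoublyRich := card_doublyRichLines_le (L := L) (S := S) hf
  have hdoublyPoor : (doublyPoorLines L f S).card ≤ (linesOff L f).card := by
    have hcount := card_doublyPoorLines_mul_le (f := f) (a := N) hS fun l hl => by
      have := hrich l hl
      omega
    exact Nat.le_of_mul_le_mul_right (hcount.trans (Nat.mul_le_mul_left _ hdeg)) hN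
  have hcover : (L.filter fun l => ¬ l.InQuadricFactor f) ⊆
      linesOff L f ∪ (doublyRichLines L f S ∪ doublyPoorLines L f S) := by
    intro l hl
    obtain ⟨hlL, hlf⟩ := Finset.mem_filter.1 hl
    simpa only [Finset.mem_union] using
      mem_linesOff_or_mem_doublyRichLines_or_mem_doublyPoorLines S hlL hlf
  have hcard := (Finset.card_le_card hcover).trans (Finset.card_union_le _ _)
  have hunion := Finset.card_union_le (doublyRichLines L f S) (doublyPoorLines L f S)
  omega

open scoped Classical in
lemma two_mul_card_le_of_two_le_card_linesThrough {q : ℕ} (hL : FewLinesOnQuadrics L q)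
    (hS : ∀ x ∈ S, 2 ≤ (linesThrough L x).card) (f : SpacePolynomial) :
    2 * S.card ≤
      2 * (S.filter fun x =>
          2 ≤ (linesThrough (L.filter fun l => ¬ l.InQuadricFactor f) x).card).card
        + 2 * (L.card * f.totalDegree) + L.card * q := by
  set E := L.filter fun l => ¬ l.InQuadricFactor f
  set S₁ := S.filter fun x => 2 ≤ (linesThrough E x).card
  set S₂ := S.filter fun x => 1 ≤ (crossingLinesThrough L f x).card
  set S₃ := S.filter fun x => 2 ≤ (containedLinesThrough L f x).card
  have hcover : S ⊆ S₁ ∪ (S₂ ∪ S₃) := by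
    intro x hx
    simp only [Finset.mem_union, S₁, S₂, S₃, Finset.mem_filter, hx, true_and]
    by_contra! hnot
    obtain ⟨hE, hcrossing, hcontained⟩ := hnot
    have hnotcross : ∀ l ∈ linesThrough L x, ¬ CrossesQuadricFactor f x l := fun l hl hcross =>
      hcrossing.not_ge (Finset.card_pos.2
        ⟨l, mem_crossingLinesThrough.2 ⟨mem_linesThrough.1 hl, hcross⟩⟩)
    obtain ⟨l, hl, hlquadric⟩ : ∃ l ∈ linesThrough L x, l.InQuadricFactor f := by
      by_contra! hnone
      refine hE.not_ge ((hS x hx).trans (Finset.card_le_card fun l hl => ?_))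
      obtain ⟨hlL, hxl⟩ := mem_linesThrough.1 hl
      exact mem_linesThrough.2 ⟨Finset.mem_filter.2 ⟨hlL, hnone l hl⟩, hxl⟩
    refine hcontained.not_ge ((hS x hx).trans (Finset.card_le_card fun m hm => ?_))
    exact mem_containedLinesThrough.2 ⟨mem_linesThrough.1 hm,
      hlquadric.of_not_crossesQuadricFactor (mem_linesThrough.1 hl).2 (hnotcross m hm),
      hnotcross m hm⟩
  have hcrossing : S₂.card * 1 ≤ L.card * f.totalDegree :=
    card_mul_le_of_le_card_crossingLinesThrough fun x hx => (Finset.mem_filter.1 hx).2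
  have hcontained : S₃.card * (2 * (2 - 1)) ≤ L.card * q :=
    card_mul_le_of_le_card_containedLinesThrough hL fun x hx => (Finset.mem_filter.1 hx).2
  have hcard := (Finset.card_le_card hcover).trans (Finset.card_union_le _ _)
  have hunion := Finset.card_union_le S₂ S₃
  omega

lemma le_card_linesThrough_erase {k : ℕ} {l : Line} {x : Space} (hxl : x ∉ l)
    (hx : k ≤ (linesThrough L x).card) : k ≤ (linesThrough (L.erase l) x).card := by
  refine hx.trans (Finset.card_le_card fun m hm => ?_)
  obtain ⟨hmL, hxm⟩ := mem_linesThrough.1 hm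
  exact mem_linesThrough.2 ⟨Finset.mem_erase.2 ⟨fun hml => hxl (hml ▸ hxm), hmL⟩, hxm⟩

theorem card_le_of_two_le_card_linesThrough (hN : 1 ≤ N) (hLN : L.card ≤ N ^ 2)
    (hL : FewLinesOnQuadrics L (3 * N)) (hS : ∀ x ∈ S, 2 ≤ (linesThrough L x).card) :
    S.card ≤ 16000 * N * L.card := by
  classical
  induction hn : L.card using Nat.strong_induction_on generalizing L S with
  | _ n ih =>
  subst hn
  by_cases hpoor : ∃ l ∈ L, (S.filter (· ∈ l)).card ≤ 16000 * N
  · obtain ⟨l, hl, hle⟩ := hpoor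
    have herase := Finset.card_erase_add_one hl
    have hrec := ih (L.erase l).card (by omega) (by omega) (hL.mono (Finset.erase_subset _ _))
      (S := S.filter (· ∉ l)) (fun x hx => le_card_linesThrough_erase (Finset.mem_filter.1 hx).2
        (hS x (Finset.mem_filter.1 hx).1)) rfl
    have hsplit := Finset.card_filter_add_card_filter_not (s := S) (· ∈ l)
    rw [← herase, mul_add_one]
    omega
  push Not at hpoor
  obtain ⟨f, hdeg, hE⟩ := exists_polynomial_card_not_inQuadricFactor_le hN hLN hS hpoor
  set E := L.filter fun l => ¬ l.InQuadricFactor f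
  rcases L.eq_empty_or_nonempty with rfl | hLne
  · have hSempty : S = ∅ := Finset.eq_empty_of_forall_notMem fun x hx => by
      simpa [linesThrough] using hS x hx
    simp [hSempty]
  have hLpos := hLne.card_pos
  have hrec := ih E.card (by omega) (L := E) (by omega) (hL.mono (Finset.filter_subset _ _))
    (S := S.filter fun x => 2 ≤ (linesThrough E x).card) (fun x hx => (Finset.mem_filter.1 hx).2)
    rfl
  have hsplit := two_mul_card_le_of_two_le_card_linesThrough hL hS f
  have hEN : 16000 * N * E.card ≤ 2000 * N * (3 * L.card) := by nlinarith
  have hdegN : L.card * f.totalDegree ≤ L.card * N := Nat.mul_le_mul_left _ hdeg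
  nlinarith

end TwoRichPoints

/-! ### Points on many lines -/

section ZeroSet

variable {f : SpacePolynomial} {L : Finset Line} {S : Finset Space} {j k : ℕ}

lemma card_linesThrough_le (L : Finset Line) (f : SpacePolynomial) (S : Finset Space)
    (x : Space) :
    (linesThrough L x).card ≤ (linesThrough (linesOff L f) x).card
      + (crossingLinesThrough L f x).card + (containedLinesThrough L f x).card
      + (linesThrough (doublyRichLines L f S) x).card
      + (linesThrough (doublyPoorLines L f S) x).card := by
  classical
  have hcover : linesThrough L x ⊆ linesThrough (linesOff L f) x ∪ crossingLinesThrough L f x ∪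
      containedLinesThrough L f x ∪ linesThrough (doublyRichLines L f S) x ∪
      linesThrough (doublyPoorLines L f S) x := by
    intro l hl
    obtain ⟨hlL, hxl⟩ := mem_linesThrough.1 hl
    have hclass := mem_linesOff_or_mem_doublyRichLines_or_mem_doublyPoorLines (f := f) S hlL
    simp only [Finset.mem_union, mem_linesThrough, mem_crossingLinesThrough,
      mem_containedLinesThrough, hlL, hxl, and_true, true_and]
    tauto
  refine (Finset.card_le_card hcover).trans ?_
  grw [Finset.card_union_le, Finset.card_union_le, Finset.card_union_le, Finset.card_union_le]

lemma card_mul_le_of_le_card_doublyPoorLines {S' : Finset Space} (hj : 2 ≤ j) (hS' : S' ⊆ S)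
    (hrich : ∀ x ∈ S', j ≤ (linesThrough (doublyPoorLines L f S) x).card) :
    S'.card * j ≤ L.card * (12 * f.totalDegree) := by
  classical
  have hcount : S'.card * j ≤ (doublyPoorLines L f S).card * (12 * f.totalDegree) := by
    refine Finset.card_mul_le_card_mul (fun x l => x ∈ l) hrich fun l hl => ?_
    refine (Finset.card_le_card fun x hx => ?_).trans (mem_doublyPoorLines.1 hl).2.2
    obtain ⟨hxS', hxl⟩ := Finset.mem_filter.1 hx
    obtain ⟨m, hm, hml⟩ := Finset.exists_mem_ne (one_lt_two.trans_le (hj.trans (hrich x hxS'))) l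
    obtain ⟨hm, hxm⟩ := mem_linesThrough.1 hm
    exact Finset.mem_filter.2
      ⟨hS' hxS', hxl, m, hml, hxm, (mem_doublyPoorLines.1 hm).2.1⟩
  exact hcount.trans (Nat.mul_le_mul_right _ (Finset.card_filter_le _ _))

lemma mul_sq_le_of_mul_le {s B : ℕ} (hs : s * j ≤ B) (hk : k ≤ 8 * j) :
    s * k ^ 2 ≤ 8 * (B * k) := calc
  s * k ^ 2 = s * k * k := by ring
  _ ≤ s * (8 * j) * k := by gcongr
  _ = 8 * (s * j * k) := by ring
  _ ≤ 8 * (B * k) := by gcongr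

lemma mul_sq_le_of_mul_mul_pred_le {s B : ℕ} (hj : 2 ≤ j) (hs : s * (j * (j - 1)) ≤ B)
    (hk : k ≤ 8 * j) : s * k ^ 2 ≤ 128 * B := by
  obtain ⟨i, rfl⟩ : ∃ i, j = i + 1 := ⟨j - 1, by omega⟩
  rw [Nat.add_sub_cancel] at hs
  have hi : (8 * (i + 1)) ^ 2 ≤ 128 * ((i + 1) * i) := by nlinarith
  calc
    s * k ^ 2 ≤ s * (8 * (i + 1)) ^ 2 := by gcongr
    _ ≤ s * (128 * ((i + 1) * i)) := by gcongr
    _ = 128 * (s * ((i + 1) * i)) := by ring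
    _ ≤ 128 * B := by gcongr

-- Some class of lines in `card_linesThrough_le` contributes at least `k / 8` lines through `x`.
lemma card_mul_sq_le_of_eval_eq_zero {q B : ℕ} (hL : FewLinesOnQuadrics L q) (hj : 2 ≤ j)
    (hkj : k ≤ 8 * j) (hjk : 8 * j ≤ k + 7)
    (hS : ∀ x ∈ S, eval x f = 0 ∧ k ≤ (linesThrough L x).card)
    (hB : ∀ S' ⊆ S, (∀ x ∈ S', j ≤ (linesThrough (doublyRichLines L f S) x).card) →
      S'.card * j ^ 2 ≤ B) :
    S.card * k ^ 2 ≤ 112 * (L.card * f.totalDegree * k) + 128 * (L.card * q) + 64 * B := by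
  classical
  set S₀ := S.filter fun x => j ≤ (linesThrough (linesOff L f) x).card
  set S₁ := S.filter fun x => j ≤ (crossingLinesThrough L f x).card
  set S₂ := S.filter fun x => j ≤ (containedLinesThrough L f x).card
  set S₃ := S.filter fun x => j ≤ (linesThrough (doublyRichLines L f S) x).card
  set S₄ := S.filter fun x => j ≤ (linesThrough (doublyPoorLines L f S) x).card
  have hcover : S ⊆ S₀ ∪ S₁ ∪ S₂ ∪ S₃ ∪ S₄ := by
    intro x hx
    have hx_rich := (hS x hx).2
    have hclasses := card_linesThrough_le L f S x
    simp only [Finset.mem_union, S₀, S₁, S₂, S₃, S₄, Finset.mem_filter, hx, true_and]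
    omega
  have hcard : S.card ≤ S₀.card + S₁.card + S₂.card + S₃.card + S₄.card := by
    refine (Finset.card_le_card hcover).trans ?_
    grw [Finset.card_union_le, Finset.card_union_le, Finset.card_union_le, Finset.card_union_le]
  have h₀ : S₀.card * j ≤ L.card * f.totalDegree :=
    (card_mul_le_of_not_inZeroSet (L := linesOff L f) (fun l hl => (mem_linesOff.1 hl).2)
      fun x hx => ⟨(hS x (Finset.mem_filter.1 hx).1).1, (Finset.mem_filter.1 hx).2⟩).trans
        (Nat.mul_le_mul_right _ (Finset.card_filter_le _ _))
  have h₁ : S₁.card * j ≤ L.card * f.totalDegree :=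
    card_mul_le_of_le_card_crossingLinesThrough fun x hx => (Finset.mem_filter.1 hx).2
  have h₂ : S₂.card * (j * (j - 1)) ≤ L.card * q :=
    card_mul_le_of_le_card_containedLinesThrough hL fun x hx => (Finset.mem_filter.1 hx).2
  have h₃ : S₃.card * j ^ 2 ≤ B :=
    hB S₃ (Finset.filter_subset _ _) fun x hx => (Finset.mem_filter.1 hx).2
  have h₄ : S₄.card * j ≤ L.card * (12 * f.totalDegree) :=
    card_mul_le_of_le_card_doublyPoorLines hj (Finset.filter_subset _ _)
      fun x hx => (Finset.mem_filter.1 hx).2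
  have h₃k : S₃.card * k ^ 2 ≤ 64 * B := calc
    S₃.card * k ^ 2 ≤ S₃.card * (8 * j) ^ 2 := by gcongr
    _ = 64 * (S₃.card * j ^ 2) := by ring
    _ ≤ 64 * B := by gcongr
  calc
    S.card * k ^ 2 ≤ (S₀.card + S₁.card + S₂.card + S₃.card + S₄.card) * k ^ 2 := by gcongr
    _ ≤ 112 * (L.card * f.totalDegree * k) + 128 * (L.card * q) + 64 * B := by
      linarith [mul_sq_le_of_mul_le h₀ hkj, mul_sq_le_of_mul_le h₁ hkj,
        mul_sq_le_of_mul_mul_pred_le hj h₂ hkj, mul_sq_le_of_mul_le h₄ hkj]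

end ZeroSet

section RichPointBound

variable {L : Finset Line} {S : Finset Space} {k N : ℕ}

lemma biUnion_linesThrough_subset : S.biUnion (linesThrough L) ⊆ L :=
  Finset.biUnion_subset.2 fun _ _ => Finset.filter_subset _ _

lemma card_mul_le_of_six_mul_card_lt_sq (hk : 2 ≤ k)
    (hS : ∀ x ∈ S, k ≤ (linesThrough L x).card) (hlt : 6 * L.card < k ^ 2) :
    S.card * k ≤ 2 * L.card := by
  have hlines := Finset.card_le_card (biUnion_linesThrough_subset (L := L) (S := S))
  have hfew : 2 * S.card ≤ k := by
    by_contra! hmany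
    have := sq_le_six_mul_card_biUnion_linesThrough hk hS hmany
    omega
  have := card_mul_le_two_mul_card_biUnion_linesThrough hS hfew
  omega

open scoped Classical in
lemma exists_partition_of_sq_le (hk : 2 ≤ k) (hkL : k ^ 2 ≤ 8100 * L.card)
    (hS : ∀ x ∈ S, k ≤ (linesThrough L x).card) :
    ∃ H : List SpacePolynomial, H.prod ≠ 0 ∧ (H.prod.totalDegree : ℝ) * k ≤ 6750 * √L.card ∧
      4 * (S.filter fun x => (k / 2 : ℝ) < (cell H S x).card).card ≤ S.card := by
  have hk0 : (0 : ℝ) < k := by positivity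
  have hsq : √(L.card : ℝ) ^ 2 = L.card := Real.sq_sqrt (Nat.cast_nonneg _)
  have hkL' : (k : ℝ) ≤ 90 * √L.card := by
    refine le_of_sq_le_sq ?_ (by positivity)
    rw [mul_pow, hsq]
    norm_num
    exact_mod_cast hkL
  obtain ⟨D, hDk⟩ : ∃ D : ℝ, D * k = 90 * √L.card := ⟨90 * √L.card / k, div_mul_cancel₀ _ hk0.ne'⟩
  have hD : 1 ≤ D := le_of_mul_le_mul_right (by linarith) hk0
  obtain ⟨H, hH, hdeg, henergy⟩ := exists_partition S hD
  refine ⟨H, List.prod_ne_zero fun hzero => hH 0 hzero rfl, by nlinarith, ?_⟩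
  set s := (S.filter fun x => (k / 2 : ℝ) < (cell H S x).card).card
  have hcells : (s : ℝ) ^ 2 * k ^ 2 ≤ 6 * (L.card * (H.prod.totalDegree + 1)) * cellEnergy H S := by
    exact_mod_cast card_sq_mul_sq_le_of_lt_card_cell hk hS
  have hscaled : (s : ℝ) ^ 2 * (8100 * L.card * D) ≤ 456 * (S.card : ℝ) ^ 2 * (L.card * D) := calc
    (s : ℝ) ^ 2 * (8100 * L.card * D) = s ^ 2 * ((90 * √L.card) ^ 2 * D) := by
      rw [mul_pow, hsq]
      norm_num
    _ = s ^ 2 * k ^ 2 * D ^ 3 := by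
      rw [← hDk]
      ring
    _ ≤ 6 * (L.card * (H.prod.totalDegree + 1)) * cellEnergy H S * D ^ 3 := by gcongr
    _ = 6 * (L.card * (H.prod.totalDegree + 1)) * (cellEnergy H S * D ^ 3) := by ring
    _ ≤ 6 * (L.card * (75 * D + D)) * (S.card : ℝ) ^ 2 := by gcongr
    _ = 456 * (S.card : ℝ) ^ 2 * (L.card * D) := by ring
  have hLpos : (0 : ℝ) < L.card := by
    have : 0 < k ^ 2 := by positivity
    exact_mod_cast (show 0 < L.card by omega)
  have hcancel : (s : ℝ) ^ 2 * 8100 ≤ 456 * (S.card : ℝ) ^ 2 :=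
    le_of_mul_le_mul_right (by linarith) (mul_pos hLpos (by linarith : 0 < D))
  have hroot : 4 * (s : ℝ) ≤ S.card := le_of_sq_le_sq (by nlinarith) (Nat.cast_nonneg _)
  exact_mod_cast hroot

lemma sq_totalDegree_le_of_mul_le {d : ℕ} (hk : 2592000 ≤ k)
    (hdk : (d : ℝ) * k ≤ 6750 * √L.card) : 147456 * d ^ 2 ≤ L.card := by
  have hk' : (2592000 : ℝ) ≤ k := by exact_mod_cast hk
  have hd : 384 * (d : ℝ) ≤ √L.card := by nlinarith [Nat.cast_nonneg (α := ℝ) d]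
  have hsq := pow_le_pow_left₀ (by positivity) hd 2
  rw [Real.sq_sqrt (Nat.cast_nonneg _)] at hsq
  have : (147456 : ℝ) * d ^ 2 ≤ L.card := by linarith
  exact_mod_cast this

open scoped Classical in
lemma card_le_card_smallCells_add (H : List SpacePolynomial) (S : Finset Space) (k : ℕ) :
    S.card ≤ (S.filter fun x => SameCell H x x ∧ 2 * (cell H S x).card ≤ k).card
      + (S.filter fun x => (k / 2 : ℝ) < (cell H S x).card).card
      + (S.filter fun x => eval x H.prod = 0).card := by
  have hcover : S ⊆ (S.filter fun x => SameCell H x x ∧ 2 * (cell H S x).card ≤ k)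
      ∪ (S.filter fun x => (k / 2 : ℝ) < (cell H S x).card)
      ∪ (S.filter fun x => eval x H.prod = 0) := by
    intro x hx
    have hsmall : 2 * (cell H S x).card ≤ k ↔ ¬ (k / 2 : ℝ) < (cell H S x).card := by
      rw [not_lt, le_div_iff₀' two_pos]
      exact_mod_cast Iff.rfl
    simp only [Finset.mem_union, Finset.mem_filter, hx, true_and, hsmall, sameCell_self_iff]
    tauto
  refine (Finset.card_le_card hcover).trans ?_
  grw [Finset.card_union_le, Finset.card_union_le]

lemma card_mul_sq_le_of_eval_eq_zero_of_forall_card_lt {f : SpacePolynomial} (hf : f ≠ 0)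
    (hdegN : f.totalDegree * k ≤ 6750 * N) (hdegL : 147456 * f.totalDegree ^ 2 ≤ L.card)
    (hL0 : 0 < L.card) (hL : FewLinesOnQuadrics L (3 * N)) (hk : 9 ≤ k) (hkN : k ≤ N)
    (hS : ∀ x ∈ S, eval x f = 0 ∧ k ≤ (linesThrough L x).card)
    (hsub : ∀ M ⊆ L, M.card < L.card → ∀ (T : Finset Space) (j : ℕ), 2 ≤ j → j ≤ N →
      (∀ x ∈ T, j ≤ (linesThrough M x).card) → T.card * j ^ 2 ≤ 10 ^ 18 * (N * M.card)) :
    32 * (S.card * k ^ 2) ≤ (32 * 756384 + 10 ^ 18) * (N * L.card) := by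
  classical
  set M := doublyRichLines L f S
  have hMcard : 2048 * M.card ≤ L.card := by
    have : M.card ≤ _ := card_doublyRichLines_le hf
    omega
  have hML : M ⊆ L := Finset.filter_subset _ _
  have hzero := card_mul_sq_le_of_eval_eq_zero (j := (k + 7) / 8) (B := 10 ^ 18 * (N * M.card))
    hL (by omega) (by omega) (by omega) hS fun T _ hT =>
      hsub M hML (by omega) T _ (by omega) (by omega) hT
  have hdeg : L.card * f.totalDegree * k ≤ 6750 * (N * L.card) := calc
    L.card * f.totalDegree * k = L.card * (f.totalDegree * k) := by ring
    _ ≤ L.card * (6750 * N) := by gcongr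
    _ = 6750 * (N * L.card) := by ring
  have hrich : 2048 * (N * M.card) ≤ N * L.card := calc
    2048 * (N * M.card) = N * (2048 * M.card) := by ring
    _ ≤ N * L.card := by gcongr
  have hquadric : L.card * (3 * N) = 3 * (N * L.card) := by ring
  omega

open scoped Classical in
lemma card_mul_sq_le_of_forall_card_lt (hLN : L.card ≤ N ^ 2)
    (hL : FewLinesOnQuadrics L (3 * N)) (hk : 2592000 ≤ k) (hkN : k ≤ N)
    (hkL : k ^ 2 ≤ 8100 * L.card) (hS : ∀ x ∈ S, k ≤ (linesThrough L x).card)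
    (hsub : ∀ M ⊆ L, M.card < L.card → ∀ (T : Finset Space) (j : ℕ), 2 ≤ j → j ≤ N →
      (∀ x ∈ T, j ≤ (linesThrough M x).card) → T.card * j ^ 2 ≤ 10 ^ 18 * (N * M.card)) :
    S.card * k ^ 2 ≤ 10 ^ 18 * (N * L.card) := by
  obtain ⟨H, hH, hdeg, hlarge⟩ := exists_partition_of_sq_le (by omega) hkL hS
  have hsplit := card_le_card_smallCells_add H S k
  set d := H.prod.totalDegree
  have hdegN : d * k ≤ 6750 * N := by
    have hsqrt : √(L.card : ℝ) ≤ N := Real.sqrt_le_iff.2 ⟨by positivity, by exact_mod_cast hLN⟩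
    have : (d : ℝ) * k ≤ 6750 * N := by linarith
    exact_mod_cast this
  have hdegL := sq_totalDegree_le_of_mul_le hk hdeg
  set small := S.filter fun x => SameCell H x x ∧ 2 * (cell H S x).card ≤ k
  set large := S.filter fun x => (k / 2 : ℝ) < (cell H S x).card
  set zero := S.filter fun x => eval x H.prod = 0
  have hsmall : small.card * k ^ 2 ≤ 13502 * (N * L.card) := calc
    small.card * k ^ 2 = small.card * k * k := by ring
    _ ≤ 2 * (L.card * (d + 1)) * k :=
      Nat.mul_le_mul_right _ (card_mul_le_of_card_cell_le hS fun x hx => Finset.mem_filter.1 hx)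
    _ = 2 * L.card * (d * k + k) := by ring
    _ ≤ 2 * L.card * (6750 * N + N) := Nat.mul_le_mul_left _ (by omega)
    _ = 13502 * (N * L.card) := by ring
  have hLpos : 0 < L.card := by
    have : 0 < k ^ 2 := by positivity
    omega
  have hzero : 32 * (zero.card * k ^ 2) ≤ (32 * 756384 + 10 ^ 18) * (N * L.card) :=
    card_mul_sq_le_of_eval_eq_zero_of_forall_card_lt hH hdegN hdegL hLpos hL (by omega)
      hkN (fun x hx => ⟨(Finset.mem_filter.1 hx).2, hS x (Finset.mem_filter.1 hx).1⟩) hsub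
  have hsplit_sq : 3 * (S.card * k ^ 2) ≤ 4 * (small.card * k ^ 2) + 4 * (zero.card * k ^ 2) := calc
    3 * (S.card * k ^ 2) = 3 * S.card * k ^ 2 := by ring
    _ ≤ (4 * small.card + 4 * zero.card) * k ^ 2 := Nat.mul_le_mul_right _ (by omega)
    _ = 4 * (small.card * k ^ 2) + 4 * (zero.card * k ^ 2) := by ring
  omega

theorem card_mul_sq_le_of_le_card_linesThrough (hN : 1 ≤ N) (hLN : L.card ≤ N ^ 2)
    (hL : FewLinesOnQuadrics L (3 * N)) (hk : 2 ≤ k) (hkN : k ≤ N)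
    (hS : ∀ x ∈ S, k ≤ (linesThrough L x).card) :
    S.card * k ^ 2 ≤ 10 ^ 18 * (N * L.card) := by
  induction hn : L.card using Nat.strong_induction_on generalizing L S k with
  | _ n ih =>
  subst hn
  rcases lt_or_ge k 2592000 with hk_small | hk_large
  · calc
      S.card * k ^ 2 ≤ (16000 * N * L.card) * 2592000 ^ 2 :=
        Nat.mul_le_mul (card_le_of_two_le_card_linesThrough hN hLN hL
          fun x hx => hk.trans (hS x hx)) (Nat.pow_le_pow_left hk_small.le 2)
      _ ≤ 10 ^ 18 * (N * L.card) := by nlinarith [Nat.zero_le (N * L.card)]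
  rcases lt_or_ge (8100 * L.card) (k ^ 2) with hL_small | hL_large
  · calc
      S.card * k ^ 2 = S.card * k * k := by ring
      _ ≤ 2 * L.card * N :=
        Nat.mul_le_mul (card_mul_le_of_six_mul_card_lt_sq hk hS (by omega)) hkN
      _ ≤ 10 ^ 18 * (N * L.card) := by nlinarith [Nat.zero_le (N * L.card)]
  exact card_mul_sq_le_of_forall_card_lt hLN hL hk_large hkN hL_large hS
    fun M hML hM T j hj hjN hT =>
      ih M.card hM (hM.le.trans hLN) (hL.mono hML) hj hjN hT rfl

end RichPointBound

/-! ### The lines of hyperbolic isometries -/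

namespace Line

/-- The two lines have the same direction. -/
def Parallel (l m : Line) : Prop := l.a = m.a ∧ l.c = m.c

/-- The determinant which vanishes exactly when the two lines are coplanar. -/
def coplanarityDet (l m : Line) : ℝ := (l.a - m.a) * (l.d - m.d) - (l.b - m.b) * (l.c - m.c)

lemma coplanarityDet_eq_zero_of_mem {l m : Line} {x : Space} (hl : x ∈ l) (hm : x ∈ m) :
    coplanarityDet l m = 0 := by
  obtain ⟨hl₀, hl₁⟩ := hl
  obtain ⟨hm₀, hm₁⟩ := hm
  unfold coplanarityDet
  linear_combination (l.a - m.a) * (hm₁ - hl₁) - (l.c - m.c) * (hm₀ - hl₀)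

lemma exists_mem_of_not_parallel {l m : Line} (hlm : ¬ Parallel l m)
    (hdet : coplanarityDet l m = 0) : ∃ x, x ∈ l ∧ x ∈ m := by
  unfold coplanarityDet at hdet
  rcases not_and_or.1 hlm with h | h
  · have h₀ : l.a - m.a ≠ 0 := sub_ne_zero.2 h
    refine ⟨l.point (-(l.b - m.b) / (l.a - m.a)), mem_point _ _, ?_, ?_⟩ <;>
      simp only [point_zero, point_one, point_two] <;> field_simp
    · ring
    · linear_combination hdet
  · have h₀ : l.c - m.c ≠ 0 := sub_ne_zero.2 h
    refine ⟨l.point (-(l.d - m.d) / (l.c - m.c)), mem_point _ _, ?_, ?_⟩ <;>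
      simp only [point_zero, point_one, point_two] <;> field_simp
    · linear_combination -hdet
    · ring

end Line

section IsometryLine

/-- The factor `λ` of the affine isometry `z ↦ λ z + κ` taking `p` to `q`. -/
def dilation (p q : ℍ) : ℝ := q.im / p.im

/-- The constant `κ` of the affine isometry `z ↦ λ z + κ` taking `p` to `q`. -/
def translation (p q : ℍ) : ℝ := q.re - dilation p q * p.re

/-- The orientation-preserving isometries of `ℍ` taking `p` to `q`, where the isometry
`z ↦ (x₀ z + x₁) / (x₂ (z - s) + 1)` is represented by the point `(x₀, x₁, x₂)`. These coordinates
miss the isometries with pole `s`, a parameter which will be chosen generically. -/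
def isometryLine (s : ℝ) (p q : ℍ) : Line where
  a := translation p q + dilation p q * (2 * p.re - s)
  b := dilation p q
  c := -dilation p q * (p.re ^ 2 + p.im ^ 2) - s * translation p q
  d := translation p q

variable {s : ℝ} {p q p' q' : ℍ}

lemma dilation_pos (p q : ℍ) : 0 < dilation p q := div_pos q.im_pos p.im_pos

lemma im_eq_dilation_mul (p q : ℍ) : q.im = dilation p q * p.im :=
  (div_mul_cancel₀ _ p.im_pos.ne').symm

lemma re_eq_dilation_mul_add (p q : ℍ) : q.re = dilation p q * p.re + translation p q := by
  unfold translation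
  ring

lemma isometryLine_injective (h : isometryLine s p q = isometryLine s p' q') :
    p = p' ∧ q = q' := by
  obtain ⟨ha, hb, hc, hd⟩ := Line.ext_iff.1 h
  simp only [isometryLine] at ha hb hc hd
  rw [← hb, ← hd] at ha hc
  have hpos := dilation_pos p q
  have hre : p.re = p'.re := mul_left_cancel₀ hpos.ne' (by linarith)
  have him : p.im = p'.im := by
    refine (sq_eq_sq₀ p.im_pos.le p'.im_pos.le).1 (mul_left_cancel₀ hpos.ne' ?_)
    rw [hre] at hc
    linarith
  obtain rfl : p = p' := UpperHalfPlane.ext (Complex.ext hre him)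
  refine ⟨rfl, UpperHalfPlane.ext (Complex.ext ?_ ?_)⟩
  · change q.re = q'.re
    rw [re_eq_dilation_mul_add p q, re_eq_dilation_mul_add p q', hb, hd]
  · change q.im = q'.im
    rw [im_eq_dilation_mul p q, im_eq_dilation_mul p q', hb]

lemma dist_coe_sq (p q : ℍ) : dist (p : ℂ) q ^ 2 = (p.re - q.re) ^ 2 + (p.im - q.im) ^ 2 := by
  rw [Complex.dist_eq, ← Complex.normSq_eq_norm_sq, Complex.normSq_apply]
  simp [sq]

lemma coplanarityDet_isometryLine (s : ℝ) (p q p' q' : ℍ) :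
    (isometryLine s p q).coplanarityDet (isometryLine s p' q') =
      dist (q : ℂ) q' ^ 2 - dilation p q * dilation p' q' * dist (p : ℂ) p' ^ 2 := by
  rw [dist_coe_sq, dist_coe_sq, re_eq_dilation_mul_add p q, re_eq_dilation_mul_add p' q',
    im_eq_dilation_mul p q, im_eq_dilation_mul p' q']
  simp only [Line.coplanarityDet, isometryLine]
  ring

lemma dist_coe_sq_of_dist_eq (h : dist p p' = dist q q') :
    dist (q : ℂ) q' ^ 2 = dilation p q * dilation p' q' * dist (p : ℂ) p' ^ 2 := by
  have hcosh := UpperHalfPlane.cosh_dist p p'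
  rw [h, UpperHalfPlane.cosh_dist q q', add_right_inj, im_eq_dilation_mul p q,
    im_eq_dilation_mul p' q'] at hcosh
  have := dilation_pos p q
  have := dilation_pos p' q'
  have := p.im_pos
  have := p'.im_pos
  field_simp at hcosh
  linarith

lemma eq_of_mem_isometryLine {x : Space} (h : x ∈ isometryLine s p q)
    (h' : x ∈ isometryLine s p q') : q = q' := by
  have hdet := Line.coplanarityDet_eq_zero_of_mem h h'
  rw [coplanarityDet_isometryLine, dist_self] at hdet
  exact UpperHalfPlane.ext (dist_eq_zero.1 (pow_eq_zero_iff two_ne_zero |>.1 (by linarith)))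

lemma exists_mem_isometryLine (hpar : ¬ (isometryLine s p q).Parallel (isometryLine s p' q'))
    (hdist : dist p p' = dist q q') :
    ∃ x, x ∈ isometryLine s p q ∧ x ∈ isometryLine s p' q' := by
  refine Line.exists_mem_of_not_parallel hpar ?_
  rw [coplanarityDet_isometryLine, dist_coe_sq_of_dist_eq hdist, sub_self]

lemma eq_of_parallel_isometryLine {t : ℝ} (hp : p ≠ p')
    (hs : (isometryLine s p q).Parallel (isometryLine s p' q'))
    (ht : (isometryLine t p q).Parallel (isometryLine t p' q')) : s = t := by
  by_contra hst
  obtain ⟨hsa, hsc⟩ := hs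
  obtain ⟨hta, htc⟩ := ht
  simp only [isometryLine] at hsa hsc hta htc
  have hdil : dilation p q = dilation p' q' :=
    mul_left_cancel₀ (sub_ne_zero.2 hst) (by linarith)
  have htrans : translation p q = translation p' q' :=
    mul_left_cancel₀ (sub_ne_zero.2 hst) (by linarith)
  exact hp (isometryLine_injective (s := s) (Line.ext hsa hdil hsc htrans)).1

lemma exists_forall_not_parallel_isometryLine (P : Finset ℍ) :
    ∃ s, ∀ p ∈ P, ∀ q ∈ P, ∀ p' ∈ P, ∀ q' ∈ P, p ≠ p' →
      ¬ (isometryLine s p q).Parallel (isometryLine s p' q') := by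
  let bad (u : (ℍ × ℍ) × ℍ × ℍ) : Set ℝ := {s | u.1.1 ≠ u.2.1 ∧
    (isometryLine s u.1.1 u.1.2).Parallel (isometryLine s u.2.1 u.2.2)}
  have hbad : (⋃ u ∈ (P ×ˢ P) ×ˢ P ×ˢ P, bad u).Finite :=
    Finset.finite_toSet _ |>.biUnion fun u _ => Set.Subsingleton.finite
      fun s hs t ht => eq_of_parallel_isometryLine hs.1 hs.2 ht.2
  obtain ⟨s, hs⟩ := hbad.exists_notMem
  refine ⟨s, fun p hp q hq p' hp' q' hq' hne hpar => hs ?_⟩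
  exact Set.mem_biUnion (x := ((p, q), p', q'))
    (by simp only [Finset.coe_product, Set.mem_prod, Finset.mem_coe]; tauto) ⟨hne, hpar⟩

end IsometryLine

/-! ### Isometry lines on quadrics -/

section IsometryLinesOnQuadrics

lemma coeff_eq_zero_of_three_roots {K : Type*} [Field K] {a b c x y z : K} (hxy : x ≠ y)
    (hxz : x ≠ z) (hyz : y ≠ z) (hx : a + b * x + c * x ^ 2 = 0)
    (hy : a + b * y + c * y ^ 2 = 0) (hz : a + b * z + c * z ^ 2 = 0) :
    a = 0 ∧ b = 0 ∧ c = 0 := by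
  have hsum_xy : b + c * (x + y) = 0 :=
    mul_left_cancel₀ (sub_ne_zero.2 hxy) (by linear_combination hx - hy)
  have hsum_xz : b + c * (x + z) = 0 :=
    mul_left_cancel₀ (sub_ne_zero.2 hxz) (by linear_combination hx - hz)
  obtain rfl : c = 0 :=
    mul_left_cancel₀ (sub_ne_zero.2 hyz) (by linear_combination hsum_xy - hsum_xz)
  obtain rfl : b = 0 := by linear_combination hsum_xy
  exact ⟨by linear_combination hx, rfl, rfl⟩

-- The conjugate of `z` is a third root.
lemma coeff_eq_zero_of_two_roots_im_pos {a b c : ℝ} {z w : ℂ} (hz : 0 < z.im) (hw : 0 < w.im)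
    (hzw : z ≠ w) (hz_root : (a + b * z + c * z ^ 2 : ℂ) = 0)
    (hw_root : (a + b * w + c * w ^ 2 : ℂ) = 0) : a = 0 ∧ b = 0 ∧ c = 0 := by
  have hconj_root : (a + b * starRingEnd ℂ z + c * starRingEnd ℂ z ^ 2 : ℂ) = 0 := by
    simpa using congrArg (starRingEnd ℂ) hz_root
  have hne_conj {u : ℂ} (hu : 0 < u.im) : u ≠ starRingEnd ℂ z := fun h => by
    have := congrArg Complex.im h
    rw [Complex.conj_im] at this
    linarith
  exact_mod_cast coeff_eq_zero_of_three_roots hzw (hne_conj hz) (hne_conj hw) hz_root hw_root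
    hconj_root

lemma exists_eq_quadric {g : SpacePolynomial} (hg : g.totalDegree ≤ 2) : ∃ v, quadric v = g := by
  suffices h : g ∈ LinearMap.range quadric from h
  rw [g.as_sum]
  refine Submodule.sum_mem _ fun m hm => ?_
  have hdeg : m 0 + m 1 + m 2 ≤ 2 := by
    have := (le_totalDegree hm).trans hg
    rwa [Finsupp.sum_fintype _ _ (by simp), Fin.sum_univ_three] at this
  obtain ⟨i, hi⟩ : ∃ i, quadraticMonomial i = X 0 ^ m 0 * X 1 ^ m 1 * X 2 ^ m 2 := by
    generalize m 0 = a, m 1 = b, m 2 = c at hdeg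
    have : a ≤ 2 := by omega
    have : b ≤ 2 := by omega
    have : c ≤ 2 := by omega
    interval_cases a <;> interval_cases b <;> interval_cases c <;>
      first
      | omega
      | simp [quadraticMonomial, Fin.exists_fin_succ, sq]
  refine ⟨Pi.single i (g.coeff m), ?_⟩
  rw [quadric, Fintype.linearCombination_apply_single, hi, smul_eq_C_mul, monomial_eq,
    Finsupp.prod_fintype _ _ (by simp), Fin.prod_univ_three]

variable {s : ℝ} {p p' q : ℍ} {v : Fin 10 → ℝ}

lemma conj_eq_dilation_mul_add (p q : ℍ) :
    starRingEnd ℂ (q : ℂ) = dilation p q * starRingEnd ℂ (p : ℂ) + translation p q := by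
  apply Complex.ext
  · simpa using re_eq_dilation_mul_add p q
  · simpa using im_eq_dilation_mul p q

-- Over `ℂ` the line contains the point `(q̄, -p q̄, 1) / (s - p)`, a matrix of rank one.
lemma quadratic_conj_eq_zero_of_inZeroSet (h : (isometryLine s p q).InZeroSet (quadric v)) :
    (v 0 * (s - p) ^ 2 + v 3 * (s - p) + v 6 : ℂ) +
      ((v 1 - v 2 * p) * (s - p) + v 8 - v 9 * p) * starRingEnd ℂ q +
      (v 4 - v 7 * p + v 5 * p ^ 2) * starRingEnd ℂ (q : ℂ) ^ 2 = 0 := by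
  have hline (t : ℝ) := congrArg Complex.ofReal
    (h.eval_eq_zero ((isometryLine s p q).mem_point t))
  have h₀ := hline 0
  have h₁ := hline 1
  have h₂ := hline (-1)
  simp only [eval_quadric, Line.point_zero, Line.point_one, Line.point_two, isometryLine]
    at h₀ h₁ h₂
  have hre : (p.re : ℂ) = ((p : ℂ) + starRingEnd ℂ (p : ℂ)) / 2 := by
    rw [Complex.add_conj]; simp
  have hnorm : (p.re ^ 2 + p.im ^ 2 : ℂ) = (p : ℂ) * starRingEnd ℂ (p : ℂ) := by
    rw [Complex.mul_conj, Complex.normSq_apply]; simp [sq]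
  rw [conj_eq_dilation_mul_add p q]
  push_cast at h₀ h₁ h₂
  rw [hnorm, hre] at h₀ h₁ h₂
  linear_combination h₀ * ((s - p) ^ 2 - 1) + (h₁ - h₂) / 2 * (s - p) + (h₁ + h₂) / 2

lemma coeff_eq_zero_of_two_lt_card {Q : Finset ℍ} (hQ : 2 < Q.card)
    (hzero : ∀ q ∈ Q, (isometryLine s p q).InZeroSet (quadric v)) :
    (v 0 * (s - p) ^ 2 + v 3 * (s - p) + v 6 : ℂ) = 0 ∧
      ((v 1 - v 2 * p) * (s - p) + v 8 - v 9 * p : ℂ) = 0 ∧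
      (v 4 - v 7 * p + v 5 * p ^ 2 : ℂ) = 0 := by
  obtain ⟨q₁, q₂, q₃, h₁, h₂, h₃, h₁₂, h₁₃, h₂₃⟩ := Finset.two_lt_card_iff.1 hQ
  have hconj {a b : ℍ} (hab : a ≠ b) : starRingEnd ℂ (a : ℂ) ≠ starRingEnd ℂ (b : ℂ) :=
    fun h => hab (UpperHalfPlane.ext ((starRingEnd ℂ).injective h))
  exact coeff_eq_zero_of_three_roots (hconj h₁₂) (hconj h₁₃) (hconj h₂₃)
    (quadratic_conj_eq_zero_of_inZeroSet (hzero _ h₁))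
    (quadratic_conj_eq_zero_of_inZeroSet (hzero _ h₂))
    (quadratic_conj_eq_zero_of_inZeroSet (hzero _ h₃))

lemma eq_zero_of_two_lt_card_inZeroSet_quadric {Q Q' : Finset ℍ} (hp : p ≠ p') (hQ : 2 < Q.card)
    (hQ' : 2 < Q'.card) (hzero : ∀ q ∈ Q, (isometryLine s p q).InZeroSet (quadric v))
    (hzero' : ∀ q ∈ Q', (isometryLine s p' q).InZeroSet (quadric v)) : v = 0 := by
  obtain ⟨hconst, hlin, hquad⟩ := coeff_eq_zero_of_two_lt_card hQ hzero
  obtain ⟨hconst', hlin', hquad'⟩ := coeff_eq_zero_of_two_lt_card hQ' hzero'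
  have him : 0 < (p : ℂ).im := p.im_pos
  have him' : 0 < (p' : ℂ).im := p'.im_pos
  have hne : (p : ℂ) ≠ p' := fun h => hp (UpperHalfPlane.ext h)
  obtain ⟨h4, h7, h5⟩ := coeff_eq_zero_of_two_roots_im_pos (a := v 4) (b := -v 7) (c := v 5)
    him him' hne (by push_cast; linear_combination hquad) (by push_cast; linear_combination hquad')
  obtain ⟨h6, h3, h0⟩ := coeff_eq_zero_of_two_roots_im_pos (a := v 6 + v 3 * s + v 0 * s ^ 2)
    (b := -v 3 - 2 * s * v 0) (c := v 0) him him' hne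
    (by push_cast; linear_combination hconst) (by push_cast; linear_combination hconst')
  obtain ⟨h8, h9, h2⟩ := coeff_eq_zero_of_two_roots_im_pos (a := v 1 * s + v 8)
    (b := -v 1 - v 2 * s - v 9) (c := v 2) him him' hne
    (by push_cast; linear_combination hlin) (by push_cast; linear_combination hlin')
  obtain ⟨q, hq⟩ : Q.Nonempty := Finset.card_pos.1 (by omega)
  have h3' : v 3 = 0 := by linear_combination -h3 - 2 * s * h0
  have h1 : v 1 = 0 := by
    have haffine := (hzero q hq).eval_eq_zero ((isometryLine s p q).mem_point 0)
    simpa [eval_quadric, isometryLine, h0, h2, h4, h5, h7, neg_eq_zero.1 h7,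
      (dilation_pos p q).ne'] using haffine
  ext i
  fin_cases i <;> simp only [Pi.zero_apply, Fin.reduceFinMk, Fin.zero_eta, Fin.mk_one]
  · exact h0
  · exact h1
  · exact h2
  · exact h3'
  · exact h4
  · exact h5
  · linear_combination h6 - s * h3' - s ^ 2 * h0
  · exact neg_eq_zero.1 h7
  · linear_combination h8 - s * h1
  · linear_combination -h9 - h1 - s * h2

end IsometryLinesOnQuadrics

section IsometryLines

variable {s : ℝ} {P : Finset ℍ}

/-- The lines of isometries taking some point of `P` to some point of `P`. -/
def isometryLines (s : ℝ) (P : Finset ℍ) : Finset Line :=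
  (P ×ˢ P).image fun u => isometryLine s u.1 u.2

lemma mem_isometryLines {l : Line} :
    l ∈ isometryLines s P ↔ ∃ p ∈ P, ∃ q ∈ P, isometryLine s p q = l := by
  simp [isometryLines, and_assoc]

lemma card_isometryLines_le (s : ℝ) (P : Finset ℍ) : (isometryLines s P).card ≤ P.card ^ 2 :=
  Finset.card_image_le.trans (by rw [Finset.card_product, sq])

lemma card_le_sum_card_filter_isometryLine {M : Finset Line} (hM : M ⊆ isometryLines s P) :
    M.card ≤ ∑ p ∈ P, (P.filter fun q => isometryLine s p q ∈ M).card := by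
  have hcover : M ⊆ P.biUnion fun p =>
      (P.filter fun q => isometryLine s p q ∈ M).image (isometryLine s p) := by
    intro l hl
    obtain ⟨p, hp, q, hq, rfl⟩ := mem_isometryLines.1 (hM hl)
    exact Finset.mem_biUnion.2
      ⟨p, hp, Finset.mem_image_of_mem _ (Finset.mem_filter.2 ⟨hq, hl⟩)⟩
  exact (Finset.card_le_card hcover).trans
    (Finset.card_biUnion_le.trans (Finset.sum_le_sum fun _ _ => Finset.card_image_le))

-- A quadric contains more than two of the lines starting at `p` for at most one `p`.
lemma fewLinesOnQuadrics_isometryLines (s : ℝ) (P : Finset ℍ) :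
    FewLinesOnQuadrics (isometryLines s P) (3 * P.card) := by
  classical
  intro g hg hdeg M hM hMg
  let targets (p : ℍ) : Finset ℍ := P.filter fun q => isometryLine s p q ∈ M
  suffices h : ∑ p ∈ P, (targets p).card ≤ 3 * P.card from
    (card_le_sum_card_filter_isometryLine hM).trans h
  have hzero (p : ℍ) : ∀ q ∈ targets p, (isometryLine s p q).InZeroSet g :=
    fun q hq => hMg _ (Finset.mem_filter.1 hq).2
  obtain ⟨v, rfl⟩ := exists_eq_quadric hdeg
  by_cases hmany : ∃ p ∈ P, 2 < (targets p).card
  · obtain ⟨p, hp, hpcard⟩ := hmany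
    have hrest : ∑ p' ∈ P.erase p, (targets p').card ≤ (P.erase p).card * 2 := by
      refine Finset.sum_le_card_nsmul _ _ _ fun p' hp' => ?_
      by_contra! hp'card
      have hv := eq_zero_of_two_lt_card_inZeroSet_quadric (Finset.ne_of_mem_erase hp').symm
        hpcard hp'card (hzero p) (hzero p')
      exact hg.ne_zero (by rw [hv, map_zero])
    have herase := Finset.card_erase_le (s := P) (a := p)
    have htargets : (targets p).card ≤ P.card := Finset.card_filter_le _ _
    rw [← Finset.add_sum_erase _ _ hp]
    omega
  · push Not at hmany
    have hsum := Finset.sum_le_card_nsmul P (fun p => (targets p).card) 2 hmany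
    rw [smul_eq_mul] at hsum
    omega

lemma card_linesThrough_isometryLines_le (s : ℝ) (P : Finset ℍ) (x : Space) :
    (linesThrough (isometryLines s P) x).card ≤ P.card := by
  refine (card_le_sum_card_filter_isometryLine (Finset.filter_subset _ _)).trans ?_
  refine (Finset.sum_le_card_nsmul P _ 1 fun p _ => ?_).trans (by simp)
  exact Finset.card_le_one.2 fun q hq q' hq' => eq_of_mem_isometryLine
    (mem_linesThrough.1 (Finset.mem_filter.1 hq).2).2
    (mem_linesThrough.1 (Finset.mem_filter.1 hq').2).2

end IsometryLines

/-! ### Counting meeting pairs of lines -/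

section MeetingPairs

open scoped Classical in
/-- The ordered pairs of distinct lines of `L` with a common point. -/
def meetingPairs (L : Finset Line) : Finset (Line × Line) :=
  L.offDiag.filter fun u => ∃ x, x ∈ u.1 ∧ x ∈ u.2

variable {L : Finset Line} {N : ℕ}

lemma mem_meetingPairs {u : Line × Line} :
    u ∈ meetingPairs L ↔ (u.1 ∈ L ∧ u.2 ∈ L ∧ u.1 ≠ u.2) ∧ ∃ x, x ∈ u.1 ∧ x ∈ u.2 := by
  classical
  rw [meetingPairs, Finset.mem_filter, Finset.mem_offDiag]

lemma exists_card_meetingPairs_le_sum (L : Finset Line) :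
    ∃ V : Finset Space, (∀ x ∈ V, 2 ≤ (linesThrough L x).card) ∧
      (meetingPairs L).card ≤ ∑ x ∈ V, (linesThrough L x).card ^ 2 := by
  classical
  choose! f hf using fun (u : Line × Line) (hu : u ∈ meetingPairs L) => (mem_meetingPairs.1 hu).2
  have hthrough {u : Line × Line} (hu : u ∈ meetingPairs L) :
      u.1 ∈ linesThrough L (f u) ∧ u.2 ∈ linesThrough L (f u) :=
    ⟨mem_linesThrough.2 ⟨(mem_meetingPairs.1 hu).1.1, (hf u hu).1⟩,
      mem_linesThrough.2 ⟨(mem_meetingPairs.1 hu).1.2.1, (hf u hu).2⟩⟩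
  refine ⟨(meetingPairs L).image f, fun x hx => ?_, ?_⟩
  · obtain ⟨u, hu, rfl⟩ := Finset.mem_image.1 hx
    exact Finset.one_lt_card.2
      ⟨u.1, (hthrough hu).1, u.2, (hthrough hu).2, (mem_meetingPairs.1 hu).1.2.2⟩
  · have hcover : meetingPairs L ⊆ ((meetingPairs L).image f).biUnion
        fun x => linesThrough L x ×ˢ linesThrough L x := fun u hu =>
      Finset.mem_biUnion.2
        ⟨f u, Finset.mem_image_of_mem f hu, Finset.mem_product.2 (hthrough hu)⟩
    refine (Finset.card_le_card hcover).trans (Finset.card_biUnion_le.trans_eq ?_)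
    simp only [Finset.card_product, sq]

lemma sq_le_sum_range (n : ℕ) : n ^ 2 ≤ ∑ k ∈ Finset.range n, 2 * (k + 1) := by
  induction n with
  | zero => simp
  | succ n ih =>
    rw [Finset.sum_range_succ]
    linarith

lemma sum_sq_le_sum_card_filter {α : Type*} (V : Finset α) {f : α → ℕ} (hf : ∀ x ∈ V, f x ≤ N) :
    ∑ x ∈ V, f x ^ 2 ≤ ∑ k ∈ Finset.range N, (V.filter fun x => k < f x).card * (2 * (k + 1)) :=
  calc
    ∑ x ∈ V, f x ^ 2 ≤ ∑ x ∈ V, ∑ k ∈ Finset.range N with k < f x, 2 * (k + 1) := by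
      refine Finset.sum_le_sum fun x hx => (sq_le_sum_range (f x)).trans_eq ?_
      congr 1
      ext k
      have := hf x hx
      simp only [Finset.mem_filter, Finset.mem_range]
      omega
    _ = ∑ k ∈ Finset.range N, ∑ x ∈ V with k < f x, 2 * (k + 1) := by
      simp only [Finset.sum_filter]
      exact Finset.sum_comm
    _ = ∑ k ∈ Finset.range N, (V.filter fun x => k < f x).card * (2 * (k + 1)) := by
      simp only [Finset.sum_const, smul_eq_mul]

lemma card_filter_lt_card_linesThrough_mul_sq_le {V : Finset Space} (hN : 2 ≤ N)
    (hLN : L.card ≤ N ^ 2) (hL : FewLinesOnQuadrics L (3 * N))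
    (hV : ∀ x ∈ V, 2 ≤ (linesThrough L x).card) {k : ℕ} (hk : k < N) :
    (V.filter fun x => k < (linesThrough L x).card).card * (k + 1) ^ 2 ≤ 10 ^ 18 * N ^ 3 := by
  have hrich {j : ℕ} (hj : 2 ≤ j) (hjN : j ≤ N) (S : Finset Space)
      (hS : ∀ x ∈ S, j ≤ (linesThrough L x).card) : S.card * j ^ 2 ≤ 10 ^ 18 * N ^ 3 := calc
    S.card * j ^ 2 ≤ 10 ^ 18 * (N * L.card) :=
      card_mul_sq_le_of_le_card_linesThrough (by omega) hLN hL hj hjN hS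
    _ ≤ 10 ^ 18 * (N * N ^ 2) := by gcongr
    _ = 10 ^ 18 * N ^ 3 := by ring
  rcases Nat.eq_zero_or_pos k with rfl | hk0
  · have hall := hrich le_rfl hN V hV
    have hfilter := Finset.card_filter_le V fun x => 0 < (linesThrough L x).card
    omega
  · exact hrich (by omega) (by omega) _ fun x hx => (Finset.mem_filter.1 hx).2

lemma card_meetingPairs_le (hN : 2 ≤ N) (hLN : L.card ≤ N ^ 2)
    (hL : FewLinesOnQuadrics L (3 * N)) (hthrough : ∀ x, (linesThrough L x).card ≤ N) :
    ((meetingPairs L).card : ℝ) ≤ 2 * 10 ^ 18 * (N : ℝ) ^ 3 * (1 + Real.log N) := by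
  obtain ⟨V, hV, hpairs⟩ := exists_card_meetingPairs_le_sum L
  have hterm : ∀ k ∈ Finset.range N,
      (((V.filter fun x => k < (linesThrough L x).card).card * (2 * (k + 1)) : ℕ) : ℝ) ≤
        2 * 10 ^ 18 * (N : ℝ) ^ 3 * ((k : ℝ) + 1)⁻¹ := by
    intro k hk
    have hcount : ((V.filter fun x => k < (linesThrough L x).card).card : ℝ) * (k + 1) ^ 2 ≤
        10 ^ 18 * (N : ℝ) ^ 3 := by
      exact_mod_cast card_filter_lt_card_linesThrough_mul_sq_le hN hLN hL hV (Finset.mem_range.1 hk)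
    rw [← div_eq_mul_inv, le_div_iff₀ (by positivity)]
    push_cast
    linarith
  have hharmonic : ∑ k ∈ Finset.range N, ((k : ℝ) + 1)⁻¹ ≤ 1 + Real.log N := by
    simpa [harmonic] using harmonic_le_one_add_log N
  calc
    ((meetingPairs L).card : ℝ)
      ≤ ((∑ k ∈ Finset.range N,
          (V.filter fun x => k < (linesThrough L x).card).card * (2 * (k + 1)) : ℕ) : ℝ) :=
        Nat.cast_le.2 (hpairs.trans (sum_sq_le_sum_card_filter V fun x _ => hthrough x))
    _ ≤ ∑ k ∈ Finset.range N, 2 * 10 ^ 18 * (N : ℝ) ^ 3 * ((k : ℝ) + 1)⁻¹ := by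
      rw [Nat.cast_sum]
      exact Finset.sum_le_sum hterm
    _ ≤ 2 * 10 ^ 18 * (N : ℝ) ^ 3 * (1 + Real.log N) := by
      rw [← Finset.mul_sum]
      gcongr

end MeetingPairs

/-! ### Distances -/

section Distances

open scoped Classical in
/-- The ordered pairs of pairs of distinct points of `P` at the same distance. -/
def distanceQuadruples (P : Finset ℍ) : Finset ((ℍ × ℍ) × ℍ × ℍ) :=
  (P.offDiag ×ˢ P.offDiag).filter fun u => dist u.1.1 u.1.2 = dist u.2.1 u.2.2

lemma card_distanceQuadruples_le {P : Finset ℍ} (hP : 2 ≤ P.card) :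
    ((distanceQuadruples P).card : ℝ) ≤
      2 * 10 ^ 18 * (P.card : ℝ) ^ 3 * (1 + Real.log P.card) := by
  classical
  obtain ⟨s, hs⟩ := exists_forall_not_parallel_isometryLine P
  refine le_trans ?_ (card_meetingPairs_le hP (card_isometryLines_le s P)
    (fewLinesOnQuadrics_isometryLines s P) (card_linesThrough_isometryLines_le s P))
  rw [Nat.cast_le]
  refine Finset.card_le_card_of_injOn
    (fun u => (isometryLine s u.1.1 u.2.1, isometryLine s u.1.2 u.2.2)) ?_ ?_
  · rintro ⟨⟨p, p'⟩, q, q'⟩ hu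
    obtain ⟨hu, hdist⟩ := Finset.mem_filter.1 (Finset.mem_coe.1 hu)
    simp only [Finset.mem_product, Finset.mem_offDiag] at hu
    obtain ⟨⟨hp, hp', hne⟩, hq, hq', -⟩ := hu
    exact mem_meetingPairs.2 ⟨⟨mem_isometryLines.2 ⟨p, hp, q, hq, rfl⟩,
      mem_isometryLines.2 ⟨p', hp', q', hq', rfl⟩, fun h => hne (isometryLine_injective h).1⟩,
      exists_mem_isometryLine (hs p hp q hq p' hp' q' hq' hne) hdist⟩
  · rintro ⟨⟨p, p'⟩, q, q'⟩ - ⟨⟨r, r'⟩, t, t'⟩ - h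
    obtain ⟨h₁, h₂⟩ := Prod.ext_iff.1 h
    obtain ⟨rfl, rfl⟩ := isometryLine_injective h₁
    obtain ⟨rfl, rfl⟩ := isometryLine_injective h₂
    rfl

open scoped Classical in
lemma sq_card_le_card_image_mul_card_filter {α β : Type*} (W : Finset α) (f : α → β) :
    W.card ^ 2 ≤ (W.image f).card * ((W ×ˢ W).filter fun u => f u.1 = f u.2).card := by
  have hfibers : W.card = ∑ t ∈ W.image f, (W.filter fun a => f a = t).card :=
    Finset.card_eq_sum_card_fiberwise fun a ha => Finset.mem_image_of_mem f ha
  have henergy : ((W ×ˢ W).filter fun u => f u.1 = f u.2).card =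
      ∑ t ∈ W.image f, (W.filter fun a => f a = t).card ^ 2 := by
    rw [Finset.card_eq_sum_card_fiberwise (f := fun u => f u.1) (t := W.image f)]
    · refine Finset.sum_congr rfl fun t _ => ?_
      rw [sq, ← Finset.card_product]
      congr 1
      ext u
      simp only [Finset.mem_filter, Finset.mem_product]
      grind
    · exact fun u hu => Finset.mem_image_of_mem f
        (Finset.mem_product.1 (Finset.mem_filter.1 (Finset.mem_coe.1 hu)).1).1
  rw [henergy, hfibers]
  exact sq_sum_le_card_mul_sum_sq

open scoped Classical in
lemma card_div_log_le_card_image_dist {P : Finset ℍ} (hP : 2 ≤ P.card) :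
    1 / (24 * 10 ^ 18) * (P.card : ℝ) / Real.log P.card ≤
      (P.offDiag.image fun u => dist u.1 u.2).card := by
  set D := P.offDiag.image fun u => dist u.1 u.2
  have hN : (2 : ℝ) ≤ P.card := by exact_mod_cast hP
  set N : ℝ := (P.card : ℝ) with hN_def
  have hlog : 1 / 2 ≤ Real.log N := by
    linarith [Real.log_two_gt_d9, Real.log_le_log two_pos hN]
  have hpairs : N ^ 2 / 2 ≤ (P.offDiag.card : ℝ) := by
    rw [Finset.offDiag_card, Nat.cast_sub (Nat.le_mul_self _), Nat.cast_mul, ← hN_def]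
    nlinarith
  have hcauchy : (P.offDiag.card : ℝ) ^ 2 ≤ D.card * (distanceQuadruples P).card := by
    exact_mod_cast sq_card_le_card_image_mul_card_filter P.offDiag fun u => dist u.1 u.2
  have hmain : N ^ 3 * (N / 4) ≤ N ^ 3 * (6 * 10 ^ 18 * (D.card * Real.log N)) := calc
    N ^ 3 * (N / 4) = (N ^ 2 / 2) ^ 2 := by ring
    _ ≤ (P.offDiag.card : ℝ) ^ 2 := by gcongr
    _ ≤ D.card * (distanceQuadruples P).card := hcauchy
    _ ≤ D.card * (2 * 10 ^ 18 * N ^ 3 * (1 + Real.log N)) := by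
      gcongr
      exact card_distanceQuadruples_le hP
    _ ≤ D.card * (2 * 10 ^ 18 * N ^ 3 * (3 * Real.log N)) := by
      gcongr
      linarith
    _ = N ^ 3 * (6 * 10 ^ 18 * (D.card * Real.log N)) := by ring
  have hcancel := le_of_mul_le_mul_left hmain (by positivity)
  rw [div_le_iff₀ (by linarith)]
  linarith

end Distances

end GuthKatz

/-- There is an absolute constant `c > 0` such that every finite set of `N ≥ 2` points
in the hyperbolic plane determines at least `c · N / log N` distinct distances. -/
theorem distinct_distances_hyperbolic_plane :
    ∃ c : ℝ, 0 < c ∧ ∀ P : Finset ℍ, 2 ≤ P.card →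
      c * (P.card : ℝ) / Real.log P.card ≤
        ({t : ℝ | ∃ p ∈ P, ∃ q ∈ P, p ≠ q ∧ dist p q = t}.ncard : ℝ) := by
  classical
  refine ⟨1 / (24 * 10 ^ 18), by positivity, fun P hP => ?_⟩
  have hdistances : {t : ℝ | ∃ p ∈ P, ∃ q ∈ P, p ≠ q ∧ dist p q = t} =
      P.offDiag.image fun u => dist u.1 u.2 := by
    ext t
    simp [and_assoc]
  rw [hdistances, Set.ncard_coe_finset]
  exact GuthKatz.card_div_log_le_card_image_dist hP

end
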